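/- Let Ω ⊂ ℝ² be a compact convex set of positive measure, let D ⊂ ℝ² be a closed convex set of finite positive measure with 0 in its interior, and let Q = {q_k} ⊂ (0,∞) be a uniformly discrete set. Then the union of dilated boundary curves P = Q∂D = ⋃_k q_k ∂D is a sampling set for B_Ω if and only if d⁻(Q)·v ∉ Ω − Ω for every v ∈ Ext(D°). -/

import Mathlib

open MeasureTheory FourierTransform Filter Metric
open scoped Pointwise RealInnerProductSpace ENNReal NNReal

noncomputable section

variable {V : Type*} [NormedAddCommGroup V] [InnerProductSpace ℝ V]
  [FiniteDimensional ℝ V] [MeasurableSpace V] [BorelSpace V]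

/-- `f` belongs to the Bernstein space `B_Ω`: it is a continuous bounded function which is the
inverse Fourier transform of a tempered distribution supported in `Ω`, i.e. its distributional
Fourier transform annihilates every test function whose support is disjoint from `Ω`. -/
def MemBernstein (Ω : Set V) (f : V → ℂ) : Prop :=
  Continuous f ∧ (∃ C, ∀ x, ‖f x‖ ≤ C) ∧
    ∀ ψ : V → ℂ, ContDiff ℝ (⊤ : ℕ∞) ψ → HasCompactSupport ψ → tsupport ψ ∩ Ω = ∅ →
      ∫ x, f x * 𝓕 ψ x = 0

/-- `P` is a sampling set for the Bernstein space `B_Ω`: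
`‖f‖_∞ ≤ C · sup_{x ∈ P} ‖f x‖` for all `f ∈ B_Ω`. -/
def IsSamplingSet (Ω P : Set V) : Prop :=
  ∃ C > 0, ∀ f : V → ℂ, MemBernstein Ω f →
    ∀ x : V, ‖f x‖ ≤ C * sSup ((fun p => ‖f p‖) '' P)

/-- A set is uniformly discrete if distinct points are separated by a fixed positive distance. -/
def UniformlyDiscrete {X : Type*} [PseudoMetricSpace X] (Λ : Set X) : Prop :=
  ∃ δ > 0, ∀ x ∈ Λ, ∀ y ∈ Λ, x ≠ y → δ ≤ dist x y

/-- The lower uniform (Beurling) density of a set: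
`D⁻(Λ) = lim_{r→∞} inf_x #(Λ ∩ B_r(x)) / |B_r(x)|`. -/
def lowerUniformDensity {X : Type*} [NormedAddCommGroup X] [MeasureSpace X] (Λ : Set X) : ℝ :=
  liminf (fun r : ℝ => ⨅ x : X,
    (Nat.card ↥(Λ ∩ closedBall x r) : ℝ) / (volume (closedBall x r)).toReal) atTop

/-
Far out in a direction `w`, the gauge `p` of `D` is nearly linear on each side of the ray through
`w`, and its gradient there is an extreme point `v` of `D°`. Hence the translates of
`P = {x | p x ∈ Q}` along such a side look like families of lines `⟪v, y⟫ = c`, where `c` runs over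
a limit of translates of `Q`.

Sufficiency. If the sampling inequality fails, translates of nearly extremal functions converge
locally uniformly to some nonzero `g ∈ B_Ω` vanishing on a translate of `P` or on such a family of
lines. Restricted to lines in a direction `u` with `⟪v, u⟫ = 1`, `g` extends to entire functions
whose exponential type is governed by the width of `Ω` along `u`. Since `d⁻(Q) v ∉ Ω - Ω`, a
separating `u` makes this width smaller than the density of the zeros, and Jensen's formula forces
exponential decay of `g` on a cone. An entire function of exponential type which is bounded on the
real line and decays exponentially on a half-line vanishes, so `g = 0`.

Necessity. Suppose `d⁻(Q) v = ω₁ - ω₂` with `ω₁, ω₂ ∈ Ω`. Counting dimensions on windows where `Q`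
is sparse yields trigonometric sums vanishing on `Q` there, with frequencies in an interval barely
longer than `d⁻(Q)`. Composed with `⟪v, ·⟫` and modulated, they converge to some nonzero `g ∈ B_Ω`
vanishing on a whole family of lines. Damping `g` while keeping it small on those lines, and
translating it far along the side of `P` where `p` is nearly `⟪v, ·⟫`, violates the sampling
inequality.
-/

open scoped Topology

section FourierTransform

variable {F : Type*} [NormedAddCommGroup F] [NormedSpace ℂ F]

lemma integrable_fourier_of_hasCompactSupport {ψ : V → F} (hψ : ContDiff ℝ (⊤ : ℕ∞) ψ)
    (hc : HasCompactSupport ψ) : Integrable (𝓕 ψ) :=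
  (𝓕 (hc.toSchwartzMap hψ : SchwartzMap V F)).integrable (μ := volume)

lemma continuous_fourier_of_integrable {ψ : V → F} (hψ : Integrable ψ) : Continuous (𝓕 ψ) :=
  VectorFourier.fourierIntegral_continuous Real.continuous_fourierChar continuous_inner hψ

lemma norm_fourier_le_integral_norm (ψ : V → F) (x : V) : ‖𝓕 ψ x‖ ≤ ∫ v, ‖ψ v‖ :=
  VectorFourier.norm_fourierIntegral_le_integral_norm _ _ _ _ _

lemma fourier_sub_of_integrable {φ ψ : V → F} (hφ : Integrable φ) (hψ : Integrable ψ) :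
    𝓕 (φ - ψ) = 𝓕 φ - 𝓕 ψ := by
  ext x
  simp only [Real.fourier_eq, Pi.sub_apply, smul_sub]
  exact integral_sub ((Real.fourierIntegral_convergent_iff x).2 hφ)
    ((Real.fourierIntegral_convergent_iff x).2 hψ)

lemma fourier_fourierChar_smul (ψ : V → F) (a x : V) :
    𝓕 (fun v => Real.fourierChar ⟪a, v⟫ • ψ v) x = 𝓕 ψ (x - a) := by
  simp only [Real.fourier_eq, smul_smul, ← AddChar.map_add_eq_mul, inner_sub_right,
    real_inner_comm, neg_sub, neg_add_eq_sub]

lemma fourier_comp_add_right (ψ : V → F) (a x : V) :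
    𝓕 (fun v => ψ (v + a)) x = Real.fourierChar ⟪a, x⟫ • 𝓕 ψ x :=
  congr_fun (VectorFourier.fourierIntegral_comp_add_right Real.fourierChar volume (innerₗ V) ψ a) x

lemma fourier_comp_smul (ψ : V → F) {s : ℝ} (hs : s ≠ 0) (x : V) :
    𝓕 (fun v => ψ (s • v)) x = |(s ^ Module.finrank ℝ V)⁻¹| • 𝓕 ψ (s⁻¹ • x) := by
  rw [Real.fourier_eq, Real.fourier_eq, ← Measure.integral_comp_smul]
  simp only [real_inner_smul_left, real_inner_smul_right, inv_mul_cancel_left₀ hs]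

lemma integral_fourier_eq_apply_zero [CompleteSpace F] {ψ : V → F}
    (hψ : ContDiff ℝ (⊤ : ℕ∞) ψ) (hc : HasCompactSupport ψ) : ∫ x, 𝓕 ψ x = ψ 0 := by
  have h := (hψ.continuous.integrable_of_hasCompactSupport hc).fourierInv_fourier_eq
    (integrable_fourier_of_hasCompactSupport hψ hc) (v := 0) hψ.continuous.continuousAt
  simpa [Real.fourierInv_eq] using h

lemma integral_comp_smul_mul_fourier (f ψ : V → ℂ) {s : ℝ} (hs : s ≠ 0) :
    ∫ x, f (s • x) * 𝓕 ψ x = ∫ x, f x * 𝓕 (fun v => ψ (s • v)) x := by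
  have h := Measure.integral_comp_smul volume (fun x => f (s • x) * 𝓕 ψ x) s⁻¹
  simp only [smul_smul, mul_inv_cancel₀ hs, one_smul, inv_pow, inv_inv] at h
  simp only [fourier_comp_smul ψ hs, mul_smul_comm, integral_smul, h, smul_smul, ← abs_mul,
    inv_mul_cancel₀ (pow_ne_zero _ hs), abs_one, one_smul]

lemma integral_mul_fourier_comm {f g : V → ℂ} (hf : Integrable f) (hg : Integrable g) :
    ∫ x, f x * 𝓕 g x = ∫ x, 𝓕 f x * g x := by
  have h := VectorFourier.integral_fourierIntegral_smul_eq_flip (L := innerₗ V)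
    Real.continuous_fourierChar continuous_inner hf hg
  rw [flip_innerₗ] at h
  exact h.symm

end FourierTransform

lemma contDiff_fourierChar_inner {E : Type*} [NormedAddCommGroup E] [InnerProductSpace ℝ E]
    (a : E) : ContDiff ℝ (⊤ : ℕ∞) (fun v : E => (Real.fourierChar ⟪a, v⟫ : ℂ)) := by
  simp only [Real.fourierChar_apply]
  exact Complex.contDiff_exp.comp ((Complex.ofRealCLM.contDiff.comp
    (contDiff_const.mul (contDiff_const.inner ℝ contDiff_id))).mul
    contDiff_const)

lemma exists_contDiff_hasCompactSupport_eq_one {E : Type*} [NormedAddCommGroup E]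
    [NormedSpace ℝ E] [FiniteDimensional ℝ E] {K : Set E} (hK : IsCompact K) {θ : ℝ}
    (hθ : 0 < θ) :
    ∃ χ : E → ℂ, ContDiff ℝ (⊤ : ℕ∞) χ ∧ HasCompactSupport χ ∧
      tsupport χ ⊆ cthickening θ K ∧ ∀ᶠ ξ in 𝓝ˢ K, χ ξ = 1 := by
  obtain ⟨f, hf, -, hsupport, hone⟩ := exists_contMDiff_support_eq_eq_one_iff
    (modelWithCornersSelf ℝ E) (n := ⊤) (s := thickening θ K) (t := cthickening (θ / 2) K)
    isOpen_thickening isClosed_cthickening (cthickening_subset_thickening' hθ (by linarith) K)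
  have htsupport : tsupport (fun x => (f x : ℂ)) ⊆ cthickening θ K := by
    refine (closure_mono fun x hx => ?_).trans (closure_thickening_subset_cthickening θ K)
    rw [← hsupport]
    simpa using hx
  refine ⟨fun x => (f x : ℂ), Complex.ofRealCLM.contDiff.comp (contMDiff_iff_contDiff.1 hf),
    hK.cthickening.of_isClosed_subset (isClosed_tsupport _) htsupport, htsupport, ?_⟩
  filter_upwards [isOpen_thickening.mem_nhdsSet.2 (self_subset_thickening (half_pos hθ) K)]
    with ξ hξ
  exact Complex.ofReal_eq_one.2 ((hone ξ).1 (thickening_subset_cthickening _ _ hξ))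

namespace MemBernstein

variable {Ω Ω' : Set V} {f g : V → ℂ}

lemma mono (h : MemBernstein Ω f) (hΩ : Ω ⊆ Ω') : MemBernstein Ω' f :=
  ⟨h.1, h.2.1, fun ψ h1 h2 h3 => h.2.2 ψ h1 h2
    (Set.subset_empty_iff.1 (h3 ▸ Set.inter_subset_inter_right _ hΩ))⟩

lemma integrable_mul (h : MemBernstein Ω f) {φ : V → ℂ} (hφ : Integrable φ) :
    Integrable (fun x => f x * φ x) := by
  obtain ⟨C, hC⟩ := h.2.1
  exact hφ.bdd_mul h.1.aestronglyMeasurable (Eventually.of_forall hC)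

lemma const_mul (h : MemBernstein Ω f) (c : ℂ) : MemBernstein Ω (fun x => c * f x) := by
  obtain ⟨hcont, ⟨C, hC⟩, hvanish⟩ := h
  refine ⟨by fun_prop, ⟨‖c‖ * C, fun x => ?_⟩, fun ψ hψ hc hdisj => ?_⟩
  · rw [norm_mul]; gcongr; exact hC x
  · simp_rw [mul_assoc, integral_const_mul, hvanish ψ hψ hc hdisj, mul_zero]

protected lemma add (hf : MemBernstein Ω f) (hg : MemBernstein Ω g) :
    MemBernstein Ω (fun x => f x + g x) := by
  obtain ⟨C, hC⟩ := hf.2.1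
  obtain ⟨C', hC'⟩ := hg.2.1
  refine ⟨hf.1.add hg.1, ⟨C + C', fun x => (norm_add_le _ _).trans (add_le_add (hC x) (hC' x))⟩,
    fun ψ hψ hc hdisj => ?_⟩
  have h_int := integrable_fourier_of_hasCompactSupport hψ hc
  simp_rw [add_mul]
  rw [integral_add (hf.integrable_mul h_int) (hg.integrable_mul h_int), hf.2.2 ψ hψ hc hdisj,
    hg.2.2 ψ hψ hc hdisj, add_zero]

protected lemma zero : MemBernstein Ω (fun _ => (0 : ℂ)) :=
  ⟨continuous_const, ⟨0, by simp⟩, by simp⟩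

protected lemma sum {ι : Type*} (s : Finset ι) {F : ι → V → ℂ}
    (h : ∀ i ∈ s, MemBernstein Ω (F i)) : MemBernstein Ω (fun x => ∑ i ∈ s, F i x) := by
  classical
  induction s using Finset.induction_on with
  | empty => simpa using MemBernstein.zero
  | insert a s ha ih =>
    simp_rw [Finset.sum_insert ha]
    exact (h a (by simp)).add (ih fun i hi => h i (by simp [hi]))

protected lemma fourierChar {ω : V} (hω : ω ∈ Ω) :
    MemBernstein Ω (fun x => (Real.fourierChar ⟪ω, x⟫ : ℂ)) := by
  refine ⟨(contDiff_fourierChar_inner ω).continuous, ⟨1, fun x => (Circle.norm_coe _).le⟩,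
    fun ψ hψ hc hdisj => ?_⟩
  have hinv := (hψ.continuous.integrable_of_hasCompactSupport hc).fourierInv_fourier_eq
    (integrable_fourier_of_hasCompactSupport hψ hc) (v := ω) hψ.continuous.continuousAt
  have hψω : ψ ω = 0 := image_eq_zero_of_notMem_tsupport fun h => hdisj.le ⟨h, hω⟩
  simpa [Real.fourierInv_eq, hψω, Circle.smul_def, real_inner_comm] using hinv

lemma comp_add_right (h : MemBernstein Ω f) (a : V) : MemBernstein Ω (fun x => f (x + a)) := by
  obtain ⟨hcont, ⟨C, hC⟩, hvanish⟩ := h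
  refine ⟨by fun_prop, ⟨C, fun x => hC _⟩, fun ψ hψ hc hdisj => ?_⟩
  rw [← hvanish (fun v => Real.fourierChar ⟪a, v⟫ • ψ v) ((contDiff_fourierChar_inner a).mul hψ)
    hc.mul_left (Set.subset_empty_iff.1
      (hdisj ▸ Set.inter_subset_inter_left _ tsupport_mul_subset_right)),
    ← integral_add_right_eq_self (fun x => f x * _) a]
  simp only [fourier_fourierChar_smul, add_sub_cancel_right]

lemma fourierChar_mul (h : MemBernstein Ω f) (ω : V) (hΩ : ∀ ξ ∈ Ω, ξ + ω ∈ Ω') :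
    MemBernstein Ω' (fun x => (Real.fourierChar ⟪ω, x⟫ : ℂ) * f x) := by
  obtain ⟨hcont, ⟨C, hC⟩, hvanish⟩ := h
  refine ⟨(contDiff_fourierChar_inner ω).continuous.mul hcont,
    ⟨C, fun x => by simpa [norm_mul, Circle.norm_coe] using hC x⟩, fun ψ hψ hc hdisj => ?_⟩
  rw [← hvanish (fun v => ψ (v + ω)) (by fun_prop)
    (hc.comp_homeomorph (Homeomorph.addRight ω)) ?_]
  · simp only [fourier_comp_add_right, Circle.smul_def, smul_eq_mul, mul_left_comm, mul_assoc]
  · exact Set.eq_empty_of_forall_notMem fun ξ hξ => hdisj.le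
      ⟨tsupport_comp_subset_preimage ψ (continuous_add_const ω) hξ.1, hΩ ξ hξ.2⟩

lemma comp_smul (h : MemBernstein Ω f) {s : ℝ} (hs : s ≠ 0) (hΩ : ∀ ξ ∈ Ω, s • ξ ∈ Ω') :
    MemBernstein Ω' (fun x => f (s • x)) := by
  obtain ⟨hcont, ⟨C, hC⟩, hvanish⟩ := h
  refine ⟨by fun_prop, ⟨C, fun x => hC _⟩, fun ψ hψ hc hdisj => ?_⟩
  rw [integral_comp_smul_mul_fourier f ψ hs]
  refine hvanish _ (by fun_prop) (hc.comp_homeomorph (Homeomorph.smulOfNeZero s hs)) ?_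
  exact Set.eq_empty_of_forall_notMem fun ξ hξ => hdisj.le
    ⟨tsupport_comp_subset_preimage ψ (continuous_const_smul s) hξ.1, hΩ ξ hξ.2⟩

lemma mul_fourier (h : MemBernstein Ω f) {η : V → ℂ} (hη : Integrable η)
    (hΩ : ∀ ω ∈ Ω, ∀ ξ, η ξ ≠ 0 → ω - ξ ∈ Ω') :
    MemBernstein Ω' (fun x => f x * 𝓕 η x) := by
  obtain ⟨C, hC⟩ := h.2.1
  refine ⟨h.1.mul (continuous_fourier_of_integrable hη), ⟨C * ∫ v, ‖η v‖, fun x => ?_⟩,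
    fun ψ hψ hc hdisj => ?_⟩
  · rw [norm_mul]
    exact mul_le_mul (hC x) (norm_fourier_le_integral_norm η x) (norm_nonneg _)
      ((norm_nonneg _).trans (hC x))
  have hvanish (ξ : V) : 𝓕 (fun x => f x * 𝓕 ψ x) ξ * η ξ = 0 := by
    rcases eq_or_ne (η ξ) 0 with hξ | hξ
    · rw [hξ, mul_zero]
    · have h0 := (h.fourierChar_mul (-ξ) (Ω' := Ω') fun ω hω => by
        simpa [sub_eq_add_neg] using hΩ ω hω ξ hξ).2.2 ψ hψ hc hdisj
      simp only [inner_neg_left, mul_assoc] at h0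
      rw [Real.fourier_eq]
      simp only [Circle.smul_def, smul_eq_mul, real_inner_comm, h0, zero_mul]
  calc ∫ x, f x * 𝓕 η x * 𝓕 ψ x = ∫ x, f x * 𝓕 ψ x * 𝓕 η x := by simp only [mul_right_comm]
    _ = ∫ x, 𝓕 (fun x => f x * 𝓕 ψ x) x * η x :=
        integral_mul_fourier_comm
          (h.integrable_mul (integrable_fourier_of_hasCompactSupport hψ hc)) hη
    _ = 0 := by simp only [hvanish, integral_zero]

lemma integral_mul_fourier_congr (h : MemBernstein Ω f) {φ ψ : V → ℂ}
    (hφ : ContDiff ℝ (⊤ : ℕ∞) φ) (hφc : HasCompactSupport φ) (hψ : ContDiff ℝ (⊤ : ℕ∞) ψ)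
    (hψc : HasCompactSupport ψ) (heq : ∀ᶠ ξ in 𝓝ˢ Ω, φ ξ = ψ ξ) :
    ∫ x, f x * 𝓕 φ x = ∫ x, f x * 𝓕 ψ x := by
  have hdisj : tsupport (φ - ψ) ∩ Ω = ∅ := by
    refine Set.eq_empty_of_forall_notMem fun ξ hξ => notMem_tsupport_iff_eventuallyEq.2 ?_ hξ.1
    filter_upwards [heq.filter_mono (nhds_le_nhdsSet hξ.2)] with η hη using sub_eq_zero.2 hη
  have h0 := h.2.2 (φ - ψ) (hφ.sub hψ) (sub_eq_add_neg φ ψ ▸ hφc.add hψc.neg) hdisj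
  rw [fourier_sub_of_integrable (hφ.continuous.integrable_of_hasCompactSupport hφc)
    (hψ.continuous.integrable_of_hasCompactSupport hψc)] at h0
  simp only [Pi.sub_apply, mul_sub] at h0
  rwa [integral_sub (h.integrable_mul (integrable_fourier_of_hasCompactSupport hφ hφc))
    (h.integrable_mul (integrable_fourier_of_hasCompactSupport hψ hψc)), sub_eq_zero] at h0

end MemBernstein

lemma tendsto_integral_comp_smul_mul_nhdsGT_zero {f φ : V → ℂ} (hf : Continuous f) {C : ℝ}
    (hC : ∀ x, ‖f x‖ ≤ C) (hφ : Integrable φ) :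
    Tendsto (fun s : ℝ => ∫ x, f (s • x) * φ x) (𝓝[>] 0)
      (𝓝 (f 0 * ∫ x, φ x)) := by
  rw [← integral_const_mul]
  refine tendsto_integral_filter_of_dominated_convergence (fun x => C * ‖φ x‖)
    (Eventually.of_forall fun s => ?_) (Eventually.of_forall fun s => Eventually.of_forall
      fun x => ?_) (hφ.norm.const_mul C) (Eventually.of_forall fun x => ?_)
  · exact (show Continuous fun x : V => f (s • x) by fun_prop).aestronglyMeasurable.mul hφ.1
  · rw [norm_mul]
    gcongr
    exact hC _
  · have hs : Tendsto (fun s : ℝ => f (s • x)) (𝓝 0) (𝓝 (f ((0 : ℝ) • x))) :=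
      (show Continuous fun s : ℝ => f (s • x) by fun_prop).tendsto 0
    rw [zero_smul] at hs
    exact (hs.mono_left nhdsWithin_le_nhds).mul_const _

lemma eventually_comp_smul_eq_of_isBounded {E Y : Type*} [NormedAddCommGroup E] [NormedSpace ℝ E]
    {K : Set E} (hK : Bornology.IsBounded K) {ρ : E → Y} {c : Y} (hρ : ∀ᶠ ξ in 𝓝 0, ρ ξ = c) :
    ∀ᶠ s in 𝓝[>] (0 : ℝ), ∀ᶠ ξ in 𝓝ˢ K, ρ (s • ξ) = c := by
  obtain ⟨R, hR, hKR⟩ := hK.subset_ball_lt 0 0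
  obtain ⟨r, hr, hball⟩ := Metric.eventually_nhds_iff_ball.1 hρ
  filter_upwards [Ioo_mem_nhdsGT (div_pos hr hR)] with s hs
  filter_upwards [isOpen_ball.mem_nhdsSet.2 hKR] with ξ hξ
  refine hball _ (mem_ball_zero_iff.2 ?_)
  rw [norm_smul, Real.norm_of_nonneg hs.1.le]
  calc s * ‖ξ‖ < s * R := mul_lt_mul_of_pos_left (mem_ball_zero_iff.1 hξ) hs.1
    _ ≤ r := ((lt_div_iff₀ hR).1 hs.2).le

-- `χ` may be replaced by dilates of a cutoff at the origin, which tend to the constant `1`.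
lemma MemBernstein.integral_mul_fourier_eq_apply_zero {Ω : Set V} {f : V → ℂ}
    (h : MemBernstein Ω f) (hΩ : Bornology.IsBounded Ω) {χ : V → ℂ}
    (hχ : ContDiff ℝ (⊤ : ℕ∞) χ) (hc : HasCompactSupport χ)
    (hχ1 : ∀ᶠ ξ in 𝓝ˢ Ω, χ ξ = 1) : ∫ t, f t * 𝓕 χ t = f 0 := by
  obtain ⟨ρ, hρ, hρc, -, hρ1⟩ :=
    exists_contDiff_hasCompactSupport_eq_one (isCompact_singleton (x := (0 : V))) one_pos
  rw [nhdsSet_singleton] at hρ1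
  obtain ⟨C, hC⟩ := h.2.1
  have hlim := tendsto_integral_comp_smul_mul_nhdsGT_zero h.1 hC
    (integrable_fourier_of_hasCompactSupport hρ hρc)
  rw [_root_.integral_fourier_eq_apply_zero hρ hρc, hρ1.self_of_nhds, mul_one] at hlim
  refine tendsto_nhds_unique (tendsto_const_nhds.congr' ?_) hlim
  filter_upwards [eventually_comp_smul_eq_of_isBounded hΩ hρ1, self_mem_nhdsWithin] with s hs hs0
  have hs0' : s ≠ 0 := (Set.mem_Ioi.1 hs0).ne'
  rw [integral_comp_smul_mul_fourier f ρ hs0']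
  refine h.integral_mul_fourier_congr hχ hc (by fun_prop)
    (hρc.comp_homeomorph (Homeomorph.smulOfNeZero s hs0')) ?_
  filter_upwards [hχ1, hs] with ξ h1 h2 using h1.trans h2.symm

section ComplexChar

variable {E : Type*} [NormedAddCommGroup E] [InnerProductSpace ℝ E]

/-- The complex exponential `ξ ↦ exp (2πi z ⟪u, ξ⟫)`, which extends the characters of frequency
`t • u`, `t` real, to complex values of the parameter. -/
def complexChar (u : E) (z : ℂ) (ξ : E) : ℂ :=
  Complex.exp (2 * Real.pi * Complex.I * z * (⟪u, ξ⟫ : ℝ))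

lemma complexChar_ofReal (u : E) (t : ℝ) (ξ : E) :
    complexChar u t ξ = (Real.fourierChar ⟪t • u, ξ⟫ : ℂ) := by
  rw [complexChar, Real.fourierChar_apply, real_inner_smul_left]
  congr 1
  push_cast
  ring

lemma norm_complexChar (u : E) (z : ℂ) (ξ : E) :
    ‖complexChar u z ξ‖ = Real.exp (2 * Real.pi * (-z.im * ⟪u, ξ⟫)) := by
  rw [complexChar, Complex.norm_exp]
  congr 1
  simp
  ring

lemma contDiff_complexChar (u : E) (z : ℂ) : ContDiff ℝ (⊤ : ℕ∞) (complexChar u z) :=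
  Complex.contDiff_exp.comp (contDiff_const.mul
    (Complex.ofRealCLM.contDiff.comp (contDiff_const.inner ℝ contDiff_id)))

lemma contDiff_ofReal_inner_mul {χ : E → ℂ} (hχ : ContDiff ℝ (⊤ : ℕ∞) χ) (u : E) :
    ContDiff ℝ (⊤ : ℕ∞) fun ξ => 2 * Real.pi * Complex.I * (⟪u, ξ⟫ : ℝ) * χ ξ :=
  (contDiff_const.mul (Complex.ofRealCLM.contDiff.comp (contDiff_const.inner ℝ contDiff_id))).mul hχ

lemma hasDerivAt_complexChar (u ξ : E) (z : ℂ) :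
    HasDerivAt (fun z => complexChar u z ξ)
      (2 * Real.pi * Complex.I * (⟪u, ξ⟫ : ℝ) * complexChar u z ξ) z := by
  have hlinear : HasDerivAt (fun z : ℂ => 2 * Real.pi * Complex.I * z * (⟪u, ξ⟫ : ℝ))
      (2 * Real.pi * Complex.I * (⟪u, ξ⟫ : ℝ)) z := by
    simpa using ((hasDerivAt_id z).const_mul (2 * Real.pi * Complex.I : ℂ)).mul_const
      ((⟪u, ξ⟫ : ℝ) : ℂ)
  exact hlinear.cexp.congr_deriv (by rw [complexChar]; ring)

lemma neg_mul_real_inner_le (y : ℝ) (u ξ : E) : -y * ⟪u, ξ⟫ ≤ |y| * (‖u‖ * ‖ξ‖) :=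
  calc -y * ⟪u, ξ⟫ ≤ |y| * |⟪u, ξ⟫| := by
        rw [← abs_neg y, ← abs_mul]; exact le_abs_self _
    _ ≤ |y| * (‖u‖ * ‖ξ‖) := by gcongr; exact abs_real_inner_le_norm u ξ

lemma norm_complexChar_le (u : E) (z : ℂ) (ξ : E) :
    ‖complexChar u z ξ‖ ≤ Real.exp (2 * Real.pi * (‖z‖ * (‖u‖ * ‖ξ‖))) := by
  rw [norm_complexChar]
  refine Real.exp_le_exp.2 (mul_le_mul_of_nonneg_left ?_ (by positivity))
  exact (neg_mul_real_inner_le z.im u ξ).trans (by gcongr; exact Complex.abs_im_le_norm z)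

lemma iteratedDeriv_cexp_const_mul_ofReal (n : ℕ) (c : ℂ) :
    iteratedDeriv n (fun r : ℝ => Complex.exp (c * r)) =
      fun r : ℝ => c ^ n * Complex.exp (c * r) := by
  induction n with
  | zero => simp
  | succ n ih =>
    rw [iteratedDeriv_succ, ih]
    ext r
    have hlinear : HasDerivAt (fun r : ℝ => c * (r : ℂ)) c r := by
      simpa using (Complex.ofRealCLM.hasDerivAt (x := r)).const_mul c
    rw [(hlinear.cexp.const_mul (c ^ n)).deriv]
    ring

lemma norm_iteratedFDeriv_complexChar_le (u : E) (z : ℂ) (n : ℕ) (ξ : E) :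
    ‖iteratedFDeriv ℝ n (complexChar u z) ξ‖ ≤
      (2 * Real.pi * ‖z‖ * ‖u‖) ^ n * Real.exp (2 * Real.pi * (-z.im * ⟪u, ξ⟫)) := by
  have hcomp : complexChar u z =
      (fun r : ℝ => Complex.exp (2 * Real.pi * Complex.I * z * r)) ∘ innerSL ℝ u := by
    ext ξ; simp [complexChar]
  have hexp : ContDiff ℝ (⊤ : ℕ∞) fun r : ℝ => Complex.exp (2 * Real.pi * Complex.I * z * r) :=
    Complex.contDiff_exp.comp (contDiff_const.mul Complex.ofRealCLM.contDiff)
  rw [← norm_complexChar, hcomp, ContinuousLinearMap.iteratedFDeriv_comp_right _ hexp ξ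
    (by exact_mod_cast le_top)]
  refine (ContinuousMultilinearMap.norm_compContinuousLinearMap_le _ _).trans_eq ?_
  have hnorm : ‖2 * (Real.pi : ℂ) * Complex.I * z‖ = 2 * Real.pi * ‖z‖ := by
    simp [abs_of_pos Real.pi_pos]
  rw [norm_iteratedFDeriv_eq_norm_iteratedDeriv, iteratedDeriv_cexp_const_mul_ofReal,
    Finset.prod_const, Finset.card_univ, Fintype.card_fin, innerSL_apply_norm, norm_mul, norm_pow,
    hnorm, Function.comp_apply]
  ring

lemma norm_iteratedFDeriv_mul_complexChar_le {χ : E → ℂ} (hχ : ContDiff ℝ (⊤ : ℕ∞) χ) {u : E}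
    (hu : ‖u‖ ≤ 1) {z : ℂ} {s : ℝ} (hs : ∀ ξ ∈ tsupport χ, -z.im * ⟪u, ξ⟫ ≤ s) {n j : ℕ}
    (hj : j ≤ n) (ξ : E) :
    ‖iteratedFDeriv ℝ j (fun ξ => χ ξ * complexChar u z ξ) ξ‖ ≤
      2 ^ n * ((2 * Real.pi * (1 + ‖z‖)) ^ n * Real.exp (2 * Real.pi * s)) *
        ∑ i ∈ Finset.range (n + 1), ‖iteratedFDeriv ℝ i χ ξ‖ := by
  by_cases hξ : ξ ∈ tsupport χ
  · have hderiv (k : ℕ) (hk : k ≤ n) : ‖iteratedFDeriv ℝ k (complexChar u z) ξ‖ ≤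
        (2 * Real.pi * (1 + ‖z‖)) ^ n * Real.exp (2 * Real.pi * s) := by
      have hbase : 2 * Real.pi * ‖z‖ * ‖u‖ ≤ 2 * Real.pi * (1 + ‖z‖) :=
        (mul_le_of_le_one_right (by positivity) hu).trans (by gcongr; linarith)
      have hone : 1 ≤ 2 * Real.pi * (1 + ‖z‖) := by
        nlinarith [norm_nonneg z, Real.pi_gt_three]
      calc _ ≤ (2 * Real.pi * ‖z‖ * ‖u‖) ^ k * Real.exp (2 * Real.pi * (-z.im * ⟪u, ξ⟫)) :=
            norm_iteratedFDeriv_complexChar_le u z k ξ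
        _ ≤ (2 * Real.pi * (1 + ‖z‖)) ^ k * Real.exp (2 * Real.pi * s) := by
            gcongr; exact hs ξ hξ
        _ ≤ _ := by gcongr
    refine (norm_iteratedFDeriv_mul_le hχ (contDiff_complexChar u z) ξ
      (by exact_mod_cast le_top)).trans ?_
    rw [Finset.mul_sum]
    refine (Finset.sum_le_sum fun i _ => ?_).trans (Finset.sum_le_sum_of_subset_of_nonneg
      (Finset.range_mono (by omega : j + 1 ≤ n + 1)) fun i _ _ => by positivity)
    have hchoose : (j.choose i : ℝ) ≤ 2 ^ n := by
      exact_mod_cast (Nat.choose_le_two_pow j i).trans (Nat.pow_le_pow_right two_pos hj)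
    calc _ ≤ 2 ^ n * ‖iteratedFDeriv ℝ i χ ξ‖ *
          ((2 * Real.pi * (1 + ‖z‖)) ^ n * Real.exp (2 * Real.pi * s)) := by
          gcongr; exact hderiv _ (by omega)
      _ = _ := by ring
  · have hzero : iteratedFDeriv ℝ j (fun ξ => χ ξ * complexChar u z ξ) ξ = 0 := by
      by_contra hne
      exact hξ (tsupport_mul_subset_left (support_iteratedFDeriv_subset j hne))
    rw [hzero, norm_zero]
    positivity

lemma neg_mul_inner_le_of_mem_cthickening {Ω : Set E} (hΩ : IsCompact Ω) {θ : ℝ} (hθ : 0 ≤ θ)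
    {u : E} (hu : ‖u‖ ≤ 1) {y s : ℝ} (hs : ∀ ξ ∈ Ω, -y * ⟪u, ξ⟫ ≤ s) {ξ : E}
    (hξ : ξ ∈ cthickening θ Ω) : -y * ⟪u, ξ⟫ ≤ s + θ * |y| := by
  rw [hΩ.cthickening_eq_biUnion_closedBall hθ] at hξ
  simp only [Set.mem_iUnion, mem_closedBall, dist_eq_norm] at hξ
  obtain ⟨ω, hω, hdist⟩ := hξ
  calc -y * ⟪u, ξ⟫ = -y * ⟪u, ω⟫ + -y * ⟪u, ξ - ω⟫ := by rw [inner_sub_right]; ring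
    _ ≤ s + |y| * (‖u‖ * ‖ξ - ω‖) := add_le_add (hs ω hω) (neg_mul_real_inner_le _ _ _)
    _ ≤ s + |y| * (1 * θ) := by gcongr
    _ = s + θ * |y| := by ring

lemma exists_abs_inner_sub_le_of_width {Ω : Set E} (hΩ : IsCompact Ω) {u : E} {σ : ℝ}
    (hσ : ∀ ω ∈ Ω, ∀ ω' ∈ Ω, ⟪u, ω - ω'⟫ ≤ σ) : ∃ c : ℝ, ∀ ξ ∈ Ω, |⟪u, ξ⟫ - c| ≤ σ / 2 := by
  rcases Ω.eq_empty_or_nonempty with rfl | hne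
  · exact ⟨0, by simp⟩
  obtain ⟨ω, hω, hmax⟩ := hΩ.exists_isMaxOn hne (f := fun ξ => ⟪u, ξ⟫) (by fun_prop)
  refine ⟨⟪u, ω⟫ - σ / 2, fun ξ hξ => abs_le.2 ⟨?_, ?_⟩⟩
  · have := hσ ω hω ξ hξ
    rw [inner_sub_right] at this
    linarith
  · have : ⟪u, ξ⟫ ≤ ⟪u, ω⟫ := hmax hξ
    linarith

end ComplexChar

lemma integrable_norm_iteratedFDeriv {F : Type*} [NormedAddCommGroup F] [NormedSpace ℝ F]
    {g : V → F} (hg : ContDiff ℝ (⊤ : ℕ∞) g) (hc : HasCompactSupport g) (i : ℕ) :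
    Integrable fun ξ => ‖iteratedFDeriv ℝ i g ξ‖ :=
  ((hg.continuous_iteratedFDeriv (by exact_mod_cast le_top)).integrable_of_hasCompactSupport
    (hc.iteratedFDeriv i)).norm

lemma norm_pow_mul_norm_fourier_le {g : V → ℂ} (hg : ContDiff ℝ (⊤ : ℕ∞) g)
    (hc : HasCompactSupport g) {m n : ℕ} (hmn : m ≤ n) (t : V) :
    ‖t‖ ^ m * ‖𝓕 g t‖ ≤ 2 ^ n * ∑ j ∈ Finset.range (n + 1), ∫ ξ, ‖iteratedFDeriv ℝ j g ξ‖ := by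
  have hfourier := Real.pow_mul_norm_iteratedFDeriv_fourier_le (K := 0) (N := ⊤) (f := g)
    (by exact_mod_cast hg) (fun k m hk _ => by
      obtain rfl : k = 0 := by simpa using hk
      simpa using integrable_norm_iteratedFDeriv hg hc m) (k := 0) (n := m) (by simp) (by simp) t
  rw [norm_iteratedFDeriv_zero] at hfourier
  refine hfourier.trans ?_
  simp only [Finset.sum_product, zero_add, Finset.sum_range_one, pow_zero, one_mul,
    Nat.cast_zero, mul_zero]
  have hnonneg (j : ℕ) : 0 ≤ ∫ ξ, ‖iteratedFDeriv ℝ j g ξ‖ :=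
    integral_nonneg fun _ => norm_nonneg _
  gcongr
  · exact Finset.sum_nonneg fun i _ => hnonneg i
  · exact one_le_two

lemma norm_fourier_le_rpow_one_add_norm {g : V → ℂ} (hg : ContDiff ℝ (⊤ : ℕ∞) g)
    (hc : HasCompactSupport g) (n : ℕ) (t : V) :
    ‖𝓕 g t‖ ≤ 2 ^ n * (2 * (2 ^ n * ∑ j ∈ Finset.range (n + 1),
      ∫ ξ, ‖iteratedFDeriv ℝ j g ξ‖)) * (1 + ‖t‖) ^ (-(n : ℝ)) := by
  rw [Real.rpow_neg (by positivity), Real.rpow_natCast, ← div_eq_mul_inv,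
    le_div_iff₀ (by positivity)]
  have hpow : (1 + ‖t‖) ^ n ≤ 2 ^ n * (1 + ‖t‖ ^ n) := by
    refine (add_pow_le zero_le_one (norm_nonneg t) n).trans ?_
    rw [one_pow]
    gcongr
    · exact one_le_two
    · exact n.sub_le 1
  have hzero := norm_pow_mul_norm_fourier_le hg hc n.zero_le t
  have htop := norm_pow_mul_norm_fourier_le hg hc (le_refl n) t
  rw [pow_zero, one_mul] at hzero
  calc ‖𝓕 g t‖ * (1 + ‖t‖) ^ n ≤ ‖𝓕 g t‖ * (2 ^ n * (1 + ‖t‖ ^ n)) := by gcongr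
    _ = 2 ^ n * (‖𝓕 g t‖ + ‖t‖ ^ n * ‖𝓕 g t‖) := by ring
    _ ≤ _ := by gcongr; linarith

lemma exists_norm_fourier_mul_complexChar_le {χ : V → ℂ} (hχ : ContDiff ℝ (⊤ : ℕ∞) χ)
    (hc : HasCompactSupport χ) (n : ℕ) :
    ∃ A ≥ 0, ∀ u : V, ‖u‖ ≤ 1 → ∀ (z : ℂ) (s : ℝ), (∀ ξ ∈ tsupport χ, -z.im * ⟪u, ξ⟫ ≤ s) →
      ∀ t, ‖𝓕 (fun ξ => χ ξ * complexChar u z ξ) t‖ ≤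
        A * (1 + ‖z‖) ^ n * Real.exp (2 * Real.pi * s) * (1 + ‖t‖) ^ (-(n : ℝ)) := by
  set I := ∫ ξ, ∑ i ∈ Finset.range (n + 1), ‖iteratedFDeriv ℝ i χ ξ‖
  have : 0 ≤ I := integral_nonneg fun ξ => by positivity
  refine ⟨2 ^ n * (2 * (2 ^ n * ((n + 1) * (2 ^ n * (2 * Real.pi) ^ n * I)))), by positivity,
    fun u hu z s hs t => ?_⟩
  have hsmooth : ContDiff ℝ (⊤ : ℕ∞) fun ξ => χ ξ * complexChar u z ξ :=
    hχ.mul (contDiff_complexChar u z)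
  have hcompact : HasCompactSupport fun ξ => χ ξ * complexChar u z ξ := hc.mul_right
  have hintegral (j : ℕ) (hj : j ∈ Finset.range (n + 1)) :
      ∫ ξ, ‖iteratedFDeriv ℝ j (fun ξ => χ ξ * complexChar u z ξ) ξ‖ ≤
        2 ^ n * ((2 * Real.pi * (1 + ‖z‖)) ^ n * Real.exp (2 * Real.pi * s)) * I := by
    rw [← integral_const_mul]
    exact integral_mono (integrable_norm_iteratedFDeriv hsmooth hcompact j)
      ((integrable_finsetSum _ fun i _ => integrable_norm_iteratedFDeriv hχ hc i).const_mul _)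
      (norm_iteratedFDeriv_mul_complexChar_le hχ hu hs
        (Nat.lt_succ_iff.1 (Finset.mem_range.1 hj)))
  refine (norm_fourier_le_rpow_one_add_norm hsmooth hcompact n t).trans ?_
  have hsum := Finset.sum_le_card_nsmul _ _ _ hintegral
  rw [Finset.card_range, nsmul_eq_mul, Nat.cast_succ] at hsum
  calc _ ≤ 2 ^ n * (2 * (2 ^ n * ((n + 1) * (2 ^ n * ((2 * Real.pi * (1 + ‖z‖)) ^ n *
        Real.exp (2 * Real.pi * s)) * I)))) * (1 + ‖t‖) ^ (-(n : ℝ)) := by gcongr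
    _ = _ := by rw [mul_pow]; ring

lemma continuous_fourier_mul_complexChar {χ : V → ℂ} (hχ : Continuous χ)
    (hc : HasCompactSupport χ) (u : V) (z : ℂ) :
    Continuous (𝓕 fun ξ => χ ξ * complexChar u z ξ) :=
  continuous_fourier_of_integrable ((hχ.mul
    (contDiff_complexChar u z).continuous).integrable_of_hasCompactSupport hc.mul_right)

lemma hasDerivAt_fourier_mul_complexChar {χ : V → ℂ} (hχ : Continuous χ)
    (hc : HasCompactSupport χ) (u t : V) (z : ℂ) :
    HasDerivAt (fun z => 𝓕 (fun ξ => χ ξ * complexChar u z ξ) t)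
      (𝓕 (fun ξ => (2 * Real.pi * Complex.I * (⟪u, ξ⟫ : ℝ) * χ ξ) * complexChar u z ξ) t) z := by
  simp only [Real.fourier_eq]
  have hchar (z : ℂ) : Continuous (complexChar u z) := (contDiff_complexChar u z).continuous
  have hfourier : Continuous fun v : V => Real.fourierChar (-⟪v, t⟫) :=
    Real.continuous_fourierChar.comp (by fun_prop)
  refine (hasDerivAt_integral_of_dominated_loc_of_deriv_le (ball_mem_nhds z one_pos)
    (F' := fun z v => Real.fourierChar (-⟪v, t⟫) •
      (2 * Real.pi * Complex.I * (⟪u, v⟫ : ℝ) * χ v * complexChar u z v))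
    (bound := fun ξ : V => ‖2 * Real.pi * Complex.I * (⟪u, ξ⟫ : ℝ) * χ ξ‖ *
      Real.exp (2 * Real.pi * ((‖z‖ + 1) * (‖u‖ * ‖ξ‖))))
    (Eventually.of_forall fun w => ?_) ?_ ?_ (Eventually.of_forall fun ξ w hw => ?_) ?_
    (Eventually.of_forall fun ξ w _ => ?_)).2
  · exact (hfourier.smul (hχ.mul (hchar w))).aestronglyMeasurable
  · exact (hfourier.smul (hχ.mul (hchar z))).integrable_of_hasCompactSupport
      (HasCompactSupport.smul_left hc.mul_right)
  · exact (hfourier.smul (Continuous.mul (by fun_prop) (hchar z))).aestronglyMeasurable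
  · rw [Circle.norm_smul, norm_mul]
    have hdist : ‖w - z‖ < 1 := by simpa [dist_eq_norm] using hw
    have hw : ‖w‖ ≤ ‖z‖ + 1 := by linarith [norm_le_norm_add_norm_sub' w z]
    refine mul_le_mul_of_nonneg_left ((norm_complexChar_le u w ξ).trans ?_) (norm_nonneg _)
    exact Real.exp_le_exp.2 (by gcongr)
  · exact Continuous.integrable_of_hasCompactSupport (by fun_prop)
      (HasCompactSupport.mul_right (HasCompactSupport.norm (HasCompactSupport.mul_left hc)))
  · simp only [Circle.smul_def, smul_eq_mul]
    exact (((hasDerivAt_complexChar u ξ w).const_mul (χ ξ)).const_mul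
      (Real.fourierChar (-⟪ξ, t⟫) : ℂ)).congr_deriv (by ring)

lemma exists_norm_fourier_mul_complexChar_le_of_norm_le {χ : V → ℂ}
    (hχ : ContDiff ℝ (⊤ : ℕ∞) χ) (hc : HasCompactSupport χ) (R : ℝ) :
    ∃ b : V → ℝ, Integrable b ∧ ∀ u : V, ‖u‖ ≤ 1 → ∀ z : ℂ, ‖z‖ ≤ R → ∀ t,
      ‖𝓕 (fun ξ => χ ξ * complexChar u z ξ) t‖ ≤ b t := by
  obtain ⟨B, hB⟩ := hc.isBounded.exists_norm_le
  obtain ⟨A, hA0, hA⟩ := exists_norm_fourier_mul_complexChar_le hχ hc (Module.finrank ℝ V + 1)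
  refine ⟨fun t => A * (1 + R) ^ (Module.finrank ℝ V + 1) * Real.exp (2 * Real.pi * (R * |B|)) *
      (1 + ‖t‖) ^ (-((Module.finrank ℝ V + 1 : ℕ) : ℝ)),
    (integrable_one_add_norm (by exact_mod_cast Nat.lt_succ_self _)).const_mul _,
    fun u hu z hz t => ?_⟩
  have : 0 ≤ R := (norm_nonneg z).trans hz
  refine (hA u hu z (R * |B|) (fun ξ hξ => ?_) t).trans (by beta_reduce; gcongr)
  calc -z.im * ⟪u, ξ⟫ ≤ |z.im| * (‖u‖ * ‖ξ‖) := neg_mul_real_inner_le _ _ _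
    _ ≤ R * (1 * |B|) := by
        gcongr
        · exact (Complex.abs_im_le_norm z).trans hz
        · exact (hB ξ hξ).trans (le_abs_self B)
    _ = R * |B| := by rw [one_mul]

/-- The integral `∫ f · 𝓕 (χ · complexChar u z)`. When the cutoff `χ` equals `1` near the spectrum
of `f`, it continues `t ↦ f (t • u)` to complex arguments. -/
def lineExtension (χ f : V → ℂ) (u : V) (z : ℂ) : ℂ :=
  ∫ t, f t * 𝓕 (fun ξ => χ ξ * complexChar u z ξ) t

lemma differentiable_lineExtension {χ : V → ℂ} (hχ : ContDiff ℝ (⊤ : ℕ∞) χ)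
    (hc : HasCompactSupport χ) {u : V} (hu : ‖u‖ ≤ 1) {f : V → ℂ} (hf : Continuous f) {C : ℝ}
    (hC : ∀ x, ‖f x‖ ≤ C) : Differentiable ℂ (lineExtension χ f u) := by
  intro z
  have hχderiv := contDiff_ofReal_inner_mul hχ u
  have hcderiv : HasCompactSupport fun ξ => 2 * Real.pi * Complex.I * (⟪u, ξ⟫ : ℝ) * χ ξ :=
    hc.mul_left
  obtain ⟨b, hb, hle⟩ := exists_norm_fourier_mul_complexChar_le_of_norm_le hχ hc ‖z‖
  obtain ⟨b', hb', hle'⟩ :=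
    exists_norm_fourier_mul_complexChar_le_of_norm_le hχderiv hcderiv (‖z‖ + 1)
  have hmeas {χ : V → ℂ} (hχ : Continuous χ) (hc : HasCompactSupport χ) (w : ℂ) :
      AEStronglyMeasurable fun t => f t * 𝓕 (fun ξ => χ ξ * complexChar u w ξ) t :=
    (hf.mul (continuous_fourier_mul_complexChar hχ hc u w)).aestronglyMeasurable
  have hC0 : 0 ≤ C := (norm_nonneg _).trans (hC 0)
  refine (hasDerivAt_integral_of_dominated_loc_of_deriv_le (ball_mem_nhds z one_pos)
    (F' := fun z t => f t * 𝓕 (fun ξ => (2 * Real.pi * Complex.I * (⟪u, ξ⟫ : ℝ) * χ ξ) *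
      complexChar u z ξ) t)
    (Eventually.of_forall (hmeas hχ.continuous hc)) ?_ (hmeas hχderiv.continuous hcderiv z)
    (Eventually.of_forall fun t w hw => ?_) (hb'.const_mul C)
    (Eventually.of_forall fun t w _ => (hasDerivAt_fourier_mul_complexChar hχ.continuous hc
      u t w).const_mul (f t))).2.differentiableAt
  · refine (hb.const_mul C).mono' (hmeas hχ.continuous hc z) (Eventually.of_forall fun t => ?_)
    rw [norm_mul]
    exact mul_le_mul (hC t) (hle u hu z le_rfl t) (norm_nonneg _) hC0
  · have hdist : ‖w - z‖ < 1 := by simpa [dist_eq_norm] using hw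
    rw [norm_mul]
    exact mul_le_mul (hC t) (hle' u hu w (by linarith [norm_le_norm_add_norm_sub' w z]) t)
      (norm_nonneg _) hC0

lemma lineExtension_ofReal {χ : V → ℂ} (hχ : ContDiff ℝ (⊤ : ℕ∞) χ) (hc : HasCompactSupport χ)
    {Ω : Set V} (hΩ : Bornology.IsBounded Ω) (hone : ∀ᶠ ξ in 𝓝ˢ Ω, χ ξ = 1) {f : V → ℂ}
    (hf : MemBernstein Ω f) (u : V) (t : ℝ) : lineExtension χ f u t = f (t • u) := by
  have hrepr := (hf.comp_add_right (t • u)).integral_mul_fourier_eq_apply_zero hΩ hχ hc hone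
  rw [zero_add] at hrepr
  rw [lineExtension, ← hrepr, ← integral_add_right_eq_self _ (t • u)]
  congr 1 with y
  simp_rw [complexChar_ofReal, mul_comm (χ _), ← smul_eq_mul (a := (Real.fourierChar _ : ℂ)),
    ← Circle.smul_def]
  rw [fourier_fourierChar_smul, add_sub_cancel_right]

lemma MemBernstein.exists_entire {Ω : Set V} (hΩ : IsCompact Ω) {θ : ℝ} (hθ : 0 < θ) :
    ∃ A ≥ 0, ∃ n : ℕ, ∀ f : V → ℂ, MemBernstein Ω f → ∀ M : ℝ, (∀ x, ‖f x‖ ≤ M) →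
      ∀ u : V, ‖u‖ ≤ 1 → ∀ x : V, ∃ F : ℂ → ℂ, Differentiable ℂ F ∧
        (∀ t : ℝ, F t = f (x + t • u)) ∧
        ∀ (z : ℂ) (s : ℝ), (∀ ξ ∈ Ω, -z.im * ⟪u, ξ⟫ ≤ s) →
          ‖F z‖ ≤ A * M * (1 + ‖z‖) ^ n * Real.exp (2 * Real.pi * (s + θ * |z.im|)) := by
  obtain ⟨χ, hχ, hc, hsupp, hone⟩ := exists_contDiff_hasCompactSupport_eq_one hΩ hθ
  set n := Module.finrank ℝ V + 1
  obtain ⟨A, hA0, hA⟩ := exists_norm_fourier_mul_complexChar_le hχ hc n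
  have h_int : Integrable fun t : V => (1 + ‖t‖) ^ (-(n : ℝ)) :=
    integrable_one_add_norm (by exact_mod_cast Nat.lt_succ_self _)
  refine ⟨A * ∫ t : V, (1 + ‖t‖) ^ (-(n : ℝ)), by positivity, n, fun f hf M hM u hu x =>
    ⟨lineExtension χ (fun t => f (t + x)) u,
      differentiable_lineExtension hχ hc hu (hf.comp_add_right x).1 fun t => hM _, fun t => ?_,
      fun z s hs => ?_⟩⟩
  · rw [lineExtension_ofReal hχ hc hΩ.isBounded hone (hf.comp_add_right x), add_comm]
  · have hbound := hA u hu z _ fun ξ hξ =>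
      neg_mul_inner_le_of_mem_cthickening hΩ hθ.le hu hs (hsupp hξ)
    refine (norm_integral_le_of_norm_le (((h_int.const_mul (A * (1 + ‖z‖) ^ n *
      Real.exp (2 * Real.pi * (s + θ * |z.im|)))).const_mul M))
      (Eventually.of_forall fun t => ?_)).trans_eq ?_
    · rw [norm_mul]
      exact mul_le_mul (hM _) (hbound t) (norm_nonneg _) ((norm_nonneg _).trans (hM 0))
    · rw [integral_const_mul, integral_const_mul]; ring

lemma norm_sub_le_of_norm_le_closedBall_two {F : ℂ → ℂ} (hF : Differentiable ℂ F) {B : ℝ}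
    (hB : ∀ z : ℂ, ‖z‖ ≤ 2 → ‖F z‖ ≤ B) {z : ℂ} (hz : ‖z‖ ≤ 1) : ‖F z - F 0‖ ≤ B * ‖z‖ := by
  have hderiv : ∀ w ∈ closedBall (0 : ℂ) 1, ‖deriv F w‖ ≤ B := fun w hw => by
    refine (Complex.norm_deriv_le_of_forall_mem_sphere_norm_le one_pos hF.diffContOnCl
      fun v hv => hB v ?_).trans_eq (div_one B)
    have hdist : ‖v - w‖ = 1 := by simpa [dist_eq_norm] using hv
    linarith [norm_le_norm_add_norm_sub' v w, mem_closedBall_zero_iff.1 hw]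
  simpa using (convex_closedBall (0 : ℂ) 1).norm_image_sub_le_of_norm_deriv_le
    (fun w _ => hF w) hderiv (x := 0) (y := z) (by simp) (by simpa using hz)

lemma MemBernstein.exists_norm_entire_le_of_norm_le_two {Ω : Set V} (hΩ : IsCompact Ω) :
    ∃ B ≥ 0, ∀ f : V → ℂ, MemBernstein Ω f → ∀ M : ℝ, (∀ x, ‖f x‖ ≤ M) →
      ∀ u : V, ‖u‖ ≤ 1 → ∀ x : V, ∃ F : ℂ → ℂ, Differentiable ℂ F ∧
        (∀ t : ℝ, F t = f (x + t • u)) ∧ ∀ z : ℂ, ‖z‖ ≤ 2 → ‖F z‖ ≤ B * M := by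
  obtain ⟨A, hA0, n, hA⟩ := MemBernstein.exists_entire hΩ one_pos
  obtain ⟨R, hR⟩ := hΩ.isBounded.exists_norm_le
  refine ⟨A * 3 ^ n * Real.exp (2 * Real.pi * (2 * |R| + 1 * 2)), by positivity,
    fun f hf M hM u hu x => ?_⟩
  have hM0 : 0 ≤ M := (norm_nonneg _).trans (hM 0)
  obtain ⟨F, hF, hFt, hFb⟩ := hA f hf M hM u hu x
  refine ⟨F, hF, hFt, fun z hz => ?_⟩
  have him : |z.im| ≤ 2 := (Complex.abs_im_le_norm z).trans hz
  have hsupport : ∀ ξ ∈ Ω, -z.im * ⟪u, ξ⟫ ≤ 2 * |R| := fun ξ hξ =>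
    calc -z.im * ⟪u, ξ⟫ ≤ |z.im| * (‖u‖ * ‖ξ‖) := neg_mul_real_inner_le _ _ _
      _ ≤ 2 * (1 * |R|) := by gcongr; exact (hR ξ hξ).trans (le_abs_self _)
      _ = 2 * |R| := by rw [one_mul]
  calc ‖F z‖ ≤ A * M * (1 + ‖z‖) ^ n * Real.exp (2 * Real.pi * (2 * |R| + 1 * |z.im|)) :=
        hFb z _ hsupport
    _ ≤ A * M * (1 + 2) ^ n * Real.exp (2 * Real.pi * (2 * |R| + 1 * 2)) := by gcongr
    _ = _ := by ring

lemma MemBernstein.exists_lipschitzWith {Ω : Set V} (hΩ : IsCompact Ω) :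
    ∃ K : ℝ≥0, ∀ f : V → ℂ, MemBernstein Ω f → ∀ M : ℝ≥0, (∀ x, ‖f x‖ ≤ M) →
      LipschitzWith (K * M) f := by
  obtain ⟨B, hB0, hB⟩ := MemBernstein.exists_norm_entire_le_of_norm_le_two hΩ
  refine ⟨B.toNNReal + 2, fun f hf M hM => LipschitzWith.of_dist_le_mul fun x y => ?_⟩
  rw [NNReal.coe_mul, NNReal.coe_add, Real.coe_toNNReal _ hB0, NNReal.coe_ofNat, dist_eq_norm,
    dist_eq_norm]
  rcases eq_or_ne x y with rfl | hxy
  · simp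
  rcases le_or_gt ‖x - y‖ 1 with hnear | hfar
  · have hd : 0 < ‖x - y‖ := norm_pos_iff.2 (sub_ne_zero.2 hxy)
    have hunit : ‖‖x - y‖⁻¹ • (x - y)‖ ≤ 1 := by
      rw [norm_smul, norm_inv, norm_norm, inv_mul_cancel₀ hd.ne']
    obtain ⟨F, hF, hFt, hFb⟩ := hB f hf M hM _ hunit y
    have hF0 := hFt 0
    have hF1 := hFt ‖x - y‖
    rw [Complex.ofReal_zero, zero_smul, add_zero] at hF0
    rw [smul_smul, mul_inv_cancel₀ hd.ne', one_smul, add_sub_cancel] at hF1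
    have hsub := norm_sub_le_of_norm_le_closedBall_two hF hFb (z := (‖x - y‖ : ℝ)) (by simpa)
    rw [hF0, hF1, Complex.norm_real, norm_norm] at hsub
    exact hsub.trans (by gcongr; linarith)
  · calc ‖f x - f y‖ ≤ ‖f x‖ + ‖f y‖ := norm_sub_le _ _
      _ ≤ 2 * M * 1 := by linarith [hM x, hM y]
      _ ≤ (B + 2) * M * ‖x - y‖ := by
          gcongr
          linarith

lemma exists_one_add_mul_pow_le_exp (n : ℕ) {r η : ℝ} (hr : 0 < r) (hη : 0 < η) :
    ∃ A > 0, ∀ y ≥ 0, (1 + r * y) ^ n ≤ A * Real.exp (η * y) := by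
  refine ⟨(r / η) ^ n * n.factorial * Real.exp (η / r), by positivity, fun y hy => ?_⟩
  have hexp := Real.pow_div_factorial_le_exp (η / r * (1 + r * y)) (by positivity) n
  rw [div_le_iff₀ (by positivity), mul_pow] at hexp
  calc (1 + r * y) ^ n = (r / η) ^ n * ((η / r) ^ n * (1 + r * y) ^ n) := by
        rw [← mul_assoc, ← mul_pow, div_mul_div_cancel₀ hη.ne', div_self hr.ne', one_pow, one_mul]
    _ ≤ (r / η) ^ n * (Real.exp (η / r * (1 + r * y)) * n.factorial) := by gcongr
    _ = _ := by
        rw [show η / r * (1 + r * y) = η / r + η * y by field_simp, Real.exp_add]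
        ring

-- Multiplying by `exp (-2πi c z)` centres the slab containing `Ω`, so that only its width remains.
lemma norm_mul_cexp_le_of_norm_le {w z : ℂ} {c σ η θ K : ℝ} (hK : 0 ≤ K) (hη : 0 ≤ η)
    (hθ : 2 * Real.pi * θ = η)
    (hw : ‖w‖ ≤ K * Real.exp (2 * Real.pi * (-c * z.im + σ / 2 * |z.im| + θ * |z.im|))) :
    ‖w * Complex.exp (-(2 * Real.pi * c * Complex.I * z))‖ ≤
      K * Real.exp (η * ‖z‖ + Real.pi * σ * |z.im|) := by
  have hexp : ‖Complex.exp (-(2 * Real.pi * c * Complex.I * z))‖ =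
      Real.exp (2 * Real.pi * c * z.im) := by
    rw [Complex.norm_exp]; congr 1; simp
  rw [norm_mul, hexp]
  refine (mul_le_mul_of_nonneg_right hw (Real.exp_nonneg _)).trans ?_
  rw [mul_assoc, ← Real.exp_add]
  refine mul_le_mul_of_nonneg_left (Real.exp_le_exp.2 ?_) hK
  linear_combination |z.im| * hθ + η * Complex.abs_im_le_norm z

lemma MemBernstein.exists_entire_of_width {Ω : Set V} (hΩ : IsCompact Ω) {f : V → ℂ}
    (hf : MemBernstein Ω f) {u : V} {σ : ℝ} (hσ : ∀ ω ∈ Ω, ∀ ω' ∈ Ω, ⟪u, ω - ω'⟫ ≤ σ)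
    {η : ℝ} (hη : 0 < η) :
    ∃ A > 0, ∀ x, ∃ F : ℂ → ℂ, Differentiable ℂ F ∧ (∀ t : ℝ, ‖F t‖ = ‖f (x + t • u)‖) ∧
      ∀ z, ‖F z‖ ≤ A * Real.exp (η * ‖z‖ + Real.pi * σ * |z.im|) := by
  obtain ⟨c, hc⟩ := exists_abs_inner_sub_le_of_width hΩ hσ
  obtain ⟨r, hr, hur⟩ : ∃ r > 0, ‖u‖ ≤ r :=
    ⟨max 1 ‖u‖, zero_lt_one.trans_le (le_max_left _ _), le_max_right _ _⟩
  have hunit : ‖r⁻¹ • u‖ ≤ 1 := by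
    rwa [norm_smul, norm_inv, Real.norm_of_nonneg hr.le, inv_mul_le_iff₀ hr, mul_one]
  obtain ⟨A, hA0, n, hA⟩ := MemBernstein.exists_entire hΩ
    (show 0 < η / (4 * Real.pi * r) by positivity)
  obtain ⟨M, hM⟩ := hf.2.1
  have hM0 : 0 ≤ M := (norm_nonneg _).trans (hM 0)
  obtain ⟨B, hB0, hB⟩ := exists_one_add_mul_pow_le_exp n hr (half_pos hη)
  refine ⟨A * M * B + 1, by positivity, fun x => ?_⟩
  obtain ⟨F, hF, hFt, hFb⟩ := hA f hf M hM (r⁻¹ • u) hunit x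
  refine ⟨fun z => F (r * z) * Complex.exp (-(2 * Real.pi * c * Complex.I * z)), by fun_prop,
    fun t => ?_, fun z => ?_⟩
  · rw [norm_mul, Complex.norm_exp, ← Complex.ofReal_mul, hFt, smul_smul, mul_right_comm,
      mul_inv_cancel₀ hr.ne', one_mul]
    simp
  have him : (r * z : ℂ).im = r * z.im := by simp
  have hslab : ∀ ξ ∈ Ω, -(r * z : ℂ).im * ⟪r⁻¹ • u, ξ⟫ ≤ -c * z.im + σ / 2 * |z.im| := by
    intro ξ hξ
    calc -(r * z : ℂ).im * ⟪r⁻¹ • u, ξ⟫ = -c * z.im + -(z.im * (⟪u, ξ⟫ - c)) := by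
          rw [him, real_inner_smul_left]; field_simp; ring
      _ ≤ -c * z.im + |z.im| * |⟪u, ξ⟫ - c| := by rw [← abs_mul]; gcongr; exact neg_le_abs _
      _ ≤ -c * z.im + |z.im| * (σ / 2) := by gcongr; exact hc ξ hξ
      _ = _ := by ring
  have hgrowth := hFb (r * z) _ hslab
  rw [him, abs_mul, abs_of_pos hr, ← mul_assoc (η / _), norm_mul, Complex.norm_real,
    Real.norm_of_nonneg hr.le] at hgrowth
  calc _ ≤ A * M * (1 + r * ‖z‖) ^ n * Real.exp (η / 2 * ‖z‖ + Real.pi * σ * |z.im|) :=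
        norm_mul_cexp_le_of_norm_le (by positivity) (by positivity) (by field_simp; ring) hgrowth
    _ ≤ A * M * (B * Real.exp (η / 2 * ‖z‖)) *
          Real.exp (η / 2 * ‖z‖ + Real.pi * σ * |z.im|) := by
        gcongr; exact hB _ (norm_nonneg z)
    _ = A * M * B * Real.exp (η * ‖z‖ + Real.pi * σ * |z.im|) := by
        rw [← mul_assoc, mul_assoc (A * M * B), ← Real.exp_add]
        ring_nf
    _ ≤ _ := by gcongr; linarith

lemma exists_subseq_tendsto_of_equicontinuous {X F : Type*} [TopologicalSpace X]
    [TopologicalSpace.SeparableSpace X] [PseudoMetricSpace F] [ProperSpace F] {f : ℕ → X → F}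
    (hf : Equicontinuous f) (hbdd : ∀ x, Bornology.IsBounded (Set.range fun n => f n x)) :
    ∃ (g : X → F) (φ : ℕ → ℕ), StrictMono φ ∧
      ∀ x, Tendsto (fun n => f (φ n) x) atTop (𝓝 (g x)) := by
  obtain ⟨s, hs, hdense⟩ := TopologicalSpace.exists_countable_dense X
  have : Countable s := hs.to_subtype
  have hcompact : IsCompact (Set.pi Set.univ fun x : s => closure (Set.range fun n => f n x)) :=
    isCompact_univ_pi fun x => (hbdd x).isCompact_closure
  obtain ⟨a, -, φ, hφ, ha⟩ := hcompact.tendsto_subseq (x := fun n (y : s) => f n y)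
    fun n y _ => subset_closure (Set.mem_range_self n)
  rw [tendsto_pi_nhds] at ha
  have hlim (x : X) : ∃ c, Tendsto (fun n => f (φ n) x) atTop (𝓝 c) := by
    refine cauchySeq_tendsto_of_complete (Metric.cauchySeq_iff'.2 fun ε hε => ?_)
    obtain ⟨y, hys, hy⟩ := hdense.inter_nhds_nonempty
      (Metric.equicontinuousAt_iff_right.1 (hf x) (ε / 3) (by positivity))
    obtain ⟨N, hN⟩ := Metric.cauchySeq_iff'.1 (ha ⟨y, hys⟩).cauchySeq (ε / 3) (by positivity)
    refine ⟨N, fun n hn => ?_⟩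
    have htriangle := dist_triangle4 (f (φ n) x) (f (φ n) y) (f (φ N) y) (f (φ N) x)
    have hcauchy : dist (f (φ n) y) (f (φ N) y) < ε / 3 := hN n hn
    have hN' := hy (φ N)
    rw [dist_comm] at hN'
    linarith [hy (φ n)]
  choose g hg using hlim
  exact ⟨g, φ, hφ, hg⟩

lemma MemBernstein.of_tendsto {Ω : Set V} (hΩ : IsClosed Ω) {f : ℕ → V → ℂ} {ε : ℕ → ℝ}
    (hε : Tendsto ε atTop (𝓝 0)) (hf : ∀ n, MemBernstein (cthickening (ε n) Ω) (f n)) {M : ℝ}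
    (hM : ∀ n x, ‖f n x‖ ≤ M) {g : V → ℂ} (hcont : Continuous g)
    (hg : ∀ x, Tendsto (fun n => f n x) atTop (𝓝 (g x))) : MemBernstein Ω g := by
  refine ⟨hcont, ⟨M, fun x => le_of_tendsto (hg x).norm (Eventually.of_forall fun n => hM n x)⟩,
    fun ψ hψ hc hdisj => ?_⟩
  have h_int := integrable_fourier_of_hasCompactSupport hψ hc
  have hlim : Tendsto (fun n => ∫ x, f n x * 𝓕 ψ x) atTop (𝓝 (∫ x, g x * 𝓕 ψ x)) := by
    refine tendsto_integral_of_dominated_convergence (fun x => M * ‖𝓕 ψ x‖)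
      (fun n => ((hf n).integrable_mul h_int).aestronglyMeasurable) (h_int.norm.const_mul M)
      (fun n => Eventually.of_forall fun x => ?_)
      (Eventually.of_forall fun x => (hg x).mul_const _)
    rw [norm_mul]
    gcongr
    exact hM n x
  refine tendsto_nhds_unique hlim (Tendsto.congr' ?_ tendsto_const_nhds)
  obtain ⟨δ, hδ, hthick⟩ := (Set.disjoint_iff_inter_eq_empty.2 hdisj).exists_cthickenings hc hΩ
  filter_upwards [hε.eventually (gt_mem_nhds hδ)] with n hn
  exact ((hf n).2.2 ψ hψ hc (Set.disjoint_iff_inter_eq_empty.1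
    (hthick.mono (self_subset_cthickening _) (cthickening_mono hn.le _)))).symm

lemma MemBernstein.exists_subseq_tendsto {Ω : Set V} (hΩ : IsCompact Ω) {f : ℕ → V → ℂ}
    {ε : ℕ → ℝ} (hε1 : ∀ n, ε n ≤ 1) (hε : Tendsto ε atTop (𝓝 0))
    (hf : ∀ n, MemBernstein (cthickening (ε n) Ω) (f n)) {M : ℝ} (hM : ∀ n x, ‖f n x‖ ≤ M) :
    ∃ (g : V → ℂ) (φ : ℕ → ℕ), StrictMono φ ∧
      (∀ x, Tendsto (fun n => f (φ n) x) atTop (𝓝 (g x))) ∧ MemBernstein Ω g := by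
  obtain ⟨K, hK⟩ := MemBernstein.exists_lipschitzWith (hΩ.cthickening (r := 1))
  have hlip (n : ℕ) : LipschitzWith (K * M.toNNReal) (f n) :=
    hK (f n) ((hf n).mono (cthickening_mono (hε1 n) _)) _
      fun x => (hM n x).trans (Real.le_coe_toNNReal M)
  have hequi := (LipschitzWith.uniformEquicontinuous f _ hlip).equicontinuous
  obtain ⟨g, φ, hφ, hg⟩ := exists_subseq_tendsto_of_equicontinuous hequi fun x =>
    isBounded_iff_forall_norm_le.2 ⟨M, by rintro _ ⟨n, rfl⟩; exact hM n x⟩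
  have hcont : Continuous g :=
    (tendsto_pi_nhds.2 hg).continuous_of_equicontinuous (hequi.comp φ)
  exact ⟨g, φ, hφ, hg, MemBernstein.of_tendsto hΩ.isClosed (hε.comp hφ.tendsto_atTop)
    (fun n => hf (φ n)) (fun n => hM (φ n)) hcont hg⟩

lemma one_le_divisor_of_apply_eq_zero {F : ℂ → ℂ} (hF : Differentiable ℂ F) {z : ℂ}
    (hz : F z ≠ 0) {U : Set ℂ} {u : ℂ} (hu : u ∈ U) (hu0 : F u = 0) :
    1 ≤ MeromorphicOn.divisor F U u := by
  have han : AnalyticOnNhd ℂ F Set.univ := hF.differentiableOn.analyticOnNhd isOpen_univ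
  have htop : analyticOrderAt F u ≠ ⊤ := by
    refine han.analyticOrderAt_ne_top_of_isPreconnected isPreconnected_univ
      (Set.mem_univ z) (Set.mem_univ u) ?_
    rw [(han z (Set.mem_univ _)).analyticOrderAt_eq_zero.2 hz]
    exact ENat.zero_ne_top
  obtain ⟨m, hm⟩ := ENat.ne_top_iff_exists.1 htop
  have hm0 : m ≠ 0 := by
    rintro rfl
    exact (han u (Set.mem_univ _)).analyticOrderAt_eq_zero.1 hm.symm hu0
  rw [MeromorphicOn.AnalyticOnNhd.divisor_apply (han.mono (Set.subset_univ U)) hu, ← hm]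
  change 1 ≤ (m : ℤ)
  exact_mod_cast Nat.one_le_iff_ne_zero.2 hm0

lemma sum_log_add_log_le_circleAverage {F : ℂ → ℂ} (hF : Differentiable ℂ F) (h0 : F 0 ≠ 0)
    {R : ℝ} (hR : 0 < R) (T : Finset ℂ) (hT : ∀ u ∈ T, F u = 0 ∧ ‖u‖ ≤ R) :
    ∑ u ∈ T, Real.log (R / ‖u‖) + Real.log ‖F 0‖ ≤
      Real.circleAverage (fun z => Real.log ‖F z‖) 0 R := by
  classical
  have han : AnalyticOnNhd ℂ F (closedBall 0 |R|) := fun z _ => hF.analyticAt z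
  rw [han.circleAverage_log_norm hR.ne' h0]
  set d := MeromorphicOn.divisor F (closedBall 0 |R|)
  have hball {u : ℂ} : u ∈ closedBall (0 : ℂ) |R| ↔ ‖u‖ ≤ R := by
    rw [mem_closedBall_zero_iff, abs_of_pos hR]
  have hlog {u : ℂ} (hu : ‖u‖ ≤ R) : 0 ≤ Real.log (R / ‖u‖) := by
    rcases eq_or_ne u 0 with rfl | hne
    · simp
    · exact Real.log_nonneg ((one_le_div (norm_pos_iff.2 hne)).2 hu)
  have hterm (u : ℂ) : (d u : ℝ) * Real.log (R * ‖0 - u‖⁻¹) = d u * Real.log (R / ‖u‖) := by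
    rw [zero_sub, norm_neg, div_eq_mul_inv]
  have hnonneg (u : ℂ) : 0 ≤ (d u : ℝ) * Real.log (R / ‖u‖) := by
    by_cases hu : u ∈ closedBall (0 : ℂ) |R|
    · exact mul_nonneg (by exact_mod_cast MeromorphicOn.AnalyticOnNhd.divisor_nonneg han u)
        (hlog (hball.1 hu))
    · simp [d.apply_eq_zero_of_notMem hu]
  have hfinite : (Function.support fun u => (d u : ℝ) * Real.log (R / ‖u‖)).Finite :=
    (d.finiteSupport (isCompact_closedBall 0 |R|)).subset fun u hu hd => hu (by simp [hd])
  simp_rw [hterm]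
  rw [finsum_eq_sum_of_support_subset (s := hfinite.toFinset ∪ T) _ (by simp)]
  gcongr
  refine (Finset.sum_le_sum fun u hu => ?_).trans (Finset.sum_le_sum_of_subset_of_nonneg
    Finset.subset_union_right fun u _ _ => hnonneg u)
  have hone : (1 : ℝ) ≤ d u := by
    exact_mod_cast one_le_divisor_of_apply_eq_zero hF h0 (hball.2 (hT u hu).2) (hT u hu).1
  exact le_mul_of_one_le_left (hlog (hT u hu).2) hone

lemma integral_abs_sin_zero_two_pi : ∫ θ in (0 : ℝ)..(2 * Real.pi), |Real.sin θ| = 4 := by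
  have h_int (a b : ℝ) : IntervalIntegrable (fun θ => |Real.sin θ|) volume a b :=
    Real.continuous_sin.abs.intervalIntegrable a b
  have hhalf : ∫ θ in (0 : ℝ)..Real.pi, |Real.sin θ| = 2 := by
    have hsin : ∫ θ in (0 : ℝ)..Real.pi, Real.sin θ = 2 := by rw [integral_sin]; norm_num
    rw [← hsin]
    refine intervalIntegral.integral_congr fun θ hθ => ?_
    rw [Set.uIcc_of_le Real.pi_pos.le] at hθ
    exact abs_of_nonneg (Real.sin_nonneg_of_mem_Icc hθ)
  have hshift := intervalIntegral.integral_comp_add_right (fun θ => |Real.sin θ|) Real.pi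
    (a := 0) (b := Real.pi)
  simp_rw [Real.sin_add_pi, abs_neg, zero_add, ← two_mul] at hshift
  rw [← intervalIntegral.integral_add_adjacent_intervals (h_int 0 Real.pi) (h_int _ _), ← hshift,
    hhalf]
  norm_num

lemma circleAverage_abs_im {R : ℝ} (hR : 0 ≤ R) :
    Real.circleAverage (fun z : ℂ => |z.im|) 0 R = 2 * R / Real.pi := by
  have him (θ : ℝ) : |(circleMap 0 R θ).im| = R * |Real.sin θ| := by
    simp [circleMap, Complex.exp_ofReal_mul_I_im, abs_mul, abs_of_nonneg hR]
  simp_rw [Real.circleAverage, him]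
  rw [intervalIntegral.integral_const_mul, integral_abs_sin_zero_two_pi, smul_eq_mul]
  field_simp
  ring

lemma circleAverage_log_norm_le {F : ℂ → ℂ} (hF : Differentiable ℂ F) {A a b R : ℝ} (hA : 1 ≤ A)
    (ha : 0 ≤ a) (hb : 0 ≤ b) (hR : 0 ≤ R)
    (hbound : ∀ z, ‖F z‖ ≤ A * Real.exp (a * ‖z‖ + b * |z.im|)) :
    Real.circleAverage (fun z => Real.log ‖F z‖) 0 R ≤
      Real.log A + a * R + b * (2 * R / Real.pi) := by
  have h_int : CircleIntegrable (fun z : ℂ => b * |z.im|) 0 R :=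
    (by fun_prop : Continuous fun z : ℂ => b * |z.im|).continuousOn.circleIntegrable hR
  have hmajorant : Real.circleAverage (fun z : ℂ => (Real.log A + a * R) + b * |z.im|) 0 R =
      Real.log A + a * R + b * (2 * R / Real.pi) := by
    have hsmul := Real.circleAverage_fun_smul (a := b) (c := 0) (R := R)
      (f := fun z : ℂ => |z.im|)
    simp only [smul_eq_mul] at hsmul
    rw [Real.circleAverage_fun_add (circleIntegrable_const _ _ _) h_int, Real.circleAverage_const,
      hsmul, circleAverage_abs_im hR]
  rw [← hmajorant]
  refine Real.circleAverage_mono (MeromorphicOn.circleIntegrable_log_norm fun z _ =>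
    (hF.analyticAt z).meromorphicAt) ((circleIntegrable_const _ _ _).add h_int) fun z hz => ?_
  have hzR : ‖z‖ = R := by simpa [abs_of_nonneg hR] using hz
  rcases eq_or_ne (F z) 0 with hz0 | hz0
  · rw [hz0, norm_zero, Real.log_zero]
    have := Real.log_nonneg hA
    positivity
  · have hlog := Real.log_le_log (norm_pos_iff.2 hz0) (hbound z)
    rw [Real.log_mul (by positivity) (by positivity), Real.log_exp, hzR] at hlog
    linarith

lemma sum_log_succ_le {J : ℕ} (hJ : 1 ≤ J) :
    ∑ j ∈ Finset.range J, Real.log (j + 1) ≤ J * Real.log J - J + 1 + Real.log J := by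
  induction J, hJ using Nat.le_induction with
  | base => simp
  | succ n hn ih =>
    rw [Finset.sum_range_succ]
    have : (0 : ℝ) < n := by exact_mod_cast hn
    have hlog := Real.one_sub_inv_le_log_of_pos (x := ((n : ℝ) + 1) / n) (by positivity)
    rw [Real.log_div (by positivity) (by positivity)] at hlog
    have hinv : 1 - (((n : ℝ) + 1) / n)⁻¹ = 1 / (n + 1) := by field_simp; ring
    rw [hinv, div_le_iff₀ (by positivity)] at hlog
    push_cast
    nlinarith

lemma le_sum_log_div_succ {J : ℕ} (hJ : 1 ≤ J) :
    J - 1 - Real.log J ≤ ∑ j ∈ Finset.range J, Real.log (J / (j + 1)) := by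
  have hlog (j : ℕ) : Real.log ((J : ℝ) / (j + 1)) = Real.log J - Real.log (j + 1) :=
    Real.log_div (by positivity) (by positivity)
  simp_rw [hlog]
  rw [Finset.sum_sub_distrib, Finset.sum_const, Finset.card_range, nsmul_eq_mul]
  linarith [sum_log_succ_le hJ]

lemma sum_Ico_neg_natCast (g : ℤ → ℝ) (J : ℕ) :
    ∑ j ∈ Finset.Ico (-J : ℤ) J, g (max (-j) (j + 1)) = 2 * ∑ k ∈ Finset.range J, g (k + 1) := by
  induction J with
  | zero => simp
  | succ n ih =>
    have hIco : Finset.Ico (-(n + 1 : ℕ) : ℤ) (n + 1 : ℕ) =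
        insert (-(n + 1 : ℤ)) (insert (n : ℤ) (Finset.Ico (-n : ℤ) n)) := by
      ext j
      simp only [Finset.mem_insert, Finset.mem_Ico]
      omega
    rw [hIco, Finset.sum_insert (by simp), Finset.sum_insert (by simp), ih,
      Finset.sum_range_succ, max_eq_left (by omega), max_eq_right (by omega), neg_neg]
    ring

lemma eventually_mul_one_add_log_le (C : ℝ) {c : ℝ} (hc : 0 < c) :
    ∀ᶠ J : ℕ in atTop, C * (1 + Real.log J) ≤ c * J := by
  have hone : (fun _ : ℝ => (1 : ℝ)) =o[atTop] (id : ℝ → ℝ) :=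
    Asymptotics.isLittleO_const_id_atTop 1
  have hlittle := ((hone.add Real.isLittleO_log_id_atTop).const_mul_left C).comp_tendsto
    tendsto_natCast_atTop_atTop
  filter_upwards [hlittle.def hc] with J hJ
  simpa using (le_abs_self _).trans hJ

lemma log_div_le_log_div_abs_of_mem_Ico {J ℓ s : ℝ} (hJ : 0 < J) (hℓ : 0 < ℓ) (hs : s ≠ 0)
    {j : ℤ} (hjs : s ∈ Set.Ico (j * ℓ) ((j + 1) * ℓ)) :
    Real.log (J / (max (-j) (j + 1) : ℤ)) ≤ Real.log (J * ℓ / |s|) := by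
  have hspos : 0 < |s| := abs_pos.2 hs
  have habs : |s| ≤ (max (-j) (j + 1) : ℤ) * ℓ := by
    push_cast
    rw [max_mul_of_nonneg _ _ hℓ.le]
    refine abs_le'.2 ⟨le_max_of_le_right hjs.2.le, le_max_of_le_left ?_⟩
    linarith [hjs.1]
  have hj : (0 : ℝ) < (max (-j) (j + 1) : ℤ) := by
    exact_mod_cast (by omega : 0 < max (-j) (j + 1))
  refine Real.log_le_log (by positivity) ?_
  rw [div_le_div_iff₀ hj hspos]
  calc J * |s| ≤ J * ((max (-j) (j + 1) : ℤ) * ℓ) := by gcongr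
    _ = J * ℓ * (max (-j) (j + 1) : ℤ) := by ring

lemma sum_log_div_abs_ge {J : ℕ} {ℓ m : ℝ} (hJ : 1 ≤ J) (hℓ : 0 < ℓ) (hm : 0 ≤ m)
    {S : ℤ → Finset ℝ} (hcard : ∀ j ∈ Finset.Ico (-J : ℤ) J, m ≤ (S j).card)
    (hS : ∀ j ∈ Finset.Ico (-J : ℤ) J, ∀ s ∈ S j, s ≠ 0 ∧ s ∈ Set.Ico (j * ℓ) ((j + 1) * ℓ)) :
    2 * m * (J - 1 - Real.log J) ≤
      ∑ s ∈ (Finset.Ico (-J : ℤ) J).biUnion S, Real.log (J * ℓ / |s|) := by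
  have hdisj : Set.PairwiseDisjoint (Finset.Ico (-J : ℤ) J : Set ℤ) S := by
    intro i hi j hj hij
    refine Finset.disjoint_left.2 fun s hsi hsj => hij ?_
    have hfloor {k : ℤ} (hk : s ∈ Set.Ico (k * ℓ) ((k + 1) * ℓ)) : ⌊s / ℓ⌋ = k :=
      Int.floor_eq_iff.2 ⟨(le_div_iff₀ hℓ).2 hk.1, (div_lt_iff₀ hℓ).2 hk.2⟩
    rw [← hfloor (hS i hi s hsi).2, hfloor (hS j hj s hsj).2]
  have hlog (j : ℤ) (hj : j ∈ Finset.Ico (-J : ℤ) J) :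
      m * Real.log (J / (max (-j) (j + 1) : ℤ)) ≤ ∑ s ∈ S j, Real.log (J * ℓ / |s|) := by
    have hnonneg : 0 ≤ Real.log (J / (max (-j) (j + 1) : ℤ)) := by
      rw [Finset.mem_Ico] at hj
      refine Real.log_nonneg ((one_le_div ?_).2 ?_)
      · exact_mod_cast (by omega : 0 < max (-j) (j + 1))
      · exact_mod_cast (by omega : max (-j) (j + 1) ≤ (J : ℤ))
    refine (mul_le_mul_of_nonneg_right (hcard j hj) hnonneg).trans ?_
    rw [← nsmul_eq_mul]
    exact Finset.card_nsmul_le_sum _ _ _ fun s hs => log_div_le_log_div_abs_of_mem_Ico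
      (by exact_mod_cast hJ) hℓ (hS j hj s hs).1 (hS j hj s hs).2
  rw [Finset.sum_biUnion hdisj]
  refine le_trans ?_ (Finset.sum_le_sum hlog)
  rw [sum_Ico_neg_natCast (fun k => m * Real.log (J / (k : ℤ))), ← Finset.mul_sum]
  push_cast
  have := mul_le_mul_of_nonneg_left (le_sum_log_div_succ hJ) hm
  linarith

lemma log_norm_apply_zero_le_circleAverage_sub {F : ℂ → ℂ} (hF : Differentiable ℂ F)
    (h0 : F 0 ≠ 0) {J : ℕ} {ℓ m : ℝ} (hJ : 1 ≤ J) (hℓ : 0 < ℓ) (hm : 0 ≤ m)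
    {S : ℤ → Finset ℝ} (hcard : ∀ j ∈ Finset.Ico (-J : ℤ) J, m ≤ (S j).card)
    (hS : ∀ j ∈ Finset.Ico (-J : ℤ) J, ∀ s ∈ S j,
      s ∈ Set.Ico (j * ℓ) ((j + 1) * ℓ) ∧ F s = 0) :
    Real.log ‖F 0‖ ≤ Real.circleAverage (fun z => Real.log ‖F z‖) 0 (J * ℓ) -
      2 * m * (J - 1 - Real.log J) := by
  classical
  set T := (Finset.Ico (-J : ℤ) J).biUnion S
  have hT (u : ℂ) (hu : u ∈ T.image ((↑) : ℝ → ℂ)) : F u = 0 ∧ ‖u‖ ≤ J * ℓ := by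
    obtain ⟨s, hs, rfl⟩ := Finset.mem_image.1 hu
    obtain ⟨j, hj, hsj⟩ := Finset.mem_biUnion.1 hs
    obtain ⟨hjs, hs0⟩ := hS j hj s hsj
    obtain ⟨hlo, hhi⟩ := Finset.mem_Ico.1 hj
    have hleft : (-J : ℝ) * ℓ ≤ j * ℓ := by gcongr; exact_mod_cast hlo
    have hright : (j + 1 : ℝ) * ℓ ≤ J * ℓ := by gcongr; exact_mod_cast hhi
    refine ⟨hs0, ?_⟩
    rw [Complex.norm_real, Real.norm_eq_abs, abs_le]
    constructor <;> linarith [hjs.1, hjs.2]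
  have hjensen := sum_log_add_log_le_circleAverage hF h0
    (by have : (0 : ℝ) < J := by exact_mod_cast hJ
        positivity) (T.image (↑)) hT
  rw [Finset.sum_image Complex.ofReal_injective.injOn] at hjensen
  simp only [Complex.norm_real, Real.norm_eq_abs] at hjensen
  have hzeros := sum_log_div_abs_ge hJ hℓ hm hcard fun j hj s hs =>
    ⟨fun hs0 => h0 (by simpa [hs0] using (hS j hj s hs).2), (hS j hj s hs).1⟩
  linarith

lemma exists_norm_apply_zero_le_of_zeros {D σ ℓ : ℝ} (hσ : 0 ≤ σ) (hD : σ < D) (hℓ : 0 < ℓ) :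
    ∃ J₀ : ℕ, ∀ J : ℕ, J₀ ≤ J → ∀ (F : ℂ → ℂ) (A : ℝ), Differentiable ℂ F → 1 ≤ A →
      (∀ z, ‖F z‖ ≤ A * Real.exp ((D - σ) * ‖z‖ + Real.pi * σ * |z.im|)) →
      (∀ a : ℝ, -(J * ℓ) ≤ a → a + ℓ ≤ J * ℓ → ∃ S : Finset ℝ, D * ℓ ≤ S.card ∧
        ∀ s ∈ S, a ≤ s ∧ s < a + ℓ ∧ F s = 0) →
      ‖F 0‖ ≤ A * Real.exp (-((D - σ) / 2 * (J * ℓ))) := by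
  obtain ⟨J₀, hJ₀⟩ := eventually_atTop.1 ((eventually_mul_one_add_log_le (2 * D)
    (half_pos (sub_pos.2 hD))).and (eventually_ge_atTop 1))
  refine ⟨J₀, fun J hJ F A hF hA hbound hzeros => ?_⟩
  obtain ⟨hlogJ, hJ1⟩ := hJ₀ J hJ
  rcases eq_or_ne (F 0) 0 with h0 | h0
  · rw [h0, norm_zero]; positivity
  have hS (j : ℤ) : ∃ S : Finset ℝ, j ∈ Finset.Ico (-J : ℤ) J →
      D * ℓ ≤ S.card ∧ ∀ s ∈ S, s ∈ Set.Ico (j * ℓ) ((j + 1) * ℓ) ∧ F s = 0 := by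
    by_cases hj : j ∈ Finset.Ico (-J : ℤ) J
    · obtain ⟨hlo, hhi⟩ := Finset.mem_Ico.1 hj
      have hleft : (-J : ℝ) * ℓ ≤ j * ℓ := by gcongr; exact_mod_cast hlo
      have hright : (j + 1 : ℝ) * ℓ ≤ J * ℓ := by gcongr; exact_mod_cast hhi
      obtain ⟨S, hcard, hmem⟩ := hzeros (j * ℓ) (by linarith) (by linarith)
      refine ⟨S, fun _ => ⟨hcard, fun s hs => ?_⟩⟩
      obtain ⟨hlow, hupp, hs0⟩ := hmem s hs
      exact ⟨⟨hlow, by linarith⟩, hs0⟩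
    · exact ⟨∅, fun h => absurd h hj⟩
  choose S hS using hS
  have hjensen := log_norm_apply_zero_le_circleAverage_sub hF h0 hJ1 hℓ
    (mul_nonneg (hσ.trans hD.le) hℓ.le) (fun j hj => (hS j hj).1) fun j hj => (hS j hj).2
  have hgrowth := circleAverage_log_norm_le hF (R := J * ℓ) hA (sub_nonneg.2 hD.le)
    (by positivity : 0 ≤ Real.pi * σ) (by positivity) hbound
  have hpi : Real.pi * σ * (2 * (J * ℓ) / Real.pi) = 2 * σ * (J * ℓ) := by field_simp
  have hlog : Real.log ‖F 0‖ ≤ Real.log A - (D - σ) / 2 * (J * ℓ) := by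
    have hscaled := mul_le_mul_of_nonneg_left hlogJ hℓ.le
    rw [hpi] at hgrowth
    linarith
  rwa [Real.log_le_iff_le_exp (norm_pos_iff.2 h0), sub_eq_add_neg, Real.exp_add,
    Real.exp_log (by linarith)] at hlog

lemma norm_log_one_add_le {z : ℂ} (hz : 0 ≤ z.re) :
    ‖Complex.log (1 + z)‖ ≤ 2 * √‖z‖ + Real.pi := by
  have hone : 1 ≤ ‖1 + z‖ := le_trans (by simp [hz]) (Complex.re_le_norm _)
  have hsq : ‖1 + z‖ ≤ (1 + √‖z‖) ^ 2 := by
    have hadd := norm_add_le 1 z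
    rw [norm_one] at hadd
    nlinarith [Real.sq_sqrt (norm_nonneg z), Real.sqrt_nonneg ‖z‖]
  have hre : |(Complex.log (1 + z)).re| ≤ 2 * √‖z‖ := by
    rw [Complex.log_re, abs_of_nonneg (Real.log_nonneg hone)]
    calc Real.log ‖1 + z‖ ≤ Real.log ((1 + √‖z‖) ^ 2) :=
          Real.log_le_log (by positivity) hsq
      _ = 2 * Real.log (1 + √‖z‖) := by rw [Real.log_pow]; norm_cast
      _ ≤ 2 * √‖z‖ := by
        linarith [Real.log_le_sub_one_of_pos (x := 1 + √‖z‖) (by positivity)]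
  have him : |(Complex.log (1 + z)).im| ≤ Real.pi := by
    rw [Complex.log_im]
    exact Complex.abs_arg_le_pi _
  exact (Complex.norm_le_abs_re_add_abs_im _).trans (add_le_add hre him)

lemma norm_one_add_mul_log_le {z : ℂ} (hz : 0 ≤ z.re) (hz1 : 1 ≤ ‖z‖) :
    ‖(1 + z) * Complex.log (1 + z)‖ ≤ (4 + 2 * Real.pi) * ‖z‖ ^ (3 / 2 : ℝ) := by
  have hsqrt : 1 ≤ √‖z‖ := Real.one_le_sqrt.2 hz1
  have hpow : ‖z‖ ^ (3 / 2 : ℝ) = ‖z‖ * √‖z‖ := by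
    rw [Real.sqrt_eq_rpow, ← Real.rpow_one_add' (norm_nonneg z) (by norm_num)]
    norm_num
  have hadd : ‖1 + z‖ ≤ 2 * ‖z‖ := by
    have := norm_add_le 1 z
    rw [norm_one] at this
    linarith
  have hlog : ‖Complex.log (1 + z)‖ ≤ (2 + Real.pi) * √‖z‖ := by
    nlinarith [norm_log_one_add_le hz, Real.pi_pos]
  rw [norm_mul, hpow]
  calc ‖1 + z‖ * ‖Complex.log (1 + z)‖ ≤ 2 * ‖z‖ * ((2 + Real.pi) * √‖z‖) := by gcongr
    _ = (4 + 2 * Real.pi) * (‖z‖ * √‖z‖) := by ring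

lemma neg_re_one_add_mul_log_le (x : ℝ) :
    -((1 + x * Complex.I) * Complex.log (1 + x * Complex.I)).re ≤ Real.pi / 2 * |x| := by
  have hre : ((1 + x * Complex.I) * Complex.log (1 + x * Complex.I)).re =
      Real.log ‖1 + x * Complex.I‖ - x * (1 + x * Complex.I).arg := by
    simp [Complex.mul_re, Complex.log_re, Complex.log_im]
  have hlog : 0 ≤ Real.log ‖1 + x * Complex.I‖ :=
    Real.log_nonneg (le_trans (by simp) (Complex.re_le_norm _))
  have harg : |(1 + x * Complex.I).arg| ≤ Real.pi / 2 := by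
    rw [Complex.abs_arg_le_pi_div_two_iff]
    simp
  have hmul : x * (1 + x * Complex.I).arg ≤ |x| * (Real.pi / 2) := by
    refine (le_abs_self _).trans ?_
    rw [abs_mul]
    gcongr
  linarith

lemma re_one_add_mul_log_ofReal {r : ℝ} (hr : 0 ≤ r) :
    ((1 + r) * Complex.log (1 + r)).re = (1 + r) * Real.log (1 + r) := by
  have hlog : Complex.log (1 + r) = (Real.log (1 + r) : ℝ) := by
    rw [Complex.ofReal_log (by linarith)]
    push_cast
    rfl
  rw [hlog]
  simp [Complex.mul_re]

lemma tendsto_mul_sub_mul_log_atBot (B : ℝ) {k : ℝ} (hk : 0 < k) :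
    Tendsto (fun x : ℝ => B * x - k * ((1 + x) * Real.log (1 + x))) atTop atBot := by
  have hlog : Tendsto (fun x : ℝ => Real.log (1 + x)) atTop atTop :=
    Real.tendsto_log_atTop.comp (tendsto_atTop_add_const_left _ 1 tendsto_id)
  refine tendsto_atBot_mono' _ ?_ tendsto_neg_atTop_atBot
  filter_upwards [hlog.eventually_ge_atTop ((B + 1) / k), hlog.eventually_ge_atTop 0,
    eventually_ge_atTop 0] with x hx hx0 hx'
  rw [div_le_iff₀ hk] at hx
  nlinarith [mul_nonneg hk.le hx0, mul_le_mul_of_nonneg_right hx hx']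

/-- The multiplier `exp (-k (1 + z) log (1 + z) + i b z)`. On the right half-plane it decays
superexponentially along the real axis while growing only exponentially along the imaginary one;
the factor `exp (i b z)` shifts this growth to one side. -/
def superexpMultiplier (k b : ℝ) (z : ℂ) : ℂ :=
  Complex.exp (-(k * ((1 + z) * Complex.log (1 + z))) + Complex.I * b * z)

lemma norm_superexpMultiplier (k b : ℝ) (z : ℂ) :
    ‖superexpMultiplier k b z‖ =
      Real.exp (-k * ((1 + z) * Complex.log (1 + z)).re - b * z.im) := by
  rw [superexpMultiplier, Complex.norm_exp]
  congr 1
  rw [Complex.add_re, Complex.neg_re, Complex.re_ofReal_mul, mul_assoc, Complex.I_mul_re,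
    Complex.im_ofReal_mul]
  ring

lemma differentiableAt_superexpMultiplier (k b : ℝ) {z : ℂ} (hz : 0 ≤ z.re) :
    DifferentiableAt ℂ (superexpMultiplier k b) z := by
  have hslit : 1 + z ∈ Complex.slitPlane := Or.inl (by simp; linarith)
  have : DifferentiableAt ℂ (fun z : ℂ => Complex.log (1 + z)) z :=
    DifferentiableAt.clog (by fun_prop) hslit
  unfold superexpMultiplier
  exact DifferentiableAt.cexp (by fun_prop)

lemma norm_superexpMultiplier_le {k : ℝ} (hk : 0 ≤ k) (b : ℝ) {z : ℂ} (hz : 0 ≤ z.re)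
    (hz1 : 1 ≤ ‖z‖) : ‖superexpMultiplier k b z‖ ≤
      Real.exp ((k * (4 + 2 * Real.pi) + |b|) * ‖z‖ ^ (3 / 2 : ℝ)) := by
  have hle : ‖z‖ ≤ ‖z‖ ^ (3 / 2 : ℝ) := Real.self_le_rpow_of_one_le hz1 (by norm_num)
  have hlog := mul_le_mul_of_nonneg_left ((abs_le.1 (Complex.abs_re_le_norm _)).1.trans'
    (neg_le_neg (norm_one_add_mul_log_le hz hz1))) hk
  have him : -(b * z.im) ≤ |b| * ‖z‖ ^ (3 / 2 : ℝ) := calc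
    -(b * z.im) ≤ |b| * |z.im| := by rw [← abs_mul]; exact neg_le_abs _
    _ ≤ |b| * ‖z‖ ^ (3 / 2 : ℝ) := by gcongr; exact (Complex.abs_im_le_norm z).trans hle
  rw [norm_superexpMultiplier, Real.exp_le_exp]
  linarith

lemma norm_superexpMultiplier_mul_I_le {k : ℝ} (hk : 0 ≤ k) (b x : ℝ) :
    ‖superexpMultiplier k b (x * Complex.I)‖ ≤ Real.exp (k * (Real.pi / 2) * |x| - b * x) := by
  have hlog := mul_le_mul_of_nonneg_left (neg_re_one_add_mul_log_le x) hk
  have him : (x * Complex.I).im = x := by simp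
  rw [norm_superexpMultiplier, Real.exp_le_exp, him]
  linarith

lemma superpolynomialDecay_mul_superexpMultiplier {f : ℝ → ℂ} {A B k : ℝ} (hk : 0 < k) (b : ℝ)
    (hf : ∀ x, 0 ≤ x → ‖f x‖ ≤ A * Real.exp (B * x)) :
    Asymptotics.SuperpolynomialDecay atTop Real.exp
      fun x : ℝ => ‖f x * superexpMultiplier k b x‖ := by
  intro n
  have hlim := (Real.tendsto_exp_atBot.comp
    (tendsto_mul_sub_mul_log_atBot (n + B) hk)).const_mul A
  rw [mul_zero] at hlim
  refine squeeze_zero' (Eventually.of_forall fun x => by positivity) ?_ hlim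
  filter_upwards [eventually_ge_atTop 0] with x hx
  rw [norm_mul, norm_superexpMultiplier, re_one_add_mul_log_ofReal hx, Complex.ofReal_im,
    ← Real.exp_nat_mul]
  calc _ ≤ Real.exp (n * x) * (A * Real.exp (B * x) *
        Real.exp (-k * ((1 + x) * Real.log (1 + x)) - b * 0)) := by gcongr; exact hf x hx
    _ = A * (Real.exp (n * x) * Real.exp (B * x) *
        Real.exp (-k * ((1 + x) * Real.log (1 + x)) - b * 0)) := by ring
    _ = A * Real.exp ((n + B) * x - k * ((1 + x) * Real.log (1 + x))) := by
      rw [← Real.exp_add, ← Real.exp_add]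
      ring_nf

lemma mul_superexpMultiplier_isBigO {f : ℂ → ℂ} {A B k : ℝ} (hk : 0 ≤ k) (b : ℝ)
    (hf : ∀ z, ‖f z‖ ≤ A * Real.exp (B * ‖z‖)) :
    (fun z => f z * superexpMultiplier k b z) =O[Bornology.cobounded ℂ ⊓ 𝓟 {z | 0 < z.re}]
      fun z => Real.exp ((|B| + (k * (4 + 2 * Real.pi) + |b|)) * ‖z‖ ^ (3 / 2 : ℝ)) := by
  have hA : 0 ≤ A := by simpa using (norm_nonneg _).trans (hf 0)
  have hnorm : ∀ᶠ z : ℂ in Bornology.cobounded ℂ, 1 ≤ ‖z‖ :=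
    tendsto_norm_cobounded_atTop.eventually_ge_atTop 1
  refine Asymptotics.IsBigO.of_bound A ?_
  filter_upwards [hnorm.filter_mono inf_le_left, mem_inf_of_right (mem_principal_self _)]
    with z hz1 hz0
  rw [norm_mul, Real.norm_of_nonneg (Real.exp_pos _).le, add_mul, Real.exp_add, ← mul_assoc]
  gcongr
  · refine (hf z).trans ?_
    gcongr
    · exact le_abs_self B
    · exact Real.self_le_rpow_of_one_le hz1 (by norm_num)
  · exact norm_superexpMultiplier_le hk b (le_of_lt hz0) hz1

lemma norm_mul_superexpMultiplier_mul_I_le {H : ℂ → ℂ} {M c : ℝ} (hc : 0 < c)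
    (hM : ∀ t : ℝ, ‖H t‖ ≤ M) (hdecay : ∀ t : ℝ, 0 ≤ t → ‖H t‖ ≤ M * Real.exp (-(c * t)))
    (x : ℝ) :
    ‖H (Complex.I * (x * Complex.I)) *
      superexpMultiplier (c / Real.pi) (c / 2) (x * Complex.I)‖ ≤ M := by
  have hkc : c / Real.pi * (Real.pi / 2) = c / 2 := by field_simp
  have hrot : Complex.I * (x * Complex.I) = ((-x : ℝ) : ℂ) := by
    push_cast
    linear_combination (x : ℂ) * Complex.I_mul_I
  have hmul := norm_superexpMultiplier_mul_I_le (by positivity : 0 ≤ c / Real.pi) (c / 2) x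
  have hM0 : 0 ≤ M := (norm_nonneg _).trans (hM 0)
  rw [hkc] at hmul
  rw [norm_mul, hrot]
  rcases le_total 0 x with hx | hx
  · rw [abs_of_nonneg hx, sub_self, Real.exp_zero] at hmul
    simpa using mul_le_mul (hM (-x)) hmul (norm_nonneg _) hM0
  · refine (mul_le_mul (hdecay (-x) (by linarith)) hmul (norm_nonneg _)
      (by positivity)).trans_eq ?_
    rw [abs_of_nonpos hx, mul_assoc, ← Real.exp_add]
    ring_nf
    simp

-- Multiplying `z ↦ H (i z)` by a superexponentially decaying multiplier whose growth on the
-- imaginary axis is absorbed by the decay of `H` brings Phragmén-Lindelöf to bear.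
lemma eq_zero_of_exponential_decay {H : ℂ → ℂ} (hH : Differentiable ℂ H) {A B M c : ℝ}
    (hc : 0 < c) (hA : ∀ z, ‖H z‖ ≤ A * Real.exp (B * ‖z‖)) (hM : ∀ t : ℝ, ‖H t‖ ≤ M)
    (hdecay : ∀ t : ℝ, 0 ≤ t → ‖H t‖ ≤ M * Real.exp (-(c * t))) : H = 0 := by
  have hk : 0 < c / Real.pi := by positivity
  set f : ℂ → ℂ := fun z => H (Complex.I * z) * superexpMultiplier (c / Real.pi) (c / 2) z
  have hexp (z : ℂ) : ‖H (Complex.I * z)‖ ≤ A * Real.exp (B * ‖z‖) := by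
    simpa using hA (Complex.I * z)
  have hdiff : DiffContOnCl ℂ f {z | 0 < z.re} := by
    refine DifferentiableOn.diffContOnCl fun z hz => ?_
    rw [Complex.closure_setOfPred_lt_re] at hz
    exact ((hH.comp (by fun_prop : Differentiable ℂ fun z => Complex.I * z) z).mul
      (differentiableAt_superexpMultiplier _ _ hz)).differentiableWithinAt
  have hzero : Set.EqOn f 0 {z | 0 ≤ z.re} :=
    PhragmenLindelof.eq_zero_on_right_half_plane_of_superexponential_decay hdiff
      ⟨3 / 2, by norm_num, _, mul_superexpMultiplier_isBigO hk.le _ hexp⟩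
      (superpolynomialDecay_mul_superexpMultiplier hk _ fun x hx => by
        simpa [abs_of_nonneg hx] using hexp x)
      ⟨M, norm_mul_superexpMultiplier_mul_I_le hc hM hdecay⟩
  have hupper (z : ℂ) (hz : 0 ≤ z.im) : H z = 0 := by
    have hfz : f (-Complex.I * z) = 0 := hzero (by simpa using hz)
    have hrot : Complex.I * (-Complex.I * z) = z := by
      linear_combination (-z) * Complex.I_mul_I
    rw [← hrot]
    exact (mul_eq_zero.1 hfz).resolve_right (Complex.exp_ne_zero _)
  have han : AnalyticOnNhd ℂ H Set.univ := hH.differentiableOn.analyticOnNhd isOpen_univ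
  refine han.eq_of_eventuallyEq (z₀ := Complex.I) analyticOnNhd_const ?_
  filter_upwards [Complex.continuous_im.continuousAt.eventually
    (lt_mem_nhds (by simp : (0 : ℝ) < Complex.I.im))] with z hz
  exact hupper z (le_of_lt hz)

section Plane

variable {E : Type*} [NormedAddCommGroup E] [InnerProductSpace ℝ E]
  [Fact (Module.finrank ℝ E = 2)] {w e : E}

lemma eq_zero_of_inner_eq_zero_of_orthogonal {z : E} (hw : w ≠ 0) (he : e ≠ 0)
    (hwe : ⟪w, e⟫ = 0) (hzw : ⟪z, w⟫ = 0) (hze : ⟪z, e⟫ = 0) : z = 0 := by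
  have : FiniteDimensional ℝ E := .of_fact_finrank_eq_succ 1
  by_contra hz
  have hindep : LinearIndependent ℝ ![z, w, e] := by
    refine linearIndependent_of_ne_zero_of_inner_eq_zero (𝕜 := ℝ) ?_ ?_
    · simp [Fin.forall_fin_succ, hz, hw, he]
    · intro i j hij
      fin_cases i <;> fin_cases j <;> simp_all [real_inner_comm]
  have hcard := hindep.fintype_card_le_finrank
  rw [Fact.out (p := Module.finrank ℝ E = 2)] at hcard
  simp at hcard

lemma exists_ne_zero_inner_eq_zero (hw : w ≠ 0) : ∃ e : E, e ≠ 0 ∧ ⟪w, e⟫ = 0 := by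
  have hfinrank : Module.finrank ℝ (ℝ ∙ w)ᗮ = 1 :=
    Submodule.finrank_orthogonal_span_singleton hw
  have : FiniteDimensional ℝ E := .of_fact_finrank_eq_succ 1
  obtain ⟨⟨e, he⟩, he0⟩ :=
    (Module.finrank_pos_iff_exists_ne_zero (R := ℝ)).1 (hfinrank ▸ one_pos)
  exact ⟨e, fun h => he0 (Subtype.ext h), (Submodule.mem_orthogonal_singleton_iff_inner_right).1 he⟩

lemma eq_smul_add_smul_of_orthogonal (hw : w ≠ 0) (he : e ≠ 0) (hwe : ⟪w, e⟫ = 0) (x : E) :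
    x = (⟪x, w⟫ / ‖w‖ ^ 2) • w + (⟪x, e⟫ / ‖e‖ ^ 2) • e := by
  have hw' := norm_ne_zero_iff.2 hw
  have he' := norm_ne_zero_iff.2 he
  rw [← sub_eq_zero]
  refine eq_zero_of_inner_eq_zero_of_orthogonal hw he hwe ?_ ?_ <;>
    simp only [inner_sub_left, inner_add_left, real_inner_smul_left, real_inner_self_eq_norm_sq,
      hwe, real_inner_comm w e] <;>
    field_simp <;> ring

end Plane

section Polar

variable {E : Type*} [NormedAddCommGroup E] [InnerProductSpace ℝ E] {D : Set E} {v w e : E}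

/-- The polar set `D°` of `D`. -/
def polarSet (D : Set E) : Set E := {x | ∀ y ∈ D, ⟪x, y⟫ ≤ 1}

lemma isClosed_polarSet (D : Set E) : IsClosed (polarSet D) := by
  simp only [polarSet, Set.ofPred_forall]
  exact isClosed_biInter fun y _ => isClosed_le (by fun_prop) continuous_const

lemma isBounded_polarSet (hD0 : 0 ∈ interior D) : Bornology.IsBounded (polarSet D) := by
  obtain ⟨r, hr, hrD⟩ := Metric.mem_nhds_iff.1 (mem_interior_iff_mem_nhds.1 hD0)
  refine isBounded_iff_forall_norm_le.2 ⟨2 / r, fun x hx => ?_⟩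
  rcases eq_or_ne x 0 with rfl | hx0
  · rw [norm_zero]
    positivity
  have hxpos := norm_pos_iff.2 hx0
  have hmem : (r / 2 / ‖x‖) • x ∈ D := hrD <| by
    rw [mem_ball_zero_iff, norm_smul, Real.norm_of_nonneg (by positivity),
      div_mul_cancel₀ _ hxpos.ne']
    linarith
  have hinner := hx _ hmem
  rw [inner_smul_right, real_inner_self_eq_norm_sq] at hinner
  rw [le_div_iff₀ hr]
  have hcancel : r / 2 / ‖x‖ * ‖x‖ ^ 2 = r / 2 * ‖x‖ := by field_simp
  linarith

lemma isCompact_polarSet [FiniteDimensional ℝ E] (hD0 : 0 ∈ interior D) :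
    IsCompact (polarSet D) := by
  have := FiniteDimensional.proper_real E
  exact Metric.isCompact_of_isClosed_isBounded (isClosed_polarSet D) (isBounded_polarSet hD0)

lemma inner_le_gauge_of_mem_polarSet (hD0 : 0 ∈ interior D) (hv : v ∈ polarSet D) (x : E) :
    ⟪v, x⟫ ≤ gauge D x := by
  refine le_of_forall_gt_imp_ge_of_dense fun t ht => ?_
  obtain ⟨b, hb, hbt, y, hy, rfl⟩ :=
    exists_lt_of_gauge_lt (absorbent_nhds_zero (mem_interior_iff_mem_nhds.1 hD0)) ht
  simp only [inner_smul_right]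
  nlinarith [hv y hy]

lemma exists_mem_polarSet_inner_eq_gauge [CompleteSpace E] (hDconvex : Convex ℝ D)
    (hD0 : 0 ∈ interior D) {x : E} (hx : 0 < gauge D x) :
    ∃ v ∈ polarSet D, ⟪v, x⟫ = gauge D x := by
  set x₀ := (gauge D x)⁻¹ • x with hx₀
  have hx₀1 : gauge D x₀ = 1 := by
    rw [hx₀, gauge_smul_of_nonneg (by positivity), smul_eq_mul, inv_mul_cancel₀ hx.ne']
  have hnot : x₀ ∉ interior D := fun h =>
    ((gauge_lt_one_iff_mem_interior hDconvex (mem_interior_iff_mem_nhds.1 hD0)).2 h).ne hx₀1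
  obtain ⟨f, hf⟩ := geometric_hahn_banach_open_point hDconvex.interior isOpen_interior hnot
  have hf0 : 0 < f x₀ := by simpa using hf 0 hD0
  have hle : D ⊆ {y | f y ≤ f x₀} := by
    refine subset_closure.trans ?_
    rw [← hDconvex.closure_interior_eq_closure_of_nonempty_interior ⟨0, hD0⟩]
    exact closure_minimal (fun y hy => (hf y hy).le) (isClosed_le f.continuous continuous_const)
  have hdual (y : E) : ⟪(InnerProductSpace.toDual ℝ E).symm f, y⟫ = f y :=
    InnerProductSpace.toDual_symm_apply
  refine ⟨(f x₀)⁻¹ • (InnerProductSpace.toDual ℝ E).symm f, fun y hy => ?_, ?_⟩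
  · rw [real_inner_smul_left, hdual, inv_mul_le_iff₀ hf0, mul_one]
    exact hle hy
  · have hxx₀ : x = gauge D x • x₀ := by rw [hx₀, smul_inv_smul₀ hx.ne']
    rw [real_inner_smul_left, hdual, inv_mul_eq_div, div_eq_iff hf0.ne']
    nth_rw 1 [hxx₀]
    rw [map_smul, smul_eq_mul]

lemma mem_extremePoints_of_forall_eq {F : Type*} [NormedAddCommGroup F] [NormedSpace ℝ F]
    {K : Set F} {x : F} (hx : x ∈ K) (l m : StrongDual ℝ F) (hmax : ∀ y ∈ K, l y ≤ l x)
    (hunique : ∀ y ∈ K, l y = l x → m x ≤ m y → y = x) : x ∈ Set.extremePoints ℝ K := by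
  have hface : IsExposed ℝ K {y ∈ K | l y = l x} := fun _ => ⟨l, by
    ext y
    exact and_congr_right fun hy =>
      ⟨fun h z hz => (hmax z hz).trans h.ge, fun h => le_antisymm (hmax y hy) (h x hx)⟩⟩
  refine hface.isExtreme.extremePoints_subset_extremePoints
    (exposedPoints_subset_extremePoints ⟨⟨hx, rfl⟩, m, fun y hy => ⟨?_, hunique y hy.1 hy.2⟩⟩)
  by_contra! hlt
  exact hlt.ne' (congrArg m (hunique y hy.1 hy.2 hlt.le))

lemma exists_inner_eq_one_of_mem_extremePoints_polarSet [Nontrivial E] (hD : IsCompact D)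
    (hD0 : 0 ∈ interior D) (hv : v ∈ Set.extremePoints ℝ (polarSet D)) :
    ∃ w ∈ D, ⟪v, w⟫ = 1 := by
  by_contra! hne
  refine Set.disjoint_left.1 (disjoint_interior_extremePoints (polarSet D)) ?_ hv
  obtain ⟨w, hwD, hmax⟩ := hD.exists_isMaxOn ⟨0, interior_subset hD0⟩
    (f := fun y => ⟪v, y⟫) (by fun_prop)
  obtain ⟨R, hR⟩ := isBounded_iff_forall_norm_le.1 hD.isBounded
  have hR0 : 0 ≤ R := (norm_nonneg _).trans (hR w hwD)
  have hgap : 0 < 1 - ⟪v, w⟫ := sub_pos.2 (lt_of_le_of_ne (hv.1 w hwD) (hne w hwD))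
  refine mem_interior.2 ⟨ball v ((1 - ⟪v, w⟫) / (R + 1)), fun x hx y hy => ?_, isOpen_ball,
    mem_ball_self (by positivity)⟩
  rw [mem_ball, dist_eq_norm, lt_div_iff₀ (by positivity)] at hx
  have hmaxy : ⟪v, y⟫ ≤ ⟪v, w⟫ := hmax hy
  have hdiff : ⟪x - v, y⟫ ≤ ‖x - v‖ * (R + 1) := calc
    ⟪x - v, y⟫ ≤ ‖x - v‖ * ‖y‖ := real_inner_le_norm _ _
    _ ≤ ‖x - v‖ * (R + 1) := by gcongr; linarith [hR y hy]
  rw [inner_sub_left] at hdiff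
  linarith

lemma gauge_eq_one_of_inner_eq_one (hD0 : 0 ∈ interior D) (hv : v ∈ polarSet D) (hw : w ∈ D)
    (hvw : ⟪v, w⟫ = 1) : gauge D w = 1 :=
  le_antisymm (gauge_le_one_of_mem hw) (hvw ▸ inner_le_gauge_of_mem_polarSet hD0 hv w)

lemma gauge_pos_of_isBounded (hDbdd : Bornology.IsBounded D) (hD0 : 0 ∈ interior D) {x : E}
    (hx : x ≠ 0) : 0 < gauge D x :=
  (gauge_pos (absorbent_nhds_zero (mem_interior_iff_mem_nhds.1 hD0))
    (NormedSpace.isVonNBounded_of_isBounded ℝ hDbdd)).2 hx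

end Polar

section FiniteVolume

variable {E : Type*} [NormedAddCommGroup E] [NormedSpace ℝ E] {D : Set E} {r : ℝ} {x : E}

lemma ball_smul_subset_of_convex (hDconvex : Convex ℝ D) (hrD : ball 0 r ⊆ D) (hx : x ∈ D)
    {s : ℝ} (hs0 : 0 ≤ s) (hs : s ≤ 1 / 2) : ball (s • x) (r / 2) ⊆ D := by
  intro y hy
  have hpos : 0 < 1 - s := by linarith
  have hball : (1 - s)⁻¹ • (y - s • x) ∈ D := by
    refine hrD ?_
    rw [mem_ball, dist_eq_norm] at hy
    rw [mem_ball_zero_iff, norm_smul, Real.norm_of_nonneg (by positivity), inv_mul_lt_iff₀ hpos]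
    nlinarith [norm_nonneg (y - s • x)]
  have hcombo := hDconvex hx hball hs0 hpos.le (by ring)
  rwa [smul_inv_smul₀ hpos.ne', add_sub_cancel] at hcombo

lemma pairwiseDisjoint_ball_smul (hr : 0 ≤ r) (hx : x ≠ 0) (s : Set ℕ) :
    s.PairwiseDisjoint fun j => ball ((j * r / ‖x‖) • x) (r / 2) := by
  intro i _ j _ hij
  refine ball_disjoint_ball ?_
  rw [dist_eq_norm, ← sub_smul, norm_smul, ← sub_div, ← sub_mul, norm_div, norm_norm,
    div_mul_cancel₀ _ (norm_ne_zero_iff.2 hx), norm_mul, Real.norm_of_nonneg hr, Real.norm_eq_abs,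
    add_halves]
  have hone : (1 : ℝ) ≤ |(i : ℝ) - j| := by
    exact_mod_cast Int.one_le_abs (by omega : (i : ℤ) - j ≠ 0)
  exact le_mul_of_one_le_left hr hone

lemma isBounded_of_convex_of_measure_lt_top [MeasurableSpace E] [BorelSpace E]
    (μ : Measure E) [μ.IsAddHaarMeasure] (hDconvex : Convex ℝ D) (hDfin : μ D < ⊤)
    (hD0 : 0 ∈ interior D) : Bornology.IsBounded D := by
  obtain ⟨r, hr, hrD⟩ := Metric.mem_nhds_iff.1 (mem_interior_iff_mem_nhds.1 hD0)
  obtain ⟨N, hN⟩ := ENNReal.exists_nat_mul_gt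
    (measure_ball_pos μ (0 : E) (by positivity : 0 < r / 2)).ne' hDfin.ne
  refine isBounded_iff_forall_norm_le.2 ⟨2 * r * N, fun x hx => ?_⟩
  by_contra! hlt
  have hxpos : 0 < ‖x‖ := lt_of_le_of_lt (by positivity) hlt
  have hsub : (⋃ j ∈ Finset.range N, ball ((j * r / ‖x‖) • x) (r / 2)) ⊆ D := by
    refine Set.iUnion₂_subset fun j hj =>
      ball_smul_subset_of_convex hDconvex hrD hx (by positivity) ?_
    have : (j : ℝ) ≤ N := by exact_mod_cast (Finset.mem_range.1 hj).le
    rw [div_le_iff₀ hxpos]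
    nlinarith
  have hmeasure := measure_mono (μ := μ) hsub
  rw [measure_biUnion_finset (pairwiseDisjoint_ball_smul hr.le (norm_pos_iff.1 hxpos) _)
    fun _ _ => measurableSet_ball] at hmeasure
  simp only [Measure.addHaar_ball_center, Finset.sum_const, Finset.card_range,
    nsmul_eq_mul] at hmeasure
  exact absurd hmeasure (not_le.2 hN)

end FiniteVolume

section SideGradient

variable {E : Type*} [NormedAddCommGroup E] [InnerProductSpace ℝ E] {D : Set E} {v w e : E}

/-- The thin planar cone spanned by `w` and `w + τ • e`, that is, the directions close to `w` on
the side of `e`. -/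
def sideCone (w e : E) (τ : ℝ) : Set E :=
  {x | ∃ α β : ℝ, 0 ≤ β ∧ β ≤ τ * α ∧ x = α • w + β • e}

/-- `v` is the gradient of the positively homogeneous function `p` at `w` from the side of `e`.
The definition is that of a strict derivative, so that it controls differences of `p` between
points of a thin cone far away from the origin. -/
def IsSideGradient (p : E → ℝ) (w e v : E) : Prop :=
  ∀ κ > 0, ∃ τ > 0, ∀ x ∈ sideCone w e τ, ∀ y ∈ sideCone w e τ,
    |p x - p y - ⟪v, x - y⟫| ≤ κ * ‖x - y‖

lemma gauge_sub_gauge_sub_inner_le (hD0 : 0 ∈ interior D) {u x : E} (hu : u ∈ polarSet D)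
    (hux : ⟪u, x⟫ = gauge D x) {κ : ℝ} (huv : ‖u - v‖ ≤ κ) (y : E) :
    gauge D x - gauge D y - ⟪v, x - y⟫ ≤ κ * ‖x - y‖ := by
  have huy := inner_le_gauge_of_mem_polarSet hD0 hu y
  have hinner : ⟪u - v, x - y⟫ ≤ κ * ‖x - y‖ := (real_inner_le_norm _ _).trans (by gcongr)
  rw [inner_sub_left, inner_sub_right u] at hinner
  linarith

-- Subgradients at `w + β • e` accumulate, as `β` decreases to `0`, only at subgradients at `w`
-- which maximize `⟪·, e⟫`.
lemma eventually_norm_sub_le_of_inner_eq_gauge [FiniteDimensional ℝ E] (hDconvex : Convex ℝ D)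
    (hD0 : 0 ∈ interior D) (hv : v ∈ polarSet D) (hvw : ⟪v, w⟫ = gauge D w)
    (hunique : ∀ u ∈ polarSet D, ⟪u, w⟫ = gauge D w → ⟪v, e⟫ ≤ ⟪u, e⟫ → u = v)
    {κ : ℝ} (hκ : 0 < κ) :
    ∀ᶠ β in 𝓝[>] (0 : ℝ), ∀ u ∈ polarSet D,
      ⟪u, w + β • e⟫ = gauge D (w + β • e) → ‖u - v‖ ≤ κ := by
  by_contra hfreq
  obtain ⟨β, hβ, hfar⟩ := exists_seq_forall_of_frequently (not_eventually.1 hfreq)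
  push Not at hfar
  choose u huD hug huv using hfar
  obtain ⟨a, haD, φ, hφ, hlim⟩ := (isCompact_polarSet hD0).tendsto_subseq huD
  obtain ⟨hβ0, hβpos⟩ := tendsto_nhdsWithin_iff.1 (hβ.comp hφ.tendsto_atTop)
  have hxlim : Tendsto (fun n => w + β (φ n) • e) atTop (𝓝 w) := by
    simpa using tendsto_const_nhds.add (hβ0.smul_const e)
  have haw : ⟪a, w⟫ = gauge D w := by
    have hgauge := ((continuous_gauge hDconvex (mem_interior_iff_mem_nhds.1 hD0)).tendsto w).comp
      hxlim
    exact tendsto_nhds_unique (hlim.inner hxlim) (hgauge.congr fun n => (hug (φ n)).symm)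
  have hae : ⟪v, e⟫ ≤ ⟪a, e⟫ := by
    refine ge_of_tendsto (hlim.inner tendsto_const_nhds) (hβpos.mono fun n (hn : 0 < β (φ n)) => ?_)
    change ⟪v, e⟫ ≤ ⟪u (φ n), e⟫
    have hvx := inner_le_gauge_of_mem_polarSet hD0 hv (w + β (φ n) • e)
    have huw := inner_le_gauge_of_mem_polarSet hD0 (huD (φ n)) w
    rw [← hug, inner_add_right, inner_add_right, inner_smul_right, inner_smul_right] at hvx
    exact le_of_mul_le_mul_left (by linarith) hn
  have hκ' : κ ≤ ‖a - v‖ :=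
    ge_of_tendsto (hlim.sub_const v).norm (Eventually.of_forall fun n => (huv (φ n)).le)
  rw [hunique a haD haw hae, sub_self, norm_zero] at hκ'
  linarith

lemma smul_add_smul_ne_zero (hw : w ≠ 0) (hwe : ⟪w, e⟫ = 0) {α : ℝ} (hα : α ≠ 0) (β : ℝ) :
    α • w + β • e ≠ 0 := by
  intro h
  have hinner := congrArg (fun z => ⟪w, z⟫) h
  simp only [inner_add_right, inner_smul_right, hwe, mul_zero, add_zero, inner_zero_right,
    real_inner_self_eq_norm_sq] at hinner
  exact mul_ne_zero hα (pow_ne_zero 2 (norm_ne_zero_iff.2 hw)) hinner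

lemma isSideGradient_gauge [FiniteDimensional ℝ E] (hDconvex : Convex ℝ D)
    (hDbdd : Bornology.IsBounded D) (hD0 : 0 ∈ interior D) (hw : w ≠ 0) (hwe : ⟪w, e⟫ = 0)
    (hv : v ∈ polarSet D) (hvw : ⟪v, w⟫ = gauge D w)
    (hunique : ∀ u ∈ polarSet D, ⟪u, w⟫ = gauge D w → ⟪v, e⟫ ≤ ⟪u, e⟫ → u = v) :
    IsSideGradient (gauge D) w e v := by
  intro κ hκ
  obtain ⟨τ, hτ, hnear⟩ := mem_nhdsGT_iff_exists_Ioc_subset.1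
    (eventually_norm_sub_le_of_inner_eq_gauge hDconvex hD0 hv hvw hunique hκ)
  have hcont : Continuous (gauge D) :=
    continuous_gauge hDconvex (mem_interior_iff_mem_nhds.1 hD0)
  have hopen (α β : ℝ) (hα : 0 < α) (hβ : 0 < β) (hβτ : β ≤ τ * α) (y : E) :
      gauge D (α • w + β • e) - gauge D y - ⟪v, α • w + β • e - y⟫ ≤
        κ * ‖α • w + β • e - y‖ := by
    obtain ⟨u, hu, hux⟩ := exists_mem_polarSet_inner_eq_gauge hDconvex hD0
      (gauge_pos_of_isBounded hDbdd hD0 (smul_add_smul_ne_zero hw hwe hα.ne' β))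
    refine gauge_sub_gauge_sub_inner_le hD0 hu hux
      (hnear ⟨div_pos hβ hα, (div_le_iff₀ hα).2 hβτ⟩ u hu ?_) y
    have hscale : w + (β / α) • e = α⁻¹ • (α • w + β • e) := by
      rw [smul_add, inv_smul_smul₀ hα.ne', smul_smul, inv_mul_eq_div]
    rw [hscale, gauge_smul_of_nonneg (by positivity), inner_smul_right, hux, smul_eq_mul]
  have hclosed (x : E) (hx : x ∈ sideCone w e τ) (y : E) :
      gauge D x - gauge D y - ⟪v, x - y⟫ ≤ κ * ‖x - y‖ := by
    obtain ⟨α, β, hβ, hβτ, rfl⟩ := hx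
    have hτ' : 0 < τ := hτ
    have hα : 0 ≤ α := nonneg_of_mul_nonneg_right (hβ.trans hβτ) hτ'
    have hx0 : Tendsto (fun η : ℝ => (α + η) • w + (β + τ * η) • e) (𝓝[>] 0)
        (𝓝 (α • w + β • e)) := by
      refine ((Continuous.tendsto' ?_ _ _ ?_).mono_left nhdsWithin_le_nhds)
      · fun_prop
      · simp
    refine le_of_tendsto_of_tendsto
      (((hcont.tendsto _).comp hx0).sub_const _ |>.sub (tendsto_const_nhds.inner
        (hx0.sub_const y))) ((hx0.sub_const y).norm.const_mul κ) ?_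
    filter_upwards [self_mem_nhdsWithin] with η (hη : 0 < η)
    exact hopen _ _ (by positivity) (by positivity) (by linarith) y
  refine ⟨τ, hτ, fun x hx y hy => abs_le.2 ⟨?_, hclosed x hx y⟩⟩
  have hyx := hclosed y hy x
  rw [norm_sub_rev, ← neg_sub x y, inner_neg_right] at hyx
  linarith

variable [Fact (Module.finrank ℝ E = 2)]

lemma exists_mem_extremePoints_isSideGradient (hDconvex : Convex ℝ D)
    (hDbdd : Bornology.IsBounded D) (hD0 : 0 ∈ interior D) (hw : gauge D w = 1) (he : e ≠ 0)
    (hwe : ⟪w, e⟫ = 0) :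
    ∃ v ∈ Set.extremePoints ℝ (polarSet D), ⟪v, w⟫ = 1 ∧ IsSideGradient (gauge D) w e v := by
  have : FiniteDimensional ℝ E := .of_fact_finrank_eq_succ 1
  have hw0 : w ≠ 0 := by
    rintro rfl
    simp at hw
  have hface : IsCompact (polarSet D ∩ {v | ⟪v, w⟫ = gauge D w}) :=
    (isCompact_polarSet hD0).inter_right (isClosed_eq (by fun_prop) continuous_const)
  obtain ⟨v, ⟨hv, hvw : ⟪v, w⟫ = gauge D w⟩, hmax⟩ := hface.exists_isMaxOn
    (exists_mem_polarSet_inner_eq_gauge hDconvex hD0 (hw ▸ one_pos)) (f := fun v => ⟪v, e⟫)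
    (by fun_prop)
  have hunique : ∀ u ∈ polarSet D, ⟪u, w⟫ = gauge D w → ⟪v, e⟫ ≤ ⟪u, e⟫ → u = v := by
    intro u hu huw hue
    refine sub_eq_zero.1 (eq_zero_of_inner_eq_zero_of_orthogonal hw0 he hwe ?_ ?_)
    · rw [inner_sub_left, huw, hvw, sub_self]
    · rw [inner_sub_left, sub_eq_zero]
      exact le_antisymm (hmax ⟨hu, huw⟩) hue
  refine ⟨v, mem_extremePoints_of_forall_eq hv (innerSL ℝ w) (innerSL ℝ e) ?_ ?_, hvw.trans hw,
    isSideGradient_gauge hDconvex hDbdd hD0 hw0 hwe hv hvw hunique⟩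
  · intro u hu
    rw [innerSL_apply_apply, innerSL_apply_apply, real_inner_comm, real_inner_comm v, hvw]
    exact inner_le_gauge_of_mem_polarSet hD0 hu w
  · intro u hu
    simp only [innerSL_apply_apply, real_inner_comm _ w, real_inner_comm _ e, hvw]
    exact hunique u hu

lemma eq_of_mem_extremePoints_of_inner_le {K : Set E} (hv : v ∈ Set.extremePoints ℝ K)
    (hw : w ≠ 0) (he : e ≠ 0) (hwe : ⟪w, e⟫ = 0) :
    (∀ u ∈ K, ⟪u, w⟫ = ⟪v, w⟫ → ⟪v, e⟫ ≤ ⟪u, e⟫ → u = v) ∨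
      ∀ u ∈ K, ⟪u, w⟫ = ⟪v, w⟫ → ⟪v, -e⟫ ≤ ⟪u, -e⟫ → u = v := by
  by_contra! hcon
  obtain ⟨⟨a, haK, haw, hae, hav⟩, ⟨b, hbK, hbw, hbe, hbv⟩⟩ := hcon
  rw [inner_neg_right, inner_neg_right, neg_le_neg_iff] at hbe
  have hlt {u : E} (huw : ⟪u, w⟫ = ⟪v, w⟫) (huv : u ≠ v) : ⟪u, e⟫ ≠ ⟪v, e⟫ := fun hue =>
    huv <| sub_eq_zero.1 <| eq_zero_of_inner_eq_zero_of_orthogonal hw he hwe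
      (by rw [inner_sub_left, huw, sub_self]) (by rw [inner_sub_left, hue, sub_self])
  have hae' : ⟪v, e⟫ < ⟪a, e⟫ := lt_of_le_of_ne hae (hlt haw hav).symm
  have hbe' : ⟪b, e⟫ < ⟪v, e⟫ := lt_of_le_of_ne hbe (hlt hbw hbv)
  set s := (⟪v, e⟫ - ⟪b, e⟫) / (⟪a, e⟫ - ⟪b, e⟫)
  have hs0 : 0 < s := div_pos (by linarith) (by linarith)
  have hs1 : s < 1 := (div_lt_one (by linarith)).2 (by linarith)
  have hse : s * (⟪a, e⟫ - ⟪b, e⟫) = ⟪v, e⟫ - ⟪b, e⟫ := div_mul_cancel₀ _ (by linarith)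
  have hcombo : s • a + (1 - s) • b - v = 0 := by
    refine eq_zero_of_inner_eq_zero_of_orthogonal hw he hwe ?_ ?_ <;>
      simp only [inner_sub_left, inner_add_left, real_inner_smul_left]
    · rw [haw, hbw]
      ring
    · linarith
  exact hav (hv.2 haK hbK ⟨s, 1 - s, hs0, by linarith, by ring, sub_eq_zero.1 hcombo⟩)

lemma exists_isSideGradient_of_mem_extremePoints (hDclosed : IsClosed D)
    (hDconvex : Convex ℝ D) (hDbdd : Bornology.IsBounded D) (hD0 : 0 ∈ interior D)
    (hv : v ∈ Set.extremePoints ℝ (polarSet D)) :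
    ∃ w e : E, gauge D w = 1 ∧ e ≠ 0 ∧ ⟪w, e⟫ = 0 ∧ ⟪v, w⟫ = 1 ∧
      IsSideGradient (gauge D) w e v := by
  have : FiniteDimensional ℝ E := .of_fact_finrank_eq_succ 1
  have := FiniteDimensional.proper_real E
  have : Nontrivial E := Module.nontrivial_of_finrank_pos (R := ℝ) (by
    rw [Fact.out (p := Module.finrank ℝ E = 2)]; exact two_pos)
  obtain ⟨w, hwD, hvw⟩ := exists_inner_eq_one_of_mem_extremePoints_polarSet
    (Metric.isCompact_of_isClosed_isBounded hDclosed hDbdd) hD0 hv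
  have hgw : gauge D w = 1 := gauge_eq_one_of_inner_eq_one hD0 hv.1 hwD hvw
  have hw0 : w ≠ 0 := by
    rintro rfl
    simp at hgw
  have hvw' : ⟪v, w⟫ = gauge D w := hvw.trans hgw.symm
  obtain ⟨e, he, hwe⟩ := exists_ne_zero_inner_eq_zero hw0
  rcases eq_of_mem_extremePoints_of_inner_le hv hw0 he hwe with hunique | hunique <;>
    rw [hvw'] at hunique
  · exact ⟨w, e, hgw, he, hwe, hvw,
      isSideGradient_gauge hDconvex hDbdd hD0 hw0 hwe hv.1 hvw' hunique⟩
  · have hwe' : ⟪w, -e⟫ = 0 := by rw [inner_neg_right, hwe, neg_zero]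
    exact ⟨w, -e, hgw, neg_ne_zero.2 he, hwe', hvw,
      isSideGradient_gauge hDconvex hDbdd hD0 hw0 hwe' hv.1 hvw' hunique⟩

end SideGradient

section Density

variable {Q S : Set ℝ} {δ d L T : ℝ}

lemma injOn_floor_div_of_separated (hδ : 0 < δ) (hQ : ∀ x ∈ Q, ∀ y ∈ Q, x ≠ y → δ ≤ dist x y) :
    Set.InjOn (fun q => ⌊q / δ⌋) Q := by
  intro x hx y hy hxy
  by_contra hne
  have hdist := hQ x hx y hy hne
  have hlt := Int.abs_sub_lt_one_of_floor_eq_floor hxy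
  rw [← sub_div, abs_div, abs_of_pos hδ, div_lt_one hδ] at hlt
  rw [Real.dist_eq] at hdist
  linarith

lemma UniformlyDiscrete.finite_inter_Icc (hQ : UniformlyDiscrete Q) (a b : ℝ) :
    (Q ∩ Set.Icc a b).Finite := by
  obtain ⟨δ, hδ, hQ⟩ := hQ
  refine Set.Finite.of_injOn (f := fun q => ⌊q / δ⌋) (t := Set.Icc ⌊a / δ⌋ ⌊b / δ⌋) ?_
    ((injOn_floor_div_of_separated hδ hQ).mono Set.inter_subset_left) (Set.finite_Icc _ _)
  rintro x ⟨-, hxa, hxb⟩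
  exact ⟨Int.floor_mono (by gcongr), Int.floor_mono (by gcongr)⟩

lemma UniformlyDiscrete.finite_inter_Ico (hQ : UniformlyDiscrete Q) (a b : ℝ) :
    (Q ∩ Set.Ico a b).Finite :=
  (hQ.finite_inter_Icc a b).subset (Set.inter_subset_inter_right _ Set.Ico_subset_Icc_self)

lemma ncard_inter_Icc_le_of_separated (hδ : 0 < δ)
    (hQ : ∀ x ∈ Q, ∀ y ∈ Q, x ≠ y → δ ≤ dist x y) {a b : ℝ} (hab : a ≤ b) :
    ((Q ∩ Set.Icc a b).ncard : ℝ) ≤ (b - a) / δ + 2 := by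
  have hfloor : ⌊a / δ⌋ ≤ ⌊b / δ⌋ := Int.floor_mono (by gcongr)
  have hle : (Q ∩ Set.Icc a b).ncard ≤ (⌊b / δ⌋ + 1 - ⌊a / δ⌋).toNat := by
    rw [← Int.card_Icc, ← Set.ncard_coe_finset, Finset.coe_Icc]
    refine Set.ncard_le_ncard_of_injOn (fun q => ⌊q / δ⌋) ?_
      ((injOn_floor_div_of_separated hδ hQ).mono Set.inter_subset_left) (Set.finite_Icc _ _)
    rintro x ⟨-, hxa, hxb⟩
    exact ⟨Int.floor_mono (by gcongr), Int.floor_mono (by gcongr)⟩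
  have hle' : ((Q ∩ Set.Icc a b).ncard : ℝ) ≤ ⌊b / δ⌋ + 1 - ⌊a / δ⌋ := by
    have : ((Q ∩ Set.Icc a b).ncard : ℤ) ≤ ⌊b / δ⌋ + 1 - ⌊a / δ⌋ := by lia
    exact_mod_cast this
  rw [sub_div]
  linarith [Int.floor_le (b / δ), (Int.lt_floor_add_one (a / δ)).le]

lemma ncard_neg_inter_Icc (Q : Set ℝ) (a b : ℝ) :
    (-Q ∩ Set.Icc a b).ncard = (Q ∩ Set.Icc (-b) (-a)).ncard := by
  have hneg : -Q ∩ Set.Icc a b = -(Q ∩ Set.Icc (-b) (-a)) := by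
    rw [Set.inter_neg, Set.neg_Icc, neg_neg, neg_neg]
  rw [hneg, ← Set.image_neg_eq_neg, Set.ncard_image_of_injective _ neg_injective]

lemma finite_neg_inter_Icc (hS : ∀ a b, (S ∩ Set.Icc a b).Finite) (a b : ℝ) :
    (-S ∩ Set.Icc a b).Finite := by
  have hneg : -S ∩ Set.Icc a b = -(S ∩ Set.Icc (-b) (-a)) := by
    rw [Set.inter_neg, Set.neg_Icc, neg_neg, neg_neg]
  exact hneg ▸ (hS _ _).neg

lemma union_neg_inter_Ico (hQpos : Q ⊆ Set.Ioi 0) {s : ℝ} (hs : 0 ≤ s) (t : ℝ) :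
    (Q ∪ -Q) ∩ Set.Ico s t = Q ∩ Set.Ico s t := by
  ext q
  refine ⟨?_, fun h => ⟨Or.inl h.1, h.2⟩⟩
  rintro ⟨hq | hq, hqst⟩
  · exact ⟨hq, hqst⟩
  · have : 0 < -q := hQpos hq
    linarith [hqst.1]

lemma lowerUniformDensity_eq_liminf_ncard (S : Set ℝ) : lowerUniformDensity S =
    liminf (fun r : ℝ => ⨅ x : ℝ, ((S ∩ Set.Icc (x - r) (x + r)).ncard : ℝ) / (2 * r)) atTop := by
  refine liminf_congr ?_
  filter_upwards [eventually_ge_atTop 0] with r hr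
  refine iInf_congr fun x => ?_
  rw [Real.volume_closedBall, ENNReal.toReal_ofReal (by positivity), Real.closedBall_eq_Icc,
    Nat.card_coe_set_eq]

lemma bddBelow_range_ncard_div (S : Set ℝ) {r : ℝ} (hr : 0 ≤ r) : BddBelow (Set.range fun x : ℝ =>
    ((S ∩ Set.Icc (x - r) (x + r)).ncard : ℝ) / (2 * r)) :=
  ⟨0, by rintro _ ⟨x, rfl⟩; positivity⟩

lemma eventually_nonneg_iInf_ncard_div (S : Set ℝ) :
    ∀ᶠ r : ℝ in atTop, 0 ≤ ⨅ x : ℝ, ((S ∩ Set.Icc (x - r) (x + r)).ncard : ℝ) / (2 * r) :=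
  (eventually_ge_atTop 0).mono fun r hr => le_ciInf fun x => by positivity

lemma UniformlyDiscrete.isCoboundedUnder_ncard_div (hQ : UniformlyDiscrete Q) :
    IsCoboundedUnder (· ≥ ·) atTop
      (fun r : ℝ => ⨅ x : ℝ, (((Q ∪ -Q) ∩ Set.Icc (x - r) (x + r)).ncard : ℝ) / (2 * r)) := by
  obtain ⟨δ, hδ, hQ⟩ := hQ
  refine IsBoundedUnder.isCoboundedUnder_ge (isBoundedUnder_of_eventually_le (a := 2 / δ + 2) ?_)
  filter_upwards [eventually_ge_atTop 1] with r hr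
  refine (ciInf_le (bddBelow_range_ncard_div _ (by linarith)) 0).trans ?_
  rw [zero_sub, zero_add, div_le_iff₀ (by linarith), Set.union_inter_distrib_right]
  have hcard := ncard_inter_Icc_le_of_separated hδ hQ (by linarith : -r ≤ r)
  have hunion : ((Q ∩ Set.Icc (-r) r ∪ -Q ∩ Set.Icc (-r) r).ncard : ℝ) ≤
      (Q ∩ Set.Icc (-r) r).ncard + (-Q ∩ Set.Icc (-r) r).ncard := by
    exact_mod_cast Set.ncard_union_le _ _
  rw [ncard_neg_inter_Icc, neg_neg] at hunion
  have heq : (2 / δ + 2) * (2 * r) = 2 * ((r - -r) / δ) + 4 * r := by ring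
  linarith

lemma UniformlyDiscrete.lowerUniformDensity_union_neg_nonneg (hQ : UniformlyDiscrete Q) :
    0 ≤ lowerUniformDensity (Q ∪ -Q) := by
  rw [lowerUniformDensity_eq_liminf_ncard]
  exact le_liminf_of_le hQ.isCoboundedUnder_ncard_div (eventually_nonneg_iInf_ncard_div _)

lemma eventually_forall_mul_le_ncard_inter_Ico (hS : ∀ a b, (S ∩ Set.Icc a b).Finite)
    (hd : d < lowerUniformDensity S) :
    ∀ᶠ L in atTop, ∀ s, d * L ≤ (S ∩ Set.Ico s (s + L)).ncard := by
  obtain ⟨d₁, hdd₁, hd₁⟩ := exists_between hd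
  rw [lowerUniformDensity_eq_liminf_ncard] at hd₁
  have hev := eventually_lt_of_lt_liminf hd₁
    (isBoundedUnder_of_eventually_ge (eventually_nonneg_iInf_ncard_div S))
  filter_upwards [(tendsto_id.atTop_div_const two_pos).eventually hev, eventually_gt_atTop 0,
    eventually_ge_atTop (1 / (d₁ - d))] with L hL hL0 hLd s
  rw [div_le_iff₀ (sub_pos.2 hdd₁)] at hLd
  have hIcc : d₁ * L ≤ (S ∩ Set.Icc s (s + L)).ncard := by
    have hle := hL.le.trans (ciInf_le (bddBelow_range_ncard_div S (half_pos hL0).le) (s + L / 2))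
    rwa [show 2 * (L / 2) = L by ring, le_div_iff₀ hL0, add_sub_cancel_right, add_assoc,
      add_halves] at hle
  have hinsert : S ∩ Set.Icc s (s + L) ⊆ insert (s + L) (S ∩ Set.Ico s (s + L)) := by
    rintro q ⟨hqS, hsq, hqL⟩
    exact hqL.eq_or_lt.imp id fun hlt => ⟨hqS, hsq, hlt⟩
  have hfin : (S ∩ Set.Ico s (s + L)).Finite :=
    (hS s (s + L)).subset (Set.inter_subset_inter_right _ Set.Ico_subset_Icc_self)
  have hcard : ((S ∩ Set.Icc s (s + L)).ncard : ℝ) ≤ (S ∩ Set.Ico s (s + L)).ncard + 1 := by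
    exact_mod_cast (Set.ncard_le_ncard hinsert (hfin.insert _)).trans (Set.ncard_insert_le _ _)
  linarith

lemma UniformlyDiscrete.eventually_forall_mul_le_ncard (hQ : UniformlyDiscrete Q)
    (hQpos : Q ⊆ Set.Ioi 0) (hd : d < lowerUniformDensity (Q ∪ -Q)) :
    ∀ᶠ L in atTop, ∀ s, 0 ≤ s → d * L ≤ (Q ∩ Set.Ico s (s + L)).ncard := by
  have hfin : ∀ a b, ((Q ∪ -Q) ∩ Set.Icc a b).Finite := fun a b => by
    rw [Set.union_inter_distrib_right]
    exact (hQ.finite_inter_Icc a b).union (finite_neg_inter_Icc hQ.finite_inter_Icc a b)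
  filter_upwards [eventually_forall_mul_le_ncard_inter_Ico hfin hd] with L hL s hs
  exact union_neg_inter_Ico hQpos hs _ ▸ hL s

lemma mul_le_ncard_inter_Ico_of_forall (hQ : ∀ a b, (Q ∩ Set.Icc a b).Finite) (hL : 0 ≤ L)
    (h : ∀ s ≥ T, d * L ≤ (Q ∩ Set.Ico s (s + L)).ncard) {s : ℝ} (hs : T ≤ s) (n : ℕ) :
    d * (n * L) ≤ (Q ∩ Set.Ico s (s + n * L)).ncard := by
  have hfin : ∀ a b, (Q ∩ Set.Ico a b).Finite := fun a b =>
    (hQ a b).subset (Set.inter_subset_inter_right _ Set.Ico_subset_Icc_self)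
  induction n with
  | zero => simp
  | succ n ih =>
    have hnL : (0 : ℝ) ≤ n * L := by positivity
    have hsplit : Q ∩ Set.Ico s (s + (n + 1 : ℕ) * L) =
        (Q ∩ Set.Ico s (s + n * L)) ∪ (Q ∩ Set.Ico (s + n * L) (s + n * L + L)) := by
      rw [← Set.inter_union_distrib_left, Set.Ico_union_Ico_eq_Ico (by linarith) (by linarith)]
      push_cast
      ring_nf
    have hdisj : Disjoint (Q ∩ Set.Ico s (s + n * L)) (Q ∩ Set.Ico (s + n * L) (s + n * L + L)) :=
      Set.Ico_disjoint_Ico_same.mono Set.inter_subset_right Set.inter_subset_right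
    rw [hsplit, Set.ncard_union_eq hdisj (hfin _ _) (hfin _ _)]
    push_cast
    linarith [h (s + n * L) (by linarith)]

lemma mul_sub_le_ncard_inter_Icc_of_forall (hQ : ∀ a b, (Q ∩ Set.Icc a b).Finite) (hL : 0 < L)
    (hd : 0 ≤ d) (h : ∀ s ≥ T, d * L ≤ (Q ∩ Set.Ico s (s + L)).ncard) (s t : ℝ) :
    d * (t - max s T - L) ≤ (Q ∩ Set.Icc s t).ncard := by
  rcases le_or_gt t (max s T) with hts | hts
  · exact (mul_nonpos_of_nonneg_of_nonpos hd (by linarith)).trans (Nat.cast_nonneg _)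
  · have hn_le : (⌊(t - max s T) / L⌋₊ : ℝ) * L ≤ t - max s T := by
      rw [← le_div_iff₀ hL]
      exact Nat.floor_le (div_nonneg (by linarith) hL.le)
    have hn_ge : t - max s T ≤ ((⌊(t - max s T) / L⌋₊ : ℝ) + 1) * L := by
      rw [← div_le_iff₀ hL]
      exact (Nat.lt_floor_add_one _).le
    have hsub : Q ∩ Set.Ico (max s T) (max s T + ⌊(t - max s T) / L⌋₊ * L) ⊆ Q ∩ Set.Icc s t := by
      rintro q ⟨hq, hsq, hqt⟩
      exact ⟨hq, (le_max_left _ _).trans hsq, by linarith⟩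
    calc d * (t - max s T - L) ≤ d * (⌊(t - max s T) / L⌋₊ * L) := by gcongr; linarith
      _ ≤ (Q ∩ Set.Ico (max s T) (max s T + ⌊(t - max s T) / L⌋₊ * L)).ncard :=
        mul_le_ncard_inter_Ico_of_forall hQ hL.le h (le_max_right _ _) _
      _ ≤ (Q ∩ Set.Icc s t).ncard := by exact_mod_cast Set.ncard_le_ncard hsub (hQ s t)

lemma mul_sub_le_ncard_union_neg_inter_Icc_of_forall (hQpos : Q ⊆ Set.Ioi 0)
    (hQ : ∀ a b, (Q ∩ Set.Icc a b).Finite) (hL : 0 < L) (hd : 0 ≤ d) (hT : 0 ≤ T)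
    (h : ∀ s ≥ T, d * L ≤ (Q ∩ Set.Ico s (s + L)).ncard) (a b : ℝ) :
    d * (b - a - 2 * T - 2 * L) ≤ ((Q ∪ -Q) ∩ Set.Icc a b).ncard := by
  have hdisj : Disjoint (Q ∩ Set.Icc a b) (-Q ∩ Set.Icc a b) := by
    refine Set.disjoint_left.2 fun q hq hq' => ?_
    have hpos : 0 < q := hQpos hq.1
    have hneg : 0 < -q := hQpos hq'.1
    linarith
  rw [Set.union_inter_distrib_right,
    Set.ncard_union_eq hdisj (hQ a b) (finite_neg_inter_Icc hQ a b), ncard_neg_inter_Icc]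
  push_cast
  have hright := mul_sub_le_ncard_inter_Icc_of_forall hQ hL hd h a b
  have hleft := mul_sub_le_ncard_inter_Icc_of_forall hQ hL hd h (-b) (-a)
  have hright0 : (0 : ℝ) ≤ (Q ∩ Set.Icc a b).ncard := Nat.cast_nonneg _
  have hleft0 : (0 : ℝ) ≤ (Q ∩ Set.Icc (-b) (-a)).ncard := Nat.cast_nonneg _
  have hdT : 0 ≤ d * T := by positivity
  have hdL : 0 ≤ d * L := by positivity
  rcases max_cases a T with ⟨ha, -⟩ | ⟨ha, -⟩ <;> rcases max_cases (-b) T with ⟨hb, -⟩ | ⟨hb, -⟩ <;>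
    rw [ha] at hright <;> rw [hb] at hleft <;> nlinarith

lemma UniformlyDiscrete.exists_ncard_inter_Ico_lt (hQ : UniformlyDiscrete Q)
    (hQpos : Q ⊆ Set.Ioi 0) (hQd : lowerUniformDensity (Q ∪ -Q) < d) (hL : 0 < L) (T : ℝ) :
    ∃ s ≥ T, ((Q ∩ Set.Ico s (s + L)).ncard : ℝ) < d * L := by
  by_contra! hdense
  have hd : 0 < d := hQ.lowerUniformDensity_union_neg_nonneg.trans_lt hQd
  obtain ⟨d₁, hd₁, hd₁d⟩ := exists_between hQd
  refine hd₁.not_ge ?_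
  rw [lowerUniformDensity_eq_liminf_ncard]
  refine le_liminf_of_le hQ.isCoboundedUnder_ncard_div ?_
  filter_upwards [eventually_ge_atTop (d * (max T 0 + L) / (d - d₁)), eventually_gt_atTop 0]
    with r hr hr0
  refine le_ciInf fun x => ?_
  have hcard := mul_sub_le_ncard_union_neg_inter_Icc_of_forall hQpos hQ.finite_inter_Icc hL hd.le
    (le_max_right T 0) (fun s hs => hdense s ((le_max_left _ _).trans hs)) (x - r) (x + r)
  rw [div_le_iff₀ (sub_pos.2 hd₁d)] at hr
  rw [le_div_iff₀ (by positivity)]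
  linarith

end Density

section ConeUniqueness

lemma exists_forall_smul_add_smul_mem_of_mem_interior {E : Type*} [NormedAddCommGroup E]
    [NormedSpace ℝ E] {C : Set E} (hC : ∀ x ∈ C, ∀ t > (0 : ℝ), t • x ∈ C) {g : E}
    (hg : g ∈ interior C) (x u : E) :
    ∃ δ > 0, ∃ t₀ > 0, ∀ t ≥ t₀, ∀ s : ℝ, |s| ≤ δ * t → x + t • g + s • u ∈ C := by
  obtain ⟨ε, hε, hball⟩ := Metric.mem_nhds_iff.1 (mem_interior_iff_mem_nhds.1 hg)
  refine ⟨ε / 2 / (‖u‖ + 1), by positivity, (‖x‖ + 1) / (ε / 2), by positivity,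
    fun t ht s hs => ?_⟩
  have ht0 : 0 < t := lt_of_lt_of_le (by positivity) ht
  have hx : ‖x‖ < ε / 2 * t := by
    rw [ge_iff_le, div_le_iff₀ (by positivity)] at ht
    linarith
  have hu : |s| * ‖u‖ ≤ ε / 2 * t := by
    calc |s| * ‖u‖ ≤ ε / 2 / (‖u‖ + 1) * t * (‖u‖ + 1) := by gcongr; linarith
      _ = ε / 2 * t := by field_simp
  have hmem : g + t⁻¹ • (x + s • u) ∈ C := by
    refine hball ?_
    rw [mem_ball_iff_norm, add_sub_cancel_left, norm_smul, norm_inv, Real.norm_of_nonneg ht0.le,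
      inv_mul_lt_iff₀ ht0]
    refine (norm_add_le _ _).trans_lt ?_
    rw [norm_smul, Real.norm_eq_abs]
    linarith
  convert hC _ hmem t ht0 using 1
  rw [smul_add, smul_inv_smul₀ ht0.ne']
  abel

lemma exists_finset_ncard_le_card_of_abs_sub_sub_le {φ : ℝ → ℝ} {Λ : Set ℝ} {ε a b L : ℝ}
    (hab : a ≤ b)
    (hφ : ∀ s ∈ Set.Icc a b, ∀ t ∈ Set.Icc a b, |φ s - φ t - (s - t)| ≤ ε * |s - t|)
    (hL : L ≤ (1 - ε) * (b - a)) :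
    ∃ S : Finset ℝ, (Λ ∩ Set.Ico (φ a) (φ a + L)).ncard ≤ S.card ∧
      ∀ s ∈ S, a ≤ s ∧ s < b ∧ φ s ∈ Λ := by
  rcases (Λ ∩ Set.Ico (φ a) (φ a + L)).finite_or_infinite with hfin | hinf
  swap
  · exact ⟨∅, by simp [hinf.ncard], by simp⟩
  have hcont : ContinuousOn φ (Set.Icc a b) := by
    refine (LipschitzOnWith.of_dist_le' (K := 1 + ε) fun s hs t ht => ?_).continuousOn
    rw [Real.dist_eq, Real.dist_eq]
    have htriangle := abs_sub_abs_le_abs_sub (φ s - φ t) (s - t)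
    linarith [hφ s hs t ht]
  have hend : φ a + L ≤ φ b := by
    have hle := (abs_le.1 (hφ b (Set.right_mem_Icc.2 hab) a (Set.left_mem_Icc.2 hab))).1
    rw [abs_of_nonneg (sub_nonneg.2 hab)] at hle
    linarith
  have himage : (hfin.toFinset : Set ℝ) ⊆ φ '' (Set.Ico a b ∩ φ ⁻¹' Λ) := by
    rw [hfin.coe_toFinset]
    rintro q ⟨hqΛ, hq⟩
    obtain ⟨s, hs, rfl⟩ :=
      intermediate_value_Ico hab hcont (Set.Ico_subset_Ico_right hend hq)
    exact ⟨s, ⟨hs, hqΛ⟩, rfl⟩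
  obtain ⟨S, hSsub, hSimage⟩ := Finset.subset_set_image_iff.1 himage
  refine ⟨S, ?_, fun s hs => ⟨(hSsub hs).1.1, (hSsub hs).1.2, (hSsub hs).2⟩⟩
  rw [Set.ncard_eq_toFinset_card _ hfin, ← hSimage]
  exact Finset.card_image_le

lemma MemBernstein.exists_norm_le_exp_of_zeros {Ω : Set V} (hΩ : IsCompact Ω) {f : V → ℂ}
    (hf : MemBernstein Ω f) {u : V} {σ d l : ℝ} (hσ : ∀ ω ∈ Ω, ∀ ω' ∈ Ω, ⟪u, ω - ω'⟫ ≤ σ)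
    (hσ0 : 0 ≤ σ) (hσd : σ < d) (hl : 0 < l) :
    ∃ A > 0, ∀ x : V, ∀ R ≥ 0, (∀ a, -R ≤ a → a + l ≤ R → ∃ S : Finset ℝ, d * l ≤ S.card ∧
      ∀ s ∈ S, a ≤ s ∧ s < a + l ∧ f (x + s • u) = 0) →
      ‖f x‖ ≤ A * Real.exp (-((d - σ) / 2 * R)) := by
  obtain ⟨A, hA, hentire⟩ := hf.exists_entire_of_width hΩ hσ (sub_pos.2 hσd)
  obtain ⟨J₀, hJ₀⟩ := exists_norm_apply_zero_le_of_zeros hσ0 hσd hl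
  obtain ⟨C, hC⟩ := hf.2.1
  have hc : 0 ≤ (d - σ) / 2 := by linarith
  refine ⟨max (max A 1 * Real.exp ((d - σ) / 2 * l)) (C * Real.exp ((d - σ) / 2 * (J₀ * l))),
    lt_max_of_lt_left (by positivity), fun x R hR hzeros => ?_⟩
  rcases le_total (J₀ * l) R with hJ₀R | hRJ₀
  · have hJle : ⌊R / l⌋₊ * l ≤ R := by
      rw [← le_div_iff₀ hl]
      exact Nat.floor_le (by positivity)
    have hJge : R ≤ (⌊R / l⌋₊ + 1) * l := by
      rw [← div_le_iff₀ hl]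
      exact (Nat.lt_floor_add_one _).le
    obtain ⟨F, hF, hFf, hFbound⟩ := hentire x
    have hF0 : ‖F 0‖ = ‖f x‖ := by simpa using hFf 0
    have hsmall := hJ₀ ⌊R / l⌋₊ (Nat.le_floor ((le_div_iff₀ hl).2 hJ₀R)) F (max A 1) hF
      (le_max_right _ _) (fun z => (hFbound z).trans (by gcongr; exact le_max_left _ _))
      fun a ha hal => by
        obtain ⟨S, hS, hSzero⟩ := hzeros a (by linarith) (by linarith)
        refine ⟨S, hS, fun s hs => ⟨(hSzero s hs).1, (hSzero s hs).2.1, ?_⟩⟩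
        rw [← norm_eq_zero, hFf, (hSzero s hs).2.2, norm_zero]
    calc ‖f x‖ ≤ max A 1 * Real.exp (-((d - σ) / 2 * (⌊R / l⌋₊ * l))) := hF0 ▸ hsmall
      _ ≤ max A 1 * Real.exp ((d - σ) / 2 * l + -((d - σ) / 2 * R)) := by
        gcongr
        linarith [mul_le_mul_of_nonneg_left hJge hc]
      _ = max A 1 * Real.exp ((d - σ) / 2 * l) * Real.exp (-((d - σ) / 2 * R)) := by
        rw [Real.exp_add, mul_assoc]
      _ ≤ _ := by gcongr; exact le_max_left _ _
  · have hC0 : 0 ≤ C := (norm_nonneg _).trans (hC 0)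
    calc ‖f x‖ ≤ C * Real.exp ((d - σ) / 2 * (J₀ * l) + -((d - σ) / 2 * R)) :=
          (hC x).trans (le_mul_of_one_le_right hC0 (Real.one_le_exp (by
            linarith [mul_le_mul_of_nonneg_left hRJ₀ hc])))
      _ = C * Real.exp ((d - σ) / 2 * (J₀ * l)) * Real.exp (-((d - σ) / 2 * R)) := by
        rw [Real.exp_add, mul_assoc]
      _ ≤ _ := by gcongr; exact le_max_right _ _

lemma MemBernstein.apply_eq_zero_of_exponential_decay {Ω : Set V} (hΩ : IsCompact Ω) {f : V → ℂ}
    (hf : MemBernstein Ω f) {x g : V} {A c t₀ : ℝ} (hc : 0 < c) (hA : 0 ≤ A) (ht₀ : 0 ≤ t₀)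
    (hdecay : ∀ t ≥ t₀, ‖f (x + t • g)‖ ≤ A * Real.exp (-(c * t))) : f x = 0 := by
  obtain ⟨C, hC⟩ := hf.2.1
  have hC0 : 0 ≤ C := (norm_nonneg _).trans (hC 0)
  obtain ⟨R, hR⟩ := isBounded_iff_forall_norm_le.1 hΩ.isBounded
  have hwidth : ∀ ω ∈ Ω, ∀ ω' ∈ Ω, ⟪g, ω - ω'⟫ ≤ ‖g‖ * (R + R) := fun ω hω ω' hω' =>
    (real_inner_le_norm _ _).trans (by
      gcongr
      exact (norm_sub_le _ _).trans (add_le_add (hR ω hω) (hR ω' hω')))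
  obtain ⟨B, hB, hentire⟩ := hf.exists_entire_of_width hΩ hwidth one_pos
  obtain ⟨G, hG, hGf, hGbound⟩ := hentire x
  suffices hG0 : G = 0 by simpa [hG0] using (hGf 0).symm
  refine eq_zero_of_exponential_decay (A := B) (B := 1 + |Real.pi * (‖g‖ * (R + R))|)
    (M := C * Real.exp (c * t₀) + A) hG hc (fun z => (hGbound z).trans ?_)
    (fun t => (hGf t).trans_le ((hC _).trans ?_)) fun t _ => (hGf t).trans_le ?_
  · have him : Real.pi * (‖g‖ * (R + R)) * |z.im| ≤ |Real.pi * (‖g‖ * (R + R))| * ‖z‖ :=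
      mul_le_mul (le_abs_self _) (Complex.abs_im_le_norm z) (abs_nonneg _) (abs_nonneg _)
    gcongr
    linarith
  · have hle : C ≤ C * Real.exp (c * t₀) :=
      le_mul_of_one_le_right hC0 (Real.one_le_exp (by positivity))
    linarith
  · have hA' : 0 ≤ A * Real.exp (-(c * t)) := by positivity
    have hC' : 0 ≤ C * Real.exp (c * t₀) * Real.exp (-(c * t)) := by positivity
    rw [add_mul]
    rcases le_total t₀ t with ht₀t | htt₀
    · linarith [hdecay t ht₀t]
    · have hle : C ≤ C * Real.exp (c * t₀) * Real.exp (-(c * t)) := by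
        rw [mul_assoc, ← Real.exp_add]
        refine le_mul_of_one_le_right hC0 (Real.one_le_exp ?_)
        linarith [mul_le_mul_of_nonneg_left htt₀ hc.le]
      linarith [hC (x + t • g)]

-- Along the direction `u` the function `ℓ` grows at a rate close to `⟪v, u⟫ = 1`, so the levels in
-- `Λ` produce zeros with a density exceeding the width `σ`, on segments of length proportional to
-- the distance from the origin.
lemma MemBernstein.eq_zero_of_eq_zero_on_cone {Ω C : Set V} (hΩ : IsCompact Ω) {f : V → ℂ}
    (hf : MemBernstein Ω f) (hC : ∀ x ∈ C, ∀ t > (0 : ℝ), t • x ∈ C) (hCint : (interior C).Nonempty)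
    {v u : V} {ℓ : V → ℝ} {κ σ d L : ℝ} {Λ : Set ℝ} (hL : 0 < L) (hd : 0 < d) (hσ0 : 0 ≤ σ)
    (hℓ : ∀ x ∈ C, ∀ y ∈ C, |ℓ x - ℓ y - ⟪v, x - y⟫| ≤ κ * ‖x - y‖)
    (hΛ : ∀ y ∈ C, d * L ≤ (Λ ∩ Set.Ico (ℓ y) (ℓ y + L)).ncard)
    (hzero : ∀ y ∈ C, ℓ y ∈ Λ → f y = 0) (hvu : ⟪v, u⟫ = 1)
    (hσ : ∀ ω ∈ Ω, ∀ ω' ∈ Ω, ⟪u, ω - ω'⟫ ≤ σ) (hσd : σ < d * (1 - κ * ‖u‖)) (x : V) :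
    f x = 0 := by
  have hrate : 0 < 1 - κ * ‖u‖ := pos_of_mul_pos_right (hσ0.trans_lt hσd) hd.le
  have hl : 0 < L / (1 - κ * ‖u‖) := by positivity
  obtain ⟨g, hg⟩ := hCint
  obtain ⟨δ, hδ, t₀, ht₀, hmem⟩ := exists_forall_smul_add_smul_mem_of_mem_interior hC hg x u
  obtain ⟨A, hA, hdecay⟩ := hf.exists_norm_le_exp_of_zeros hΩ hσ hσ0 hσd hl
  refine hf.apply_eq_zero_of_exponential_decay hΩ (g := g)
    (mul_pos (half_pos (sub_pos.2 hσd)) hδ) hA.le ht₀.le fun t ht => ?_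
  have ht0 : 0 < t := ht₀.trans_le ht
  rw [mul_assoc]
  refine hdecay _ _ (by positivity) fun a ha hal => ?_
  have hseg : ∀ s ∈ Set.Icc a (a + L / (1 - κ * ‖u‖)), x + t • g + s • u ∈ C := fun s hs =>
    hmem t ht s (abs_le.2 ⟨ha.trans hs.1, hs.2.trans hal⟩)
  have hφ : ∀ s ∈ Set.Icc a (a + L / (1 - κ * ‖u‖)), ∀ s' ∈ Set.Icc a (a + L / (1 - κ * ‖u‖)),
      |ℓ (x + t • g + s • u) - ℓ (x + t • g + s' • u) - (s - s')| ≤ κ * ‖u‖ * |s - s'| := by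
    intro s hs s' hs'
    have hle := hℓ _ (hseg s hs) _ (hseg s' hs')
    rw [add_sub_add_left_eq_sub, ← sub_smul, inner_smul_right, hvu, mul_one, norm_smul,
      Real.norm_eq_abs] at hle
    linarith
  obtain ⟨S, hScard, hS⟩ := exists_finset_ncard_le_card_of_abs_sub_sub_le (Λ := Λ) (L := L)
    (le_add_of_nonneg_right hl.le) hφ (by rw [add_sub_cancel_left, mul_div_cancel₀ _ hrate.ne'])
  refine ⟨S, ?_, fun s hs => ?_⟩
  · calc d * (1 - κ * ‖u‖) * (L / (1 - κ * ‖u‖)) = d * L := by field_simp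
      _ ≤ _ := hΛ _ (hseg a (Set.left_mem_Icc.2 (le_add_of_nonneg_right hl.le)))
      _ ≤ S.card := by exact_mod_cast hScard
  · obtain ⟨has, hsl, hsΛ⟩ := hS s hs
    exact ⟨has, hsl, hzero _ (hseg s ⟨has, hsl.le⟩) hsΛ⟩

end ConeUniqueness

section SideCone

variable {E : Type*} [NormedAddCommGroup E] [InnerProductSpace ℝ E] {w e v : E} {τ : ℝ}

lemma smul_mem_sideCone {x : E} (hx : x ∈ sideCone w e τ) {t : ℝ} (ht : 0 ≤ t) :
    t • x ∈ sideCone w e τ := by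
  obtain ⟨α, β, hβ, hβα, rfl⟩ := hx
  refine ⟨t * α, t * β, by positivity, ?_, by module⟩
  linarith [mul_le_mul_of_nonneg_left hβα ht]

lemma inner_nonneg_of_mem_sideCone (hwe : ⟪w, e⟫ = 0) {x : E} (hx : x ∈ sideCone w e τ) :
    0 ≤ ⟪x, e⟫ := by
  obtain ⟨α, β, hβ, -, rfl⟩ := hx
  rw [inner_add_left, real_inner_smul_left, real_inner_smul_left, hwe,
    real_inner_self_eq_norm_sq, mul_zero, zero_add]
  positivity

lemma mem_sideCone_of_inner [Fact (Module.finrank ℝ E = 2)] (hw : w ≠ 0) (he : e ≠ 0)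
    (hwe : ⟪w, e⟫ = 0) {x : E} (hxe : 0 ≤ ⟪x, e⟫)
    (hxw : ⟪x, e⟫ / ‖e‖ ^ 2 ≤ τ * (⟪x, w⟫ / ‖w‖ ^ 2)) : x ∈ sideCone w e τ :=
  ⟨_, _, by positivity, hxw, eq_smul_add_smul_of_orthogonal hw he hwe x⟩

lemma nonempty_interior_sideCone [Fact (Module.finrank ℝ E = 2)] (hw : w ≠ 0) (he : e ≠ 0)
    (hwe : ⟪w, e⟫ = 0) (hτ : 0 < τ) : (interior (sideCone w e τ)).Nonempty := by
  have := norm_pos_iff.2 hw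
  have := norm_pos_iff.2 he
  refine ⟨w + (τ / 2) • e, mem_interior.2
    ⟨{x | 0 < ⟪x, e⟫} ∩ {x | ⟪x, e⟫ / ‖e‖ ^ 2 < τ * (⟪x, w⟫ / ‖w‖ ^ 2)},
      fun x hx => ?_,
      (isOpen_lt (by fun_prop) (by fun_prop)).inter (isOpen_lt (by fun_prop) (by fun_prop)), ?_⟩⟩
  · simp only [Set.mem_inter_iff, Set.mem_ofPred_eq] at hx
    exact mem_sideCone_of_inner hw he hwe hx.1.le hx.2.le
  simp only [Set.mem_inter_iff, Set.mem_ofPred_eq, inner_add_left, real_inner_smul_left, hwe,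
    real_inner_comm w e, real_inner_self_eq_norm_sq, mul_zero, zero_add, add_zero]
  rw [mul_div_cancel_right₀ _ (by positivity), div_self (by positivity)]
  exact ⟨by positivity, by linarith⟩

lemma eventually_mem_sideCone [Fact (Module.finrank ℝ E = 2)] (hw : w ≠ 0) (he : e ≠ 0)
    (hwe : ⟪w, e⟫ = 0) {ι : Type*} {l : Filter ι} {x : ι → E} {r : ι → ℝ}
    (hr : Tendsto r l atTop) (hx : Tendsto (fun n => (r n)⁻¹ • x n) l (𝓝 w))
    (hxe : ∀ᶠ n in l, 0 ≤ ⟪x n, e⟫) (hτ : 0 < τ) :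
    ∀ᶠ n in l, x n ∈ sideCone w e τ := by
  have := norm_pos_iff.2 hw
  have hlim : Tendsto (fun n => τ * (⟪(r n)⁻¹ • x n, w⟫ / ‖w‖ ^ 2) -
      ⟪(r n)⁻¹ • x n, e⟫ / ‖e‖ ^ 2) l (𝓝 τ) := by
    have := (((hx.inner (tendsto_const_nhds (x := w))).div_const (‖w‖ ^ 2)).const_mul τ).sub
      ((hx.inner (tendsto_const_nhds (x := e))).div_const (‖e‖ ^ 2))
    rwa [hwe, real_inner_self_eq_norm_sq, div_self (by positivity), mul_one, zero_div,
      sub_zero] at this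
  filter_upwards [hlim.eventually_const_lt hτ, hr.eventually_gt_atTop 0, hxe] with n hn hrn hen
  have hmem : (r n)⁻¹ • x n ∈ sideCone w e τ := by
    refine mem_sideCone_of_inner hw he hwe ?_ (sub_pos.1 hn).le
    rw [real_inner_smul_left]
    positivity
  simpa [smul_inv_smul₀ hrn.ne'] using smul_mem_sideCone hmem hrn.le

lemma IsSideGradient.tendsto_sub {p : E → ℝ} (h : IsSideGradient p w e v) {ι : Type*}
    {l : Filter ι} {x z : ι → E} {z₀ : E} (hz : Tendsto z l (𝓝 z₀))
    (hx : ∀ τ > 0, ∀ᶠ n in l, x n ∈ sideCone w e τ ∧ x n + z n ∈ sideCone w e τ) :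
    Tendsto (fun n => p (x n + z n) - p (x n)) l (𝓝 ⟪v, z₀⟫) := by
  have hinner : Tendsto (fun n => ⟪v, z n⟫) l (𝓝 ⟪v, z₀⟫) := tendsto_const_nhds.inner hz
  have herror : (fun n => p (x n + z n) - p (x n) - ⟪v, z n⟫) =o[l] z := by
    refine Asymptotics.isLittleO_iff.2 fun κ hκ => ?_
    obtain ⟨τ, hτ, hcone⟩ := h κ hκ
    filter_upwards [hx τ hτ] with n hn
    simpa using hcone _ hn.2 _ hn.1
  have herror0 := (herror.trans_isBigO (hz.isBigO_one ℝ)).tendsto_zero_of_tendsto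
    tendsto_const_nhds
  simpa using herror0.add hinner

end SideCone

section LimitLevels

variable {Q : Set ℝ} {t : ℕ → ℝ} {d : ℝ}

/-- The limit points along `l` of the translates `Q - t n`, i.e. the levels that remain visible
when the origin is moved to `t n`. -/
def limitLevels (l : Filter ℕ) (Q : Set ℝ) (t : ℕ → ℝ) : Set ℝ :=
  {a | ∃ q : ℕ → ℝ, (∀ᶠ n in l, q n ∈ Q) ∧ Tendsto (fun n => q n - t n) l (𝓝 a)}

lemma UniformlyDiscrete.injective_of_tendsto_sub (hQ : UniformlyDiscrete Q) {l : Filter ℕ}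
    [l.NeBot] {ι : Type*} {q : ℕ → ι → ℝ} {b : ι → ℝ}
    (hq : ∀ᶠ n in l, Function.Injective (q n) ∧ ∀ i, q n i ∈ Q)
    (hb : ∀ i, Tendsto (fun n => q n i - t n) l (𝓝 (b i))) : Function.Injective b := by
  obtain ⟨δ, hδ, hQ⟩ := hQ
  intro i j hij
  by_contra hne
  have hdist : Tendsto (fun n => dist (q n i) (q n j)) l (𝓝 (dist (b i) (b j))) := by
    simpa only [dist_sub_right] using (hb i).dist (hb j)
  refine hδ.not_ge (ge_of_tendsto (by simpa [hij] using hdist) ?_)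
  filter_upwards [hq] with n ⟨hinj, hmem⟩
  exact hQ _ (hmem i) _ (hmem j) (hinj.ne hne)

lemma exists_injective_of_le_ncard {S : Set ℝ} {k : ℕ} (hS : S.Finite) (hk : k ≤ S.ncard) :
    ∃ q : Fin k → ℝ, Function.Injective q ∧ ∀ i, q i ∈ S := by
  rw [Set.ncard_eq_toFinset_card _ hS] at hk
  refine ⟨fun i => hS.toFinset.orderEmbOfCardLe hk i, (hS.toFinset.orderEmbOfCardLe hk).injective,
    fun i => hS.mem_toFinset.1 (Finset.orderEmbOfCardLe_mem _ _ i)⟩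

lemma exists_tendsto_of_eventually_mem {X : Type*} [TopologicalSpace X] {K : Set X}
    (hK : IsCompact K) {ι : Type*} {𝒰 : Ultrafilter ι} {x : ι → X}
    (hx : ∀ᶠ n in (𝒰 : Filter ι), x n ∈ K) : ∃ a ∈ K, Tendsto x 𝒰 (𝓝 a) :=
  hK.ultrafilter_le_nhds (𝒰.map x) (le_principal_iff.2 hx)

lemma UniformlyDiscrete.exists_finset_limitLevels (hQ : UniformlyDiscrete Q) {𝒰 : Ultrafilter ℕ}
    {a L : ℝ} {k : ℕ} (hk : ∀ᶠ n in 𝒰, k ≤ (Q ∩ Set.Ico (t n + a) (t n + a + L)).ncard) :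
    ∃ S : Finset ℝ, k = S.card ∧ ↑S ⊆ limitLevels 𝒰 Q t ∩ Set.Icc a (a + L) := by
  have hq : ∀ n, ∃ q : Fin k → ℝ, k ≤ (Q ∩ Set.Ico (t n + a) (t n + a + L)).ncard →
      Function.Injective q ∧ ∀ i, q i ∈ Q ∩ Set.Ico (t n + a) (t n + a + L) := by
    intro n
    by_cases hn : k ≤ (Q ∩ Set.Ico (t n + a) (t n + a + L)).ncard
    · obtain ⟨q, hq⟩ := exists_injective_of_le_ncard (hQ.finite_inter_Ico _ _) hn
      exact ⟨q, fun _ => hq⟩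
    · exact ⟨0, fun h => absurd h hn⟩
  choose q hq using hq
  have hqk := hk.mono hq
  have hlim : ∀ i, ∃ b ∈ Set.Icc a (a + L), Tendsto (fun n => q n i - t n) 𝒰 (𝓝 b) := by
    refine fun i => exists_tendsto_of_eventually_mem isCompact_Icc ?_
    filter_upwards [hqk] with n hn
    obtain ⟨-, hge, hlt⟩ := hn.2 i
    exact ⟨by linarith, by linarith⟩
  choose b hb hblim using hlim
  have hinj : Function.Injective b :=
    hQ.injective_of_tendsto_sub (hqk.mono fun n hn => ⟨hn.1, fun i => (hn.2 i).1⟩) hblim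
  refine ⟨Finset.univ.image b, by simp [Finset.card_image_of_injective _ hinj], ?_⟩
  rw [Finset.coe_image]
  rintro _ ⟨i, -, rfl⟩
  exact ⟨⟨fun n => q n i, hqk.mono fun n hn => (hn.2 i).1, hblim i⟩, hb i⟩

lemma UniformlyDiscrete.uniformlyDiscrete_limitLevels (hQ : UniformlyDiscrete Q) {l : Filter ℕ}
    [l.NeBot] :
    UniformlyDiscrete (limitLevels l Q t) := by
  obtain ⟨δ, hδ, hQ⟩ := hQ
  refine ⟨δ, hδ, ?_⟩
  rintro a ⟨q, hq, hqa⟩ b ⟨r, hr, hrb⟩ hab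
  have hdist : Tendsto (fun n => dist (q n) (r n)) l (𝓝 (dist a b)) := by
    simpa only [dist_sub_right] using hqa.dist hrb
  refine ge_of_tendsto hdist ?_
  have hne := hdist.eventually_ne (dist_ne_zero.2 hab)
  filter_upwards [hq, hr, hne] with n hqn hrn hnen
  exact hQ _ hqn _ hrn (dist_ne_zero.1 hnen)

lemma UniformlyDiscrete.exists_forall_mul_le_ncard_limitLevels (hQ : UniformlyDiscrete Q)
    (hQpos : Q ⊆ Set.Ioi 0) (hd : 0 < d) (hdQ : d < lowerUniformDensity (Q ∪ -Q))
    {𝒰 : Ultrafilter ℕ} (ht : Tendsto t 𝒰 atTop) :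
    ∃ L > 0, ∀ a : ℝ, d * L ≤ (limitLevels 𝒰 Q t ∩ Set.Ico a (a + L)).ncard := by
  obtain ⟨d₁, hdd₁, hd₁⟩ := exists_between hdQ
  obtain ⟨L, hdense, hL⟩ :=
    ((hQ.eventually_forall_mul_le_ncard hQpos hd₁).and (eventually_gt_atTop 0)).exists
  have hlt : L < L * d₁ / d := by
    rw [lt_div_iff₀ hd]
    gcongr
  refine ⟨L * d₁ / d, hL.trans hlt, fun a => ?_⟩
  obtain ⟨S, hScard, hS⟩ := hQ.exists_finset_limitLevels (t := t) (𝒰 := 𝒰) (a := a) (L := L)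
    (k := ⌈d₁ * L⌉₊) (by
      filter_upwards [ht.eventually_ge_atTop (-a)] with n hn
      exact Nat.ceil_le.2 (hdense _ (by linarith)))
  have hsub : ↑S ⊆ limitLevels 𝒰 Q t ∩ Set.Ico a (a + L * d₁ / d) := fun b hb =>
    ⟨(hS hb).1, (hS hb).2.1, (hS hb).2.2.trans_lt (by linarith)⟩
  calc d * (L * d₁ / d) = d₁ * L := by field_simp
    _ ≤ S.card := hScard ▸ Nat.le_ceil _
    _ ≤ _ := by
      rw [← Set.ncard_coe_finset]
      exact_mod_cast Set.ncard_le_ncard hsub (hQ.uniformlyDiscrete_limitLevels.finite_inter_Ico _ _)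

end LimitLevels

section Sampling

variable {Ω P : Set V}

lemma exists_smul_norm_le_gauge {E : Type*} [NormedAddCommGroup E] [NormedSpace ℝ E] {D : Set E}
    (hDbdd : Bornology.IsBounded D) (hD0 : 0 ∈ interior D) :
    ∃ c > 0, ∀ x, c * ‖x‖ ≤ gauge D x := by
  obtain ⟨R, hR, hDR⟩ := hDbdd.subset_closedBall_lt 0 0
  refine ⟨R⁻¹, by positivity, fun x => ?_⟩
  rw [inv_mul_eq_div]
  exact le_gauge_of_subset_closedBall (absorbent_nhds_zero (mem_interior_iff_mem_nhds.1 hD0))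
    hR.le hDR

lemma exists_eq_smul_mem_frontier_iff {E : Type*} [NormedAddCommGroup E] [NormedSpace ℝ E]
    {D : Set E} (hDconvex : Convex ℝ D) (hD0 : 0 ∈ interior D) {Q : Set ℝ}
    (hQpos : Q ⊆ Set.Ioi 0) {x : E} :
    (∃ q ∈ Q, ∃ w ∈ frontier D, x = q • w) ↔ gauge D x ∈ Q := by
  have hnhds := mem_interior_iff_mem_nhds.1 hD0
  constructor
  · rintro ⟨q, hq, w, hw, rfl⟩
    rw [gauge_smul_of_nonneg (hQpos hq).le, (gauge_eq_one_iff_mem_frontier hDconvex hnhds).2 hw]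
    simpa using hq
  · intro hx
    have hpos : 0 < gauge D x := hQpos hx
    refine ⟨_, hx, (gauge D x)⁻¹ • x, ?_, (smul_inv_smul₀ hpos.ne' x).symm⟩
    rw [← gauge_eq_one_iff_mem_frontier hDconvex hnhds, gauge_smul_of_nonneg (by positivity),
      smul_eq_mul, inv_mul_cancel₀ hpos.ne']

lemma exists_width_lt_of_smul_notMem_sub {E : Type*} [NormedAddCommGroup E]
    [InnerProductSpace ℝ E] [CompleteSpace E] {Ω : Set E} (hΩ : IsCompact Ω)
    (hΩconvex : Convex ℝ Ω) (hΩne : Ω.Nonempty) {d : ℝ} (hd : 0 ≤ d) {v : E}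
    (hv : d • v ∉ Ω - Ω) :
    ∃ (u : E) (σ : ℝ), ⟪v, u⟫ = 1 ∧ 0 ≤ σ ∧ σ < d ∧ ∀ ω ∈ Ω, ∀ ω' ∈ Ω, ⟪u, ω - ω'⟫ ≤ σ := by
  have hcompact : IsCompact (Ω - Ω) := by
    rw [sub_eq_add_neg]
    exact hΩ.add hΩ.neg
  obtain ⟨f, s, hs, hsv⟩ :=
    geometric_hahn_banach_closed_point (hΩconvex.sub hΩconvex) hcompact.isClosed hv
  obtain ⟨ω₀, hω₀⟩ := hΩne
  have hs0 : 0 < s := by simpa using hs (ω₀ - ω₀) (Set.sub_mem_sub hω₀ hω₀)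
  rw [map_smul, smul_eq_mul] at hsv
  have hfv : 0 < f v := pos_of_mul_pos_right (hs0.trans hsv) hd
  obtain ⟨g, rfl⟩ := (InnerProductSpace.toDual ℝ E).surjective f
  rw [InnerProductSpace.toDual_apply_apply, real_inner_comm] at hsv hfv
  refine ⟨⟪v, g⟫⁻¹ • g, s / ⟪v, g⟫, ?_, by positivity, (div_lt_iff₀ hfv).2 hsv,
    fun ω hω ω' hω' => ?_⟩
  · rw [inner_smul_right, inv_mul_cancel₀ hfv.ne']
  · rw [real_inner_smul_left, inv_mul_eq_div]
    gcongr
    exact (hs _ (Set.sub_mem_sub hω hω')).le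

lemma exists_normalized_of_not_isSamplingSet (h : ¬ IsSamplingSet Ω P) {ε : ℝ} (hε : 0 < ε) :
    ∃ f : V → ℂ, MemBernstein Ω f ∧ (∀ x, ‖f x‖ ≤ 1) ∧ (∃ x, 1 / 2 ≤ ‖f x‖) ∧
      ∀ y ∈ P, ‖f y‖ ≤ ε := by
  rw [IsSamplingSet] at h
  push Not at h
  obtain ⟨f, hf, x, hx⟩ := h ε⁻¹ (by positivity)
  obtain ⟨C, hC⟩ := hf.2.1
  have hfP : ∀ y ∈ P, ‖f y‖ ≤ sSup ((fun p => ‖f p‖) '' P) := fun y hy =>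
    le_csSup ⟨C, by rintro _ ⟨y, -, rfl⟩; exact hC y⟩ ⟨y, hy, rfl⟩
  have hfx : 0 < ‖f x‖ := hx.trans_le' <|
    mul_nonneg (by positivity) (Real.sSup_nonneg (by rintro _ ⟨y, -, rfl⟩; positivity))
  set M := ⨆ y, ‖f y‖ with hM
  have hfM : ∀ y, ‖f y‖ ≤ M := le_ciSup ⟨C, by rintro _ ⟨y, rfl⟩; exact hC y⟩
  have hMpos : 0 < M := hfx.trans_le (hfM x)
  obtain ⟨x₀, hx₀⟩ := exists_lt_of_lt_ciSup (hM ▸ half_lt_self hMpos)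
  have hnorm : ∀ y, ‖((M⁻¹ : ℝ) : ℂ) * f y‖ = ‖f y‖ / M := fun y => by
    rw [norm_mul, Complex.norm_real, Real.norm_of_nonneg (by positivity), inv_mul_eq_div]
  refine ⟨fun y => ((M⁻¹ : ℝ) : ℂ) * f y, hf.const_mul _, fun y => ?_, ⟨x₀, ?_⟩, fun y hy => ?_⟩
  · rw [hnorm, div_le_one hMpos]
    exact hfM y
  · rw [hnorm, le_div_iff₀ hMpos]
    linarith
  · rw [hnorm, div_le_iff₀ hMpos]
    rw [inv_mul_lt_iff₀ hε] at hx
    exact (hfP y hy).trans (hx.le.trans (mul_le_mul_of_nonneg_left (hfM x) hε.le))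

lemma tendsto_apply_of_lipschitzWith {X Y ι : Type*} [PseudoMetricSpace X] [PseudoMetricSpace Y]
    {l : Filter ι} {K : ℝ≥0} {f : ι → X → Y} (hf : ∀ n, LipschitzWith K (f n)) {z : ι → X}
    {z₀ : X} (hz : Tendsto z l (𝓝 z₀)) {y : Y} (hfz : Tendsto (fun n => f n (z n)) l (𝓝 y)) :
    Tendsto (fun n => f n z₀) l (𝓝 y) := by
  refine hfz.congr_dist (squeeze_zero (fun _ => dist_nonneg) (fun n => (hf n).dist_le_mul _ _) ?_)
  simpa using (tendsto_iff_dist_tendsto_zero.1 hz).const_mul (K : ℝ)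

lemma exists_weakLimit_of_not_isSamplingSet (hΩ : IsCompact Ω) (h : ¬ IsSamplingSet Ω P) :
    ∃ (g : V → ℂ) (x : ℕ → V), MemBernstein Ω g ∧ g 0 ≠ 0 ∧
      ∀ (l : Filter ℕ) [l.NeBot], l ≤ atTop → ∀ (z : ℕ → V) (z₀ : V), Tendsto z l (𝓝 z₀) →
        (∀ᶠ n in l, x n + z n ∈ P) → g z₀ = 0 := by
  choose f hf hf1 hfx hfP using fun n : ℕ =>
    exists_normalized_of_not_isSamplingSet h (Nat.one_div_pos_of_nat (α := ℝ) (n := n))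
  choose x hx using hfx
  obtain ⟨K, hK⟩ := MemBernstein.exists_lipschitzWith hΩ
  obtain ⟨g, φ, hφ, hg, hgΩ⟩ := MemBernstein.exists_subseq_tendsto hΩ
    (f := fun n y => f n (y + x n)) (ε := fun _ => 0) (M := 1) (fun _ => zero_le_one)
    tendsto_const_nhds (fun n => ((hf n).comp_add_right (x n)).mono (self_subset_cthickening _))
    (fun n y => hf1 n _)
  refine ⟨g, x ∘ φ, hgΩ, fun hg0 => ?_, fun l _ hl z z₀ hz hP => ?_⟩
  · have : 1 / 2 ≤ ‖g 0‖ :=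
      ge_of_tendsto (hg 0).norm (Eventually.of_forall fun n => by simpa using hx (φ n))
    norm_num [hg0] at this
  · have hlip : ∀ n, LipschitzWith (K * 1) fun y => f (φ n) (y + x (φ n)) := fun n =>
      hK _ ((hf (φ n)).comp_add_right _) 1 fun y => by simpa using hf1 (φ n) _
    refine tendsto_nhds_unique ((hg z₀).mono_left hl) (tendsto_apply_of_lipschitzWith hlip hz ?_)
    refine squeeze_zero_norm' ?_
      ((tendsto_one_div_add_atTop_nhds_zero_nat.comp hφ.tendsto_atTop).mono_left hl)
    filter_upwards [hP] with n hn
    exact hfP (φ n) _ (add_comm (z n) _ ▸ hn)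

end Sampling

section Sufficiency

section Uniqueness

variable [Fact (Module.finrank ℝ V = 2)] {Ω : Set V} {w e v u : V} {Q : Set ℝ} {σ : ℝ} {f : V → ℂ}

lemma MemBernstein.eq_zero_of_isSideGradient (hΩ : IsCompact Ω) (hf : MemBernstein Ω f)
    (hQ : UniformlyDiscrete Q) (hQpos : Q ⊆ Set.Ioi 0) (hw : w ≠ 0) (he : e ≠ 0)
    (hwe : ⟪w, e⟫ = 0) {p : V → ℝ} (hp : ∀ x, 0 ≤ p x) (hgrad : IsSideGradient p w e v)
    (hvu : ⟪v, u⟫ = 1) (hσ0 : 0 ≤ σ) (hσQ : σ < lowerUniformDensity (Q ∪ -Q))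
    (hσ : ∀ ω ∈ Ω, ∀ ω' ∈ Ω, ⟪u, ω - ω'⟫ ≤ σ) (hzero : ∀ y, p y ∈ Q → f y = 0) (x : V) :
    f x = 0 := by
  obtain ⟨d, hσd, hdQ⟩ := exists_between hσQ
  have hrate : ∀ᶠ κ in 𝓝[>] (0 : ℝ), σ < d * (1 - κ * ‖u‖) := nhdsWithin_le_nhds <|
    (Continuous.tendsto' (by fun_prop) (0 : ℝ) d (by simp)).eventually_const_lt hσd
  obtain ⟨κ, hκ, hκ0⟩ := (hrate.and self_mem_nhdsWithin).exists
  obtain ⟨τ, hτ, hlin⟩ := hgrad κ hκ0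
  obtain ⟨L, hdense, hL⟩ :=
    ((hQ.eventually_forall_mul_le_ncard hQpos hdQ).and (eventually_gt_atTop 0)).exists
  exact hf.eq_zero_of_eq_zero_on_cone hΩ (fun x hx t ht => smul_mem_sideCone hx (le_of_lt ht))
    (nonempty_interior_sideCone hw he hwe hτ) hL (hσ0.trans_lt hσd) hσ0 hlin
    (fun y _ => hdense _ (hp y)) (fun y _ => hzero y) hvu hσ hκ x

lemma MemBernstein.eq_zero_of_limitLevels (hΩ : IsCompact Ω) (hf : MemBernstein Ω f)
    (hQ : UniformlyDiscrete Q) (hQpos : Q ⊆ Set.Ioi 0) (hw : w ≠ 0) (he : e ≠ 0)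
    (hwe : ⟪w, e⟫ = 0) {𝒰 : Ultrafilter ℕ} {t : ℕ → ℝ} (ht : Tendsto t 𝒰 atTop)
    (hvu : ⟪v, u⟫ = 1) (hσ0 : 0 ≤ σ) (hσQ : σ < lowerUniformDensity (Q ∪ -Q))
    (hσ : ∀ ω ∈ Ω, ∀ ω' ∈ Ω, ⟪u, ω - ω'⟫ ≤ σ)
    (hzero : ∀ y, 0 ≤ ⟪y, e⟫ → ⟪v, y⟫ ∈ limitLevels 𝒰 Q t → f y = 0) (x : V) : f x = 0 := by
  obtain ⟨d, hσd, hdQ⟩ := exists_between hσQ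
  obtain ⟨L, hL, hdense⟩ :=
    hQ.exists_forall_mul_le_ncard_limitLevels hQpos (hσ0.trans_lt hσd) hdQ ht
  exact hf.eq_zero_of_eq_zero_on_cone hΩ (ℓ := fun y => ⟪v, y⟫) (κ := 0)
    (fun x hx t ht => smul_mem_sideCone hx (le_of_lt ht))
    (nonempty_interior_sideCone hw he hwe one_pos) hL (hσ0.trans_lt hσd) hσ0
    (fun y _ z _ => by simp [inner_sub_right]) (fun y _ => hdense _)
    (fun y hy => hzero y (inner_nonneg_of_mem_sideCone hwe hy)) hvu hσ (by simpa using hσd) x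

end Uniqueness

section Levels

variable {E : Type*} [NormedAddCommGroup E] [InnerProductSpace ℝ E] {D : Set E}

lemma exists_gauge_eq_one [Nontrivial E] (hDbdd : Bornology.IsBounded D) (hD0 : 0 ∈ interior D) :
    ∃ w, gauge D w = 1 := by
  obtain ⟨x, hx⟩ := exists_ne (0 : E)
  have hpos := gauge_pos_of_isBounded hDbdd hD0 hx
  exact ⟨(gauge D x)⁻¹ • x, by
    rw [gauge_smul_of_nonneg (by positivity), smul_eq_mul, inv_mul_cancel₀ hpos.ne']⟩

lemma norm_inv_gauge_smul_le {c : ℝ} (hc : 0 < c) (hcD : ∀ x, c * ‖x‖ ≤ gauge D x) (x : E) :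
    ‖(gauge D x)⁻¹ • x‖ ≤ c⁻¹ := by
  rw [norm_smul, norm_inv, Real.norm_of_nonneg (gauge_nonneg _), inv_mul_eq_div]
  refine div_le_of_le_mul₀ (gauge_nonneg _) (by positivity) ?_
  rw [inv_mul_eq_div, le_div_iff₀ hc, mul_comm]
  exact hcD x

lemma exists_tendsto_or_tendsto_norm_atTop {ι X : Type*} [SeminormedAddCommGroup X] [ProperSpace X]
    (𝒰 : Ultrafilter ι) (x : ι → X) :
    (∃ a, Tendsto x 𝒰 (𝓝 a)) ∨ Tendsto (fun n => ‖x n‖) 𝒰 atTop := by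
  by_cases hbdd : ∃ R, ∀ᶠ n in (𝒰 : Filter ι), ‖x n‖ ≤ R
  · obtain ⟨R, hR⟩ := hbdd
    obtain ⟨a, -, ha⟩ := exists_tendsto_of_eventually_mem (isCompact_closedBall (0 : X) R)
      (hR.mono fun n hn => mem_closedBall_zero_iff.2 hn)
    exact .inl ⟨a, ha⟩
  · refine .inr (tendsto_atTop.2 fun R => ?_)
    have hR : ∀ᶠ n in 𝒰, ¬ ‖x n‖ ≤ R := Ultrafilter.eventually_not.2 fun h => hbdd ⟨R, h⟩
    exact hR.mono fun n hn => (not_le.1 hn).le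

lemma exists_ne_zero_inner_eq_zero_eventually_inner_nonneg [Fact (Module.finrank ℝ E = 2)]
    {ι : Type*} (𝒰 : Ultrafilter ι) (x : ι → E) {w : E} (hw : w ≠ 0) :
    ∃ e ≠ 0, ⟪w, e⟫ = 0 ∧ ∀ᶠ n in 𝒰, 0 ≤ ⟪x n, e⟫ := by
  obtain ⟨e, he, hwe⟩ := exists_ne_zero_inner_eq_zero hw
  by_cases h : ∀ᶠ n in 𝒰, 0 ≤ ⟪x n, e⟫
  · exact ⟨e, he, hwe, h⟩
  · refine ⟨-e, neg_ne_zero.2 he, by rw [inner_neg_right, hwe, neg_zero], ?_⟩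
    filter_upwards [Ultrafilter.eventually_not.2 h] with n hn
    rw [inner_neg_right]
    linarith

lemma exists_tendsto_inv_gauge_smul [ProperSpace E] (hDconvex : Convex ℝ D) {c : ℝ} (hc : 0 < c)
    (hcD : ∀ x, c * ‖x‖ ≤ gauge D x) (hD0 : 0 ∈ interior D)
    {ι : Type*} {𝒰 : Ultrafilter ι} {x : ι → E}
    (hx : Tendsto (fun n => gauge D (x n)) 𝒰 atTop) :
    ∃ w, gauge D w = 1 ∧ Tendsto (fun n => (gauge D (x n))⁻¹ • x n) 𝒰 (𝓝 w) := by
  obtain ⟨w, -, hw⟩ := exists_tendsto_of_eventually_mem (isCompact_closedBall (0 : E) c⁻¹)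
    (𝒰 := 𝒰) (.of_forall fun n => mem_closedBall_zero_iff.2 (norm_inv_gauge_smul_le hc hcD (x n)))
  refine ⟨w, ?_, hw⟩
  have hcont := continuous_gauge hDconvex (mem_interior_iff_mem_nhds.1 hD0)
  refine tendsto_nhds_unique ((hcont.tendsto w).comp hw) (tendsto_const_nhds.congr' ?_)
  filter_upwards [hx.eventually_gt_atTop 0] with n hn
  rw [Function.comp_apply, gauge_smul_of_nonneg (by positivity), smul_eq_mul,
    inv_mul_cancel₀ hn.ne']

lemma gauge_add_smul_eq {x : E} {q : ℝ} (hx : 0 < gauge D x) (hq : 0 ≤ q) :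
    gauge D (x + (q - gauge D x) • (gauge D x)⁻¹ • x) = q := by
  have hsum : x + (q - gauge D x) • (gauge D x)⁻¹ • x = (q / gauge D x) • x := by
    match_scalars
    field_simp
    ring
  rw [hsum, gauge_smul_of_nonneg (by positivity), smul_eq_mul, div_mul_cancel₀ _ hx.ne']

lemma exists_tendsto_gauge_add_eq {c : ℝ} (hc : 0 < c) (hcD : ∀ x, c * ‖x‖ ≤ gauge D x)
    {l : Filter ℕ} {x : ℕ → E} {y : E} {q : ℕ → ℝ} (hq : ∀ᶠ n in l, 0 ≤ q n)
    (hpos : ∀ᶠ n in l, 0 < gauge D (x n + y))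
    (hqx : Tendsto (fun n => q n - gauge D (x n + y)) l (𝓝 0)) :
    ∃ z : ℕ → E, Tendsto z l (𝓝 y) ∧ ∀ᶠ n in l, gauge D (x n + z n) = q n := by
  refine ⟨fun n => y + (q n - gauge D (x n + y)) • (gauge D (x n + y))⁻¹ • (x n + y), ?_, ?_⟩
  · have hcorrection : Tendsto (fun n => (q n - gauge D (x n + y)) •
        (gauge D (x n + y))⁻¹ • (x n + y)) l (𝓝 0) := by
      refine squeeze_zero_norm (fun n => ?_) (by simpa using hqx.norm.mul_const c⁻¹)
      rw [norm_smul]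
      exact mul_le_mul_of_nonneg_left (norm_inv_gauge_smul_le hc hcD _) (norm_nonneg _)
    simpa using hcorrection.const_add y
  · filter_upwards [hpos, hq] with n hn hqn
    rw [← add_assoc, gauge_add_smul_eq hn hqn]

end Levels

section Plane

variable {E : Type*} [NormedAddCommGroup E] [InnerProductSpace ℝ E] {D : Set E}
  [Fact (Module.finrank ℝ E = 2)]

lemma IsSideGradient.exists_tendsto_gauge_mem {c : ℝ} (hc : 0 < c)
    (hcD : ∀ x, c * ‖x‖ ≤ gauge D x) {w e v : E} (hw : w ≠ 0) (he : e ≠ 0) (hwe : ⟪w, e⟫ = 0)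
    (hgrad : IsSideGradient (gauge D) w e v) {Q : Set ℝ} (hQpos : Q ⊆ Set.Ioi 0)
    {l : Filter ℕ} {x : ℕ → E} (hx : Tendsto (fun n => gauge D (x n)) l atTop)
    (hxw : Tendsto (fun n => (gauge D (x n))⁻¹ • x n) l (𝓝 w)) (hxe : ∀ᶠ n in l, 0 ≤ ⟪x n, e⟫)
    {y : E} (hye : 0 ≤ ⟪y, e⟫) (hy : ⟪v, y⟫ ∈ limitLevels l Q fun n => gauge D (x n)) :
    ∃ z : ℕ → E, Tendsto z l (𝓝 y) ∧ ∀ᶠ n in l, gauge D (x n + z n) ∈ Q := by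
  obtain ⟨q, hqQ, hq⟩ := hy
  have hxyw : Tendsto (fun n => (gauge D (x n))⁻¹ • (x n + y)) l (𝓝 w) := by
    simpa [smul_add] using hxw.add ((tendsto_inv_atTop_zero.comp hx).smul_const y)
  have hxye : ∀ᶠ n in l, 0 ≤ ⟪x n + y, e⟫ := by
    filter_upwards [hxe] with n hn
    rw [inner_add_left]
    positivity
  have hgauge : Tendsto (fun n => gauge D (x n + y) - gauge D (x n)) l (𝓝 ⟪v, y⟫) :=
    hgrad.tendsto_sub tendsto_const_nhds fun τ hτ =>
      (eventually_mem_sideCone hw he hwe hx hxw hxe hτ).and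
        (eventually_mem_sideCone hw he hwe hx hxyw hxye hτ)
  have hpos : ∀ᶠ n in l, 0 < gauge D (x n + y) := by
    simpa using (hx.atTop_add hgauge).eventually_gt_atTop 0
  obtain ⟨z, hz, hzq⟩ := exists_tendsto_gauge_add_eq hc hcD
    (hqQ.mono fun n hn => (hQpos hn).le) hpos (by simpa using hq.sub hgauge)
  exact ⟨z, hz, (hzq.and hqQ).mono fun n ⟨hzn, hqn⟩ => hzn ▸ hqn⟩

end Plane

variable [Fact (Module.finrank ℝ V = 2)] {Ω D : Set V} {Q : Set ℝ}

lemma isSamplingSet_of_forall_notMem (hΩ : IsCompact Ω) (hΩconvex : Convex ℝ Ω)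
    (hΩne : Ω.Nonempty) (hDconvex : Convex ℝ D) (hDbdd : Bornology.IsBounded D)
    (hD0 : 0 ∈ interior D) (hQpos : Q ⊆ Set.Ioi 0) (hQ : UniformlyDiscrete Q)
    (hcond : ∀ v ∈ Set.extremePoints ℝ (polarSet D),
      lowerUniformDensity (Q ∪ -Q) • v ∉ Ω - Ω) :
    IsSamplingSet Ω {x | gauge D x ∈ Q} := by
  have : Nontrivial V := Module.nontrivial_of_finrank_pos (R := ℝ) (by
    rw [Fact.out (p := Module.finrank ℝ V = 2)]
    exact two_pos)
  by_contra hns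
  obtain ⟨g, x, hg, hg0, hgz⟩ := exists_weakLimit_of_not_isSamplingSet hΩ hns
  have hzero := hgz (hyperfilter ℕ) Nat.hyperfilter_le_atTop
  obtain ⟨c, hc, hcD⟩ := exists_smul_norm_le_gauge hDbdd hD0
  have hwidth : ∀ v ∈ Set.extremePoints ℝ (polarSet D), _ := fun v hv =>
    exists_width_lt_of_smul_notMem_sub hΩ hΩconvex hΩne hQ.lowerUniformDensity_union_neg_nonneg
      (hcond v hv)
  have hne : ∀ w, gauge D w = 1 → w ≠ 0 := by
    rintro w hw rfl
    simp at hw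
  obtain ⟨a, ha⟩ | hx := exists_tendsto_or_tendsto_norm_atTop (hyperfilter ℕ) x
  · obtain ⟨w, hw⟩ := exists_gauge_eq_one hDbdd hD0
    obtain ⟨e, he, hwe⟩ := exists_ne_zero_inner_eq_zero (hne w hw)
    obtain ⟨v, hv, -, hgrad⟩ := exists_mem_extremePoints_isSideGradient hDconvex hDbdd hD0 hw he hwe
    obtain ⟨u, σ, hvu, hσ0, hσQ, hσ⟩ := hwidth v hv
    have hshift := (hg.comp_add_right (-a)).eq_zero_of_isSideGradient hΩ hQ hQpos (hne w hw) he hwe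
      gauge_nonneg hgrad hvu hσ0 hσQ hσ (fun y hy => by
        rw [← sub_eq_add_neg]
        exact hzero (fun n => y - x n) _ (tendsto_const_nhds.sub ha) (by simpa using hy)) a
    exact hg0 (by simpa using hshift)
  · have hr := tendsto_atTop_mono (fun n => hcD (x n)) (hx.const_mul_atTop hc)
    obtain ⟨w, hw, hxw⟩ := exists_tendsto_inv_gauge_smul hDconvex hc hcD hD0 hr
    obtain ⟨e, he, hwe, hxe⟩ :=
      exists_ne_zero_inner_eq_zero_eventually_inner_nonneg (hyperfilter ℕ) x (hne w hw)
    obtain ⟨v, hv, -, hgrad⟩ := exists_mem_extremePoints_isSideGradient hDconvex hDbdd hD0 hw he hwe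
    obtain ⟨u, σ, hvu, hσ0, hσQ, hσ⟩ := hwidth v hv
    refine hg0 (hg.eq_zero_of_limitLevels hΩ hQ hQpos (hne w hw) he hwe hr hvu hσ0 hσQ hσ
      (fun y hye hy => ?_) 0)
    obtain ⟨z, hz, hzQ⟩ :=
      hgrad.exists_tendsto_gauge_mem hc hcD (hne w hw) he hwe hQpos hr hxw hxe hye hy
    exact hzero z y hz hzQ

end Sufficiency

section TrigSums

variable {η : ℝ} {F : ℝ → ℂ}

/-- The trigonometric sums, i.e. finite linear combinations of the characters of frequency `θ`,
with frequencies `|θ| ≤ η`. -/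
def trigSums (η : ℝ) : Submodule ℂ (ℝ → ℂ) :=
  Submodule.span ℂ ((fun θ s => (Real.fourierChar (θ * s) : ℂ)) '' Set.Icc (-η) η)

lemma trigSums_mono {η' : ℝ} (hη : η ≤ η') : trigSums η ≤ trigSums η' :=
  Submodule.span_mono (Set.image_mono (Set.Icc_subset_Icc (neg_le_neg hη) hη))

lemma memBernstein_fourierChar_mul_trigSum {Ω : Set V} {m v : V}
    (hΩ : ∀ θ ∈ Set.Icc (-η) η, m + θ • v ∈ Ω) (hF : F ∈ trigSums η) (t : ℝ) :
    MemBernstein Ω fun y => (Real.fourierChar ⟪m, y⟫ : ℂ) * F (⟪v, y⟫ + t) := by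
  induction hF using Submodule.span_induction with
  | mem _ h =>
    obtain ⟨θ, hθ, rfl⟩ := h
    convert (MemBernstein.fourierChar (hΩ θ hθ)).const_mul (Real.fourierChar (θ * t) : ℂ) using 2
      with y
    beta_reduce
    rw [inner_add_left, real_inner_smul_left v, mul_add, AddChar.map_add_eq_mul,
      AddChar.map_add_eq_mul]
    push_cast
    ring
  | zero => simpa using MemBernstein.zero
  | add F G _ _ hF hG => simpa [mul_add] using hF.add hG
  | smul c F _ hF => simpa [mul_left_comm] using hF.const_mul c

lemma memBernstein_of_mem_trigSums (hF : F ∈ trigSums η) :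
    MemBernstein (Set.Icc (-η) η) F := by
  simpa using memBernstein_fourierChar_mul_trigSum (m := (0 : ℝ)) (v := 1)
    (fun θ hθ => by simpa using hθ) hF 0

lemma exists_fourierChar_notMem {A : Set ℂ} (hA : A.Finite) :
    ∃ s : ℝ, (Real.fourierChar s : ℂ) ∉ A := by
  have : Infinite Circle :=
    have : Infinite (Set.Ioc (-Real.pi) Real.pi) :=
      (Set.Ioc_infinite (by linarith [Real.pi_pos])).to_subtype
    .of_injective _ Circle.argEquiv.symm.injective
  obtain ⟨z, hz⟩ :=
    (hA.preimage (f := fun z : Circle => (z : ℂ)) Circle.coe_injective.injOn).exists_notMem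
  refine ⟨Complex.arg z / (2 * Real.pi), fun h => hz ?_⟩
  rwa [Real.fourierChar_apply', mul_div_cancel₀ _ (by positivity), Circle.exp_arg] at h

lemma fourierChar_mul_eval_mem_trigSums {L : ℝ} (hL : 0 < L) {N : ℕ} {p : Polynomial ℂ}
    (hp : p.natDegree ≤ 2 * N) :
    (fun s => (Real.fourierChar (-(N / L * s)) : ℂ) * p.eval (Real.fourierChar (s / L) : ℂ)) ∈
      trigSums (N / L) := by
  have hsum : (fun s => (Real.fourierChar (-(N / L * s)) : ℂ) *
      p.eval (Real.fourierChar (s / L) : ℂ)) = ∑ k ∈ Finset.range (p.natDegree + 1),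
        p.coeff k • fun s => (Real.fourierChar (((k : ℝ) - N) / L * s) : ℂ) := by
    ext s
    simp only [Polynomial.eval_eq_sum_range, Finset.mul_sum, Finset.sum_apply, Pi.smul_apply,
      smul_eq_mul]
    refine Finset.sum_congr rfl fun k _ => ?_
    have hfreq : ((k : ℝ) - N) / L * s = -(N / L * s) + k • (s / L) := by
      rw [nsmul_eq_mul]
      ring
    rw [hfreq, AddChar.map_add_eq_mul, AddChar.map_nsmul_eq_pow]
    push_cast
    ring
  rw [hsum]
  refine Submodule.sum_mem _ fun k hk => Submodule.smul_mem _ _ (Submodule.subset_span ⟨_, ?_, rfl⟩)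
  have hk : (k : ℝ) ≤ 2 * N := mod_cast (Finset.mem_range_succ_iff.1 hk).trans hp
  rw [Set.mem_Icc, ← neg_div]
  constructor <;> gcongr <;> linarith

lemma exists_mem_trigSums_eq_zero {L : ℝ} (hL : 0 < L) {N : ℕ} {S : Finset ℝ}
    (hS : S.card ≤ 2 * N) :
    ∃ F ∈ trigSums (N / L), Function.Periodic (fun s => ‖F s‖) L ∧ (∀ q ∈ S, F q = 0) ∧
      ∃ s, F s ≠ 0 := by
  set p : Polynomial ℂ := ∏ q ∈ S, (Polynomial.X - Polynomial.C (Real.fourierChar (q / L) : ℂ))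
    with hp
  have hdeg : p.natDegree ≤ 2 * N := by
    rwa [hp, Polynomial.natDegree_prod_of_monic _ _ fun q _ => Polynomial.monic_X_sub_C _,
      Finset.sum_congr rfl fun q _ => Polynomial.natDegree_X_sub_C _, Finset.sum_const,
      smul_eq_mul, mul_one]
  have hp0 : p ≠ 0 := (Polynomial.monic_prod_of_monic _ _ fun q _ =>
    Polynomial.monic_X_sub_C _).ne_zero
  refine ⟨_, fourierChar_mul_eval_mem_trigSums hL hdeg, fun s => ?_, fun q hq => ?_, ?_⟩
  · have hchar : Real.fourierChar ((s + L) / L) = Real.fourierChar (s / L) := by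
      rw [add_div, div_self hL.ne', AddChar.map_add_eq_mul, Real.fourierChar_apply' 1, mul_one,
        Circle.exp_two_pi, mul_one]
    simp only [norm_mul, Circle.norm_coe, hchar]
  · simp only [hp, Polynomial.eval_prod]
    rw [Finset.prod_eq_zero hq (by simp), mul_zero]
  · obtain ⟨s, hs⟩ := exists_fourierChar_notMem (p.rootSet_finite ℂ)
    refine ⟨s * L, mul_ne_zero (Circle.coe_ne_zero _) fun h => hs ?_⟩
    rw [mul_div_cancel_right₀ _ hL.ne'] at h
    simpa [Polynomial.mem_rootSet, hp0] using h

lemma exists_mem_trigSums_norm_eq_one {L : ℝ} (hL : 0 < L) {N : ℕ} {S : Finset ℝ}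
    (hS : S.card ≤ 2 * N) (s : ℝ) :
    ∃ F ∈ trigSums (N / L), Function.Periodic (fun r => ‖F r‖) L ∧ (∀ q ∈ S, F q = 0) ∧
      (∀ r, ‖F r‖ ≤ 1) ∧ ∃ t ∈ Set.Ico s (s + L), ‖F t‖ = 1 := by
  obtain ⟨F, hF, hper, hzero, r₀, hr₀⟩ := exists_mem_trigSums_eq_zero hL hS
  obtain ⟨t₀, -, ht₀⟩ := (isCompact_Icc (a := s) (b := s + L)).exists_isMaxOn
    ⟨s, le_rfl, by linarith⟩ (memBernstein_of_mem_trigSums hF).1.norm.continuousOn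
  obtain ⟨t, ht, htt₀⟩ := hper.exists_mem_Ico hL t₀ s
  have hmax (r : ℝ) : ‖F r‖ ≤ ‖F t‖ := by
    obtain ⟨r', hr', hrr'⟩ := hper.exists_mem_Ico hL r s
    rw [hrr', ← htt₀]
    exact ht₀ (Set.Ico_subset_Icc_self hr')
  have hpos : 0 < ‖F t‖ := (norm_pos_iff.2 hr₀).trans_le (hmax r₀)
  have hnorm (r : ℝ) : ‖((‖F t‖⁻¹ : ℝ) • F) r‖ = ‖F r‖ / ‖F t‖ := by
    rw [Pi.smul_apply, norm_smul, norm_inv, norm_norm, inv_mul_eq_div]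
  refine ⟨(‖F t‖⁻¹ : ℝ) • F, Submodule.smul_of_tower_mem _ _ hF, fun r => ?_, fun q hq => ?_,
    fun r => ?_, t, ht, ?_⟩
  · beta_reduce
    rw [hnorm, hnorm]
    exact congrArg (· / ‖F t‖) (hper r)
  · rw [Pi.smul_apply, hzero q hq, smul_zero]
  · rw [hnorm, div_le_one hpos]
    exact hmax r
  · rw [hnorm, div_self hpos.ne']

lemma lt_abs_sub_of_lipschitzWith_of_eq_zero_on_grid {C : ℝ≥0} (hF : LipschitzWith C F) {s h : ℝ}
    (hh : 0 < h) {J : ℕ} (hzero : ∀ j ∈ Finset.Icc (-(J : ℤ)) J, F (s + j * h) = 0) {r : ℝ}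
    (hr : C * (h / 2) < ‖F r‖) : J * h < |r - s| := by
  by_contra! hrs
  set j := round ((r - s) / h)
  have hround : |(r - s) / h - j| ≤ 1 / 2 := abs_sub_round _
  have hjJ : |j| ≤ (J : ℤ) := by
    have hle : |(r - s) / h| ≤ J := by rwa [abs_div, abs_of_pos hh, div_le_iff₀ hh]
    have hlt : |(j : ℝ)| < J + 1 := by
      linarith [abs_sub_abs_le_abs_sub (j : ℝ) ((r - s) / h), abs_sub_comm (j : ℝ) ((r - s) / h)]
    exact Int.lt_add_one_iff.1 (mod_cast hlt)
  have hdist : dist r (s + j * h) ≤ h / 2 := by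
    have : r - (s + j * h) = ((r - s) / h - j) * h := by
      field_simp
      ring
    rw [Real.dist_eq, this, abs_mul, abs_of_pos hh]
    linarith [mul_le_mul_of_nonneg_right hround hh.le]
  refine hr.not_ge ?_
  calc ‖F r‖ = dist (F r) (F (s + j * h)) := by
        rw [hzero j (Finset.mem_Icc.2 (abs_le.1 hjJ)), dist_zero_right]
    _ ≤ C * dist r (s + j * h) := hF.dist_le_mul _ _
    _ ≤ C * (h / 2) := by gcongr

lemma UniformlyDiscrete.exists_mem_trigSums_eq_zero_on_grid {Q : Set ℝ} (hQ : UniformlyDiscrete Q)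
    (hQpos : Q ⊆ Set.Ioi 0) {d : ℝ} (hd : lowerUniformDensity (Q ∪ -Q) < d) (h : ℝ) (J : ℕ)
    (T : ℝ) :
    ∃ L : ℝ, ∃ s ≥ T, ∃ F ∈ trigSums (d / 2), Function.Periodic (fun r => ‖F r‖) L ∧
      (∀ q ∈ Q ∩ Set.Ico s (s + L), F q = 0) ∧
      (∀ j ∈ Finset.Icc (-(J : ℤ)) J, F (s + j * h) = 0) ∧
      (∀ r, ‖F r‖ ≤ 1) ∧ ∃ t ∈ Set.Ico s (s + L), ‖F t‖ = 1 := by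
  classical
  obtain ⟨d₁, hd₁, hd₁d⟩ := exists_between hd
  obtain ⟨L, hL, hLJ⟩ : ∃ L > 0, 2 * J + 3 ≤ (d - d₁) * L :=
    ⟨(2 * J + 3) / (d - d₁), div_pos (by positivity) (sub_pos.2 hd₁d),
      (mul_div_cancel₀ _ (sub_pos.2 hd₁d).ne').ge⟩
  obtain ⟨s, hsT, hs⟩ := hQ.exists_ncard_inter_Ico_lt hQpos hd₁ hL T
  have hfin : (Q ∩ Set.Ico s (s + L)).Finite := hQ.finite_inter_Ico _ _
  set grid : Finset ℝ := (Finset.Icc (-(J : ℤ)) J).image fun j : ℤ => s + j * h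
  set N := ⌊d / 2 * L⌋₊
  have hcard : (hfin.toFinset ∪ grid).card ≤ 2 * N := by
    have hgrid : grid.card ≤ 2 * J + 1 :=
      Finset.card_image_le.trans (by rw [Int.card_Icc]; omega)
    rw [Set.ncard_eq_toFinset_card _ hfin] at hs
    have hunion : ((hfin.toFinset ∪ grid).card : ℝ) ≤ hfin.toFinset.card + (2 * J + 1) :=
      mod_cast (Finset.card_union_le _ _).trans (Nat.add_le_add_left hgrid _)
    have : ((hfin.toFinset ∪ grid).card : ℝ) ≤ 2 * N := by
      linarith [Nat.lt_floor_add_one (d / 2 * L)]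
    exact_mod_cast this
  obtain ⟨F, hF, hper, hzero, hF1, ht⟩ := exists_mem_trigSums_norm_eq_one hL hcard s
  have hd0 : 0 ≤ d := hQ.lowerUniformDensity_union_neg_nonneg.trans hd.le
  have hNd : N / L ≤ d / 2 := (div_le_iff₀ hL).2 (Nat.floor_le (by positivity))
  exact ⟨L, s, hsT, F, trigSums_mono hNd hF, hper,
    fun q hq => hzero q (Finset.mem_union_left _ (hfin.mem_toFinset.2 hq)),
    fun j hj => hzero _ (Finset.mem_union_right _ (Finset.mem_image_of_mem _ hj)), hF1, ht⟩

-- The zeros on the grid keep the maximum point `t` away from both ends of a period, so that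
-- the zeros on `Q` fill a long interval around `t`.
lemma UniformlyDiscrete.exists_mem_trigSums {Q : Set ℝ} (hQ : UniformlyDiscrete Q)
    (hQpos : Q ⊆ Set.Ioi 0) {d : ℝ} (hd : lowerUniformDensity (Q ∪ -Q) < d) (K T : ℝ) :
    ∃ F ∈ trigSums (d / 2), ∃ t ≥ T, (∀ s, ‖F s‖ ≤ 1) ∧ ‖F t‖ = 1 ∧
      ∀ q ∈ Q, |q - t| ≤ K → F q = 0 := by
  obtain ⟨B, hB⟩ := MemBernstein.exists_lipschitzWith
    (isCompact_Icc : IsCompact (Set.Icc (-(d / 2)) (d / 2)))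
  set h : ℝ := 1 / (B + 1) with hh
  have hh0 : 0 < h := by positivity
  have hBh : B * h ≤ 1 := by
    rw [hh, mul_one_div, div_le_one (by positivity)]
    linarith
  obtain ⟨L, s, hsT, F, hF, hper, hzeroQ, hzero, hF1, t, ht, hFt⟩ :=
    hQ.exists_mem_trigSums_eq_zero_on_grid hQpos hd h ⌈K / h⌉₊ T
  have hfar (r : ℝ) (hr : ‖F r‖ = 1) : K < |r - s| := by
    refine ((div_le_iff₀ hh0).1 (Nat.le_ceil _)).trans_lt <|
      lt_abs_sub_of_lipschitzWith_of_eq_zero_on_grid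
        (hB F (memBernstein_of_mem_trigSums hF) 1 hF1) hh0 hzero ?_
    rw [hr, NNReal.coe_mul, NNReal.coe_one]
    linarith
  have hleft := hfar t hFt
  have hright := hfar (t - L) (hFt ▸ hper.sub_eq t)
  rw [abs_of_nonneg (by linarith [ht.1])] at hleft
  rw [abs_of_nonpos (by linarith [ht.2])] at hright
  refine ⟨F, hF, t, by linarith [ht.1], hF1, hFt, fun q hq hqt => hzeroQ q ⟨hq, ?_⟩⟩
  obtain ⟨hqt₁, hqt₂⟩ := abs_le.1 hqt
  constructor <;> linarith

end TrigSums

section Necessity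

section LimitLevels

variable {Ω : Set V} {Q : Set ℝ}

lemma midpoint_add_smul_mem_cthickening {E : Type*} [NormedAddCommGroup E] [NormedSpace ℝ E]
    {Ω : Set E} (hΩconvex : Convex ℝ Ω) {ω₁ ω₂ v : E} (hω₁ : ω₁ ∈ Ω) (hω₂ : ω₂ ∈ Ω) {d ε : ℝ}
    (hω : ω₁ - ω₂ = d • v) (hd : 0 ≤ d) (hε : 0 < ε) {θ : ℝ} (hθ : |θ| ≤ (d + ε) / 2) :
    (1 / 2 : ℝ) • (ω₁ + ω₂) + θ • v ∈ cthickening (ε * ‖v‖) Ω := by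
  set s := θ / (d + ε)
  have hs : |s| ≤ 1 / 2 := by
    rw [abs_div, abs_of_pos (by positivity : 0 < d + ε), div_le_iff₀ (by positivity)]
    linarith
  have hθs : θ - s * d = s * ε := by
    have : s * (d + ε) = θ := div_mul_cancel₀ _ (by positivity)
    linarith
  refine mem_cthickening_of_dist_le _ ((1 / 2 : ℝ) • (ω₁ + ω₂) + (s * d) • v) _ _ ?_ ?_
  · have hcombo : (1 / 2 : ℝ) • (ω₁ + ω₂) + (s * d) • v =
        (1 / 2 + s) • ω₁ + (1 / 2 - s) • ω₂ := by
      rw [mul_smul, ← hω]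
      module
    rw [hcombo]
    have := abs_le.1 hs
    exact hΩconvex hω₁ hω₂ (by linarith) (by linarith) (by ring)
  · rw [dist_add_left, dist_eq_norm, ← sub_smul, norm_smul, Real.norm_eq_abs, hθs, abs_mul,
      abs_of_pos hε]
    gcongr
    exact mul_le_of_le_one_left hε.le (by linarith)

lemma tendsto_zero_of_mem_limitLevels {η : ℝ} {F : ℕ → ℝ → ℂ} (hF : ∀ n, F n ∈ trigSums η)
    (hF1 : ∀ n s, ‖F n s‖ ≤ 1) {l : Filter ℕ} {K : ℕ → ℝ} (hK : Tendsto K l atTop) {t : ℕ → ℝ}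
    (hzero : ∀ n, ∀ q ∈ Q, |q - t n| ≤ K n → F n q = 0) {a : ℝ} (ha : a ∈ limitLevels l Q t) :
    Tendsto (fun n => F n (a + t n)) l (𝓝 0) := by
  obtain ⟨q, hqQ, hq⟩ := ha
  obtain ⟨B, hB⟩ := MemBernstein.exists_lipschitzWith
    (isCompact_Icc : IsCompact (Set.Icc (-η) η))
  have hlip : ∀ n, LipschitzWith (B * 1) fun s => F n (s + t n) := fun n =>
    .of_dist_le_mul fun r s => by
      simpa using (hB _ (memBernstein_of_mem_trigSums (hF n)) 1 (hF1 n)).dist_le_mul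
        (r + t n) (s + t n)
  refine tendsto_apply_of_lipschitzWith hlip hq (tendsto_const_nhds.congr' ?_)
  filter_upwards [hqQ, hq.abs.eventually_lt_const (lt_add_one |a|),
    hK.eventually_ge_atTop (|a| + 1)] with n hnQ hna hnK
  rw [sub_add_cancel, hzero n _ hnQ (hna.le.trans hnK)]

lemma exists_memBernstein_eq_zero_on_limitLevels (hΩ : IsCompact Ω) (hΩconvex : Convex ℝ Ω)
    (hQpos : Q ⊆ Set.Ioi 0) (hQ : UniformlyDiscrete Q) {v : V}
    (hv : lowerUniformDensity (Q ∪ -Q) • v ∈ Ω - Ω) :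
    ∃ (g : V → ℂ) (t : ℕ → ℝ), MemBernstein Ω g ∧ Tendsto t atTop atTop ∧ (∀ x, ‖g x‖ ≤ 1) ∧
      ‖g 0‖ = 1 ∧ ∀ (l : Filter ℕ) [l.NeBot], l ≤ atTop → ∀ y, ⟪v, y⟫ ∈ limitLevels l Q t →
        g y = 0 := by
  obtain ⟨ω₁, hω₁, ω₂, hω₂, hω⟩ := hv
  set d := lowerUniformDensity (Q ∪ -Q)
  have hd : 0 ≤ d := hQ.lowerUniformDensity_union_neg_nonneg
  set ε : ℕ → ℝ := fun n => 1 / ((n + 1) * (‖v‖ + 1)) with hε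
  have hε0 (n) : 0 < ε n := by positivity
  have hεv (n) : ε n * ‖v‖ ≤ 1 / ((n : ℝ) + 1) := by
    rw [hε, div_mul_eq_mul_div, div_le_div_iff₀ (by positivity) (by positivity)]
    nlinarith [norm_nonneg v, (Nat.cast_nonneg n : (0 : ℝ) ≤ n)]
  have hε1 (n) : ε n ≤ 1 := by
    rw [hε, div_le_one (by positivity)]
    nlinarith [norm_nonneg v, (Nat.cast_nonneg n : (0 : ℝ) ≤ n)]
  choose F hF t ht hF1 hFt hFQ using fun n : ℕ =>
    hQ.exists_mem_trigSums hQpos (lt_add_of_pos_right d (hε0 n)) n n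
  set f : ℕ → V → ℂ := fun n y =>
    (Real.fourierChar ⟪(1 / 2 : ℝ) • (ω₁ + ω₂), y⟫ : ℂ) * F n (⟪v, y⟫ + t n)
  have hnorm (n y) : ‖f n y‖ = ‖F n (⟪v, y⟫ + t n)‖ := by
    rw [norm_mul, Circle.norm_coe, one_mul]
  have hfΩ (n : ℕ) : MemBernstein (cthickening (1 / ((n : ℝ) + 1)) Ω) (f n) :=
    memBernstein_fourierChar_mul_trigSum (fun θ hθ => cthickening_mono (hεv n) Ω
      (midpoint_add_smul_mem_cthickening hΩconvex hω₁ hω₂ hω hd (hε0 n) (abs_le.2 hθ))) (hF n) _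
  obtain ⟨g, φ, hφ, hg, hgΩ⟩ := MemBernstein.exists_subseq_tendsto hΩ
    (fun n => div_le_one_of_le₀ (by simp) (by positivity))
    tendsto_one_div_add_atTop_nhds_zero_nat hfΩ (M := 1) fun n x => (hnorm n x).trans_le (hF1 n _)
  refine ⟨g, t ∘ φ, hgΩ,
    (tendsto_atTop_mono ht tendsto_natCast_atTop_atTop).comp hφ.tendsto_atTop,
    fun x => le_of_tendsto (hg x).norm (.of_forall fun n => (hnorm _ x).trans_le (hF1 _ _)),
    tendsto_nhds_unique (hg 0).norm (tendsto_const_nhds.congr fun n => ?_), fun l _ hl y hy => ?_⟩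
  · rw [hnorm, inner_zero_right, zero_add, hFt]
  · have hlim := tendsto_zero_of_mem_limitLevels (F := fun n => F (φ n)) (η := (d + 1) / 2)
      (fun n => trigSums_mono (by linarith [hε1 (φ n)]) (hF _)) (fun n => hF1 _)
      (tendsto_natCast_atTop_atTop.comp (hφ.tendsto_atTop.mono_left hl)) (fun n => hFQ _) hy
    refine tendsto_nhds_unique ((hg y).mono_left hl) (tendsto_zero_iff_norm_tendsto_zero.2 ?_)
    simpa only [hnorm, norm_zero] using! hlim.norm

end LimitLevels

section Decay

variable {Ω : Set V} {g : V → ℂ}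

lemma exists_integrable_fourier_zero_eq_one :
    ∃ η : V → ℂ, Integrable η ∧ (∀ ξ, η ξ ≠ 0 → ‖ξ‖ ≤ 1) ∧ 𝓕 η 0 = 1 ∧ ∀ x, ‖𝓕 η x‖ ≤ 1 := by
  let b : ContDiffBump (0 : V) := ⟨1 / 2, 1, by norm_num, by norm_num⟩
  refine ⟨fun ξ => (b.normed volume ξ : ℂ), b.integrable_normed.ofReal, fun ξ hξ => ?_, ?_,
    fun x => ?_⟩
  · have hsupp : ξ ∈ Function.support (b.normed volume) := fun h0 => hξ (by simp [h0])
    rw [b.support_normed_eq, mem_ball_zero_iff] at hsupp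
    exact hsupp.le
  · rw [Real.fourier_eq]
    simp only [inner_zero_right, neg_zero, AddChar.map_zero_eq_one, one_smul]
    rw [integral_complex_ofReal, b.integral_normed, Complex.ofReal_one]
  · refine (norm_fourier_le_integral_norm _ x).trans_eq ?_
    simp only [Complex.norm_real, Real.norm_of_nonneg (b.nonneg_normed _)]
    exact b.integral_normed

lemma MemBernstein.fourierChar_mul_comp_smul_mul_fourier (hg : MemBernstein Ω g)
    (hΩconvex : Convex ℝ Ω) {ω₀ : V} {c : ℝ} (hc : 0 < c) (hball : closedBall ω₀ c ⊆ Ω)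
    {η : V → ℂ} (hη : Integrable η) (hsupp : ∀ ξ, η ξ ≠ 0 → ‖ξ‖ ≤ 1) {ε : ℝ}
    (hε : ε ∈ Set.Ioo (0 : ℝ) 1) :
    MemBernstein Ω fun y =>
      (Real.fourierChar ⟪ε • ω₀, y⟫ : ℂ) * (g ((1 - ε) • y) * 𝓕 η ((c * ε) • y)) := by
  have hcε : 0 < c * ε := mul_pos hc hε.1
  have hdilate := hg.comp_smul (Ω' := ((1 - ε) / (c * ε)) • Ω)
    (div_pos (sub_pos.2 hε.2) hcε).ne' fun ω hω => Set.smul_mem_smul_set hω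
  have hprod := hdilate.mul_fourier hη (Ω' := {x | (c * ε) • x + ε • ω₀ ∈ Ω}) (by
    rintro _ ⟨ω, hω, rfl⟩ ξ hξ
    have hcombo : (c * ε) • (((1 - ε) / (c * ε)) • ω - ξ) + ε • ω₀ =
        (1 - ε) • ω + ε • (ω₀ - c • ξ) := by
      rw [smul_sub, smul_smul, mul_div_cancel₀ _ hcε.ne']
      module
    change _ ∈ Ω
    rw [hcombo]
    refine hΩconvex hω (hball ?_) (sub_pos.2 hε.2).le hε.1.le (by ring)
    rw [mem_closedBall, dist_eq_norm, sub_sub_cancel_left, norm_neg, norm_smul,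
      Real.norm_of_nonneg hc.le]
    exact mul_le_of_le_one_right hc.le (hsupp ξ hξ))
  convert (hprod.comp_smul hcε.ne' (Ω' := {x | x + ε • ω₀ ∈ Ω}) fun _ h => h).fourierChar_mul
    (Ω' := Ω) (ε • ω₀) (fun _ h => h) using 5
  rw [smul_smul, div_mul_cancel₀ _ hcε.ne']

lemma exists_forall_norm_ge_norm_le {E F : Type*} [NormedAddCommGroup E] [ProperSpace E]
    [NormedAddCommGroup F] {h : E → F} (hh : Tendsto h (cocompact E) (𝓝 0)) {δ : ℝ} (hδ : 0 < δ) :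
    ∃ R : ℝ, ∀ x, R ≤ ‖x‖ → ‖h x‖ ≤ δ := by
  rw [← Metric.cobounded_eq_cocompact] at hh
  obtain ⟨R, -, hR⟩ := (hasBasis_cobounded_norm.tendsto_iff nhds_basis_closedBall).1 hh δ hδ
  exact ⟨R, fun x hx => mem_closedBall_zero_iff.1 (hR x hx)⟩

/- `G ε y` is the product of `g ((1 - ε) • y)`, which is small for `ε * ‖y‖` small since `g y = 0`
and `g` is Lipschitz, and of a multiplier at scale `1 / ε`, which is small for `ε * ‖y‖` large. -/
lemma MemBernstein.exists_approximants (hΩ : IsCompact Ω) (hΩconvex : Convex ℝ Ω)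
    (hΩint : (interior Ω).Nonempty) (hg : MemBernstein Ω g) (hg1 : ∀ x, ‖g x‖ ≤ 1) {δ : ℝ}
    (hδ : 0 < δ) :
    ∃ (G : ℝ → V → ℂ) (r R : ℝ), 0 < r ∧ r < R ∧ ∀ ε ∈ Set.Ioo (0 : ℝ) 1,
      MemBernstein Ω (G ε) ∧ Tendsto (G ε) (cocompact V) (𝓝 0) ∧ G ε 0 = g 0 ∧
      (∀ y, ‖G ε y‖ ≤ 1) ∧ ∀ y, g y = 0 → ε * ‖y‖ ≤ r ∨ R ≤ ε * ‖y‖ → ‖G ε y‖ ≤ δ := by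
  obtain ⟨ω₀, hω₀⟩ := hΩint
  obtain ⟨c, hc, hball⟩ := nhds_basis_closedBall.mem_iff.1 (mem_interior_iff_mem_nhds.1 hω₀)
  obtain ⟨η, hη, hsupp, hη0, hη1⟩ := exists_integrable_fourier_zero_eq_one (V := V)
  have hηlim : Tendsto (𝓕 η) (cocompact V) (𝓝 0) :=
    (tendsto_integral_exp_inner_smul_cocompact η).congr fun x => (Real.fourier_eq η x).symm
  obtain ⟨K, hK⟩ := MemBernstein.exists_lipschitzWith hΩ
  obtain ⟨R, hR⟩ := exists_forall_norm_ge_norm_le hηlim hδ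
  set r := δ / (K + 1)
  set G : ℝ → V → ℂ := fun ε y =>
    (Real.fourierChar ⟪ε • ω₀, y⟫ : ℂ) * (g ((1 - ε) • y) * 𝓕 η ((c * ε) • y))
  have hG (ε y) : ‖G ε y‖ = ‖g ((1 - ε) • y)‖ * ‖𝓕 η ((c * ε) • y)‖ := by
    rw [norm_mul, norm_mul, Circle.norm_coe, one_mul]
  have hGη (ε y) : ‖G ε y‖ ≤ ‖𝓕 η ((c * ε) • y)‖ :=
    (hG ε y).trans_le (mul_le_of_le_one_left (norm_nonneg _) (hg1 _))
  refine ⟨G, r, max (R / c) (r + 1), by positivity, lt_max_of_lt_right (lt_add_one r),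
    fun ε hε => ⟨hg.fourierChar_mul_comp_smul_mul_fourier hΩconvex hc hball hη hsupp hε, ?_,
      by simp [G, hη0], fun y => (hGη ε y).trans (hη1 _), fun y hy => ?_⟩⟩
  · refine squeeze_zero_norm (hGη ε) (tendsto_zero_iff_norm_tendsto_zero.1 (hηlim.comp ?_))
    exact (Homeomorph.smulOfNeZero _ (mul_pos hc hε.1).ne').isClosedEmbedding.tendsto_cocompact
  rintro (hnear | hfar)
  · have hdist := (hK g hg 1 hg1).dist_le_mul ((1 - ε) • y) y
    rw [dist_eq_norm, dist_eq_norm, hy, sub_zero, mul_one,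
      show (1 - ε) • y - y = -(ε • y) by module, norm_neg, norm_smul,
      Real.norm_of_nonneg hε.1.le] at hdist
    calc ‖G ε y‖ ≤ ‖g ((1 - ε) • y)‖ :=
          (hG ε y).trans_le (mul_le_of_le_one_right (norm_nonneg _) (hη1 _))
      _ ≤ K * (ε * ‖y‖) := hdist
      _ ≤ (K + 1) * r := by
        gcongr
        exacts [mul_nonneg hε.1.le (norm_nonneg y), by simp]
      _ = δ := mul_div_cancel₀ _ (by positivity)
  · refine (hGη ε y).trans (hR _ ?_)
    rw [norm_smul, Real.norm_of_nonneg (mul_pos hc hε.1).le, mul_assoc]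
    exact (div_le_iff₀' hc).1 ((le_max_left _ _).trans hfar)

lemma exists_forall_ne_le_or_ge_of_antitone {α : Type*} [LinearOrder α] {s : ℕ → α}
    (hs : Antitone s) {r R : α} (hstep : ∀ i, s i < R → s (i + 1) ≤ r) :
    ∃ j, ∀ i ≠ j, s i ≤ r ∨ R ≤ s i := by
  by_cases hmid : ∃ j, r < s j ∧ s j < R
  · obtain ⟨j, hjr, hjR⟩ := hmid
    refine ⟨j, fun i hij => ?_⟩
    rcases hij.lt_or_gt with hlt | hgt
    · exact .inr (not_lt.1 fun hi => ((hs hlt).trans (hstep i hi)).not_gt hjr)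
    · exact .inl ((hs hgt).trans (hstep j hjR))
  · push Not at hmid
    exact ⟨0, fun i _ => (le_or_gt (s i) r).imp_right (hmid i)⟩

lemma norm_inv_mul_sum_le_add_inv {N : ℕ} (hN : 0 < N) {a : ℕ → ℂ} {δ : ℝ} (hδ : 0 ≤ δ)
    (ha1 : ∀ i, ‖a i‖ ≤ 1) {j : ℕ} (ha : ∀ i ≠ j, ‖a i‖ ≤ δ) :
    ‖(N : ℂ)⁻¹ * ∑ i ∈ Finset.range N, a i‖ ≤ δ + (N : ℝ)⁻¹ := by
  have hle : ∀ i ∈ Finset.range N, ‖a i‖ ≤ δ + if i = j then 1 else 0 := fun i _ => by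
    split_ifs with hij
    · linarith [ha1 i]
    · simpa using ha i hij
  have hsum : ∑ i ∈ Finset.range N, ‖a i‖ ≤ N * δ + 1 := by
    refine (Finset.sum_le_sum hle).trans ?_
    rw [Finset.sum_add_distrib, Finset.sum_const, Finset.card_range, nsmul_eq_mul,
      Finset.sum_ite_eq']
    split_ifs <;> linarith
  rw [norm_mul, norm_inv, Complex.norm_natCast]
  calc (N : ℝ)⁻¹ * ‖∑ i ∈ Finset.range N, a i‖ ≤ (N : ℝ)⁻¹ * (N * δ + 1) := by
        gcongr
        exact (norm_sum_le _ _).trans hsum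
    _ = δ + (N : ℝ)⁻¹ := by field_simp

/- The approximants at `N` widely separated scales are averaged: at each zero of `g`, at most one
of them is not small. -/
lemma MemBernstein.exists_tendsto_zero (hΩ : IsCompact Ω) (hΩconvex : Convex ℝ Ω)
    (hΩint : (interior Ω).Nonempty) (hg : MemBernstein Ω g) (hg1 : ∀ x, ‖g x‖ ≤ 1) {δ : ℝ}
    (hδ : 0 < δ) :
    ∃ f : V → ℂ, MemBernstein Ω f ∧ Tendsto f (cocompact V) (𝓝 0) ∧ f 0 = g 0 ∧
      ∀ y, g y = 0 → ‖f y‖ ≤ δ := by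
  obtain ⟨G, r, R, hr, hrR, hG⟩ := hg.exists_approximants hΩ hΩconvex hΩint hg1 (half_pos hδ)
  obtain ⟨N, hN⟩ := exists_nat_gt (δ / 2)⁻¹
  have hNpos : (0 : ℝ) < N := (inv_pos.2 (half_pos hδ)).trans hN
  have hR : 0 < R := hr.trans hrR
  set ρ := r / R
  have hρ : 0 < ρ := by positivity
  have hρ1 : ρ < 1 := (div_lt_one hR).2 hrR
  set ε : ℕ → ℝ := fun i => ρ ^ (i + 1)
  have hε (i) : ε i ∈ Set.Ioo (0 : ℝ) 1 := ⟨by positivity, pow_lt_one₀ hρ.le hρ1 (by omega)⟩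
  have hεanti : Antitone ε := fun i j hij => pow_le_pow_of_le_one hρ.le hρ1.le (by omega)
  refine ⟨fun y => (N : ℂ)⁻¹ * ∑ i ∈ Finset.range N, G (ε i) y,
    (MemBernstein.sum _ fun i _ => (hG _ (hε i)).1).const_mul _, ?_, ?_, fun y hy => ?_⟩
  · simpa using (tendsto_finsetSum (Finset.range N) fun i _ => (hG _ (hε i)).2.1).const_mul
      (N : ℂ)⁻¹
  · have hsum : ∑ i ∈ Finset.range N, G (ε i) 0 = N * g 0 := by
      simp [(hG _ (hε _)).2.2.1]
    simp only [hsum]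
    exact inv_mul_cancel_left₀ (by exact_mod_cast hNpos.ne') _
  · have hstep : ∀ i, ε i * ‖y‖ < R → ε (i + 1) * ‖y‖ ≤ r := fun i hi => by
      calc ε (i + 1) * ‖y‖ = ρ * (ε i * ‖y‖) := by ring
        _ ≤ ρ * R := by gcongr
        _ = r := div_mul_cancel₀ _ hR.ne'
    obtain ⟨j, hj⟩ := exists_forall_ne_le_or_ge_of_antitone
      (fun i k hik => mul_le_mul_of_nonneg_right (hεanti hik) (norm_nonneg y)) hstep
    have havg := norm_inv_mul_sum_le_add_inv (Nat.cast_pos.1 hNpos) (half_pos hδ).le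
      (fun i => (hG _ (hε i)).2.2.2.1 y) fun i hi => (hG _ (hε i)).2.2.2.2 y hy (hj i hi)
    linarith [inv_lt_of_inv_lt₀ (half_pos hδ) hN]

end Decay

section Translation

lemma exists_gauge_eq_tendsto {E : Type*} [NormedAddCommGroup E] [InnerProductSpace ℝ E]
    {D : Set E} (hDconvex : Convex ℝ D) (hD0 : 0 ∈ interior D) {w e : E} (hw : gauge D w = 1)
    (he : e ≠ 0) (hwe : ⟪w, e⟫ = 0) {ι : Type*} {l : Filter ι} {t : ι → ℝ}
    (ht : Tendsto t l atTop) :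
    ∃ x : ι → E, (∀ᶠ n in l, gauge D (x n) = t n) ∧ Tendsto (fun n => (t n)⁻¹ • x n) l (𝓝 w) ∧
      Tendsto (fun n => ⟪x n, e⟫) l atTop := by
  have hcont : Continuous (gauge D) := continuous_gauge hDconvex (mem_interior_iff_mem_nhds.1 hD0)
  have hsqrt : Tendsto (fun n => √(t n)) l atTop := Real.tendsto_sqrt_atTop.comp ht
  set z : ι → E := fun n => w + (√(t n))⁻¹ • e with hz
  have hzlim : Tendsto z l (𝓝 w) := by
    simpa using! tendsto_const_nhds.add ((tendsto_inv_atTop_zero.comp hsqrt).smul_const e)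
  have hgz : Tendsto (fun n => gauge D (z n)) l (𝓝 1) := hw ▸ (hcont.tendsto w).comp hzlim
  have hginv : Tendsto (fun n => (gauge D (z n))⁻¹) l (𝓝 1) := by
    simpa using hgz.inv₀ one_ne_zero
  have hpos : ∀ᶠ n in l, 0 < t n ∧ 0 < gauge D (z n) :=
    (ht.eventually_gt_atTop 0).and (hgz.eventually_const_lt one_pos)
  refine ⟨fun n => (t n / gauge D (z n)) • z n, ?_, ?_, ?_⟩
  · filter_upwards [hpos] with n hn
    rw [gauge_smul_of_nonneg (div_pos hn.1 hn.2).le, smul_eq_mul, div_mul_cancel₀ _ hn.2.ne']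
  · have hlim := hginv.smul hzlim
    rw [one_smul] at hlim
    refine hlim.congr' ?_
    filter_upwards [hpos] with n hn
    rw [smul_smul, div_eq_mul_inv, inv_mul_cancel_left₀ hn.1.ne']
  · have : 0 < ‖e‖ := norm_pos_iff.2 he
    refine (hsqrt.atTop_mul_pos (C := 1 * ‖e‖ ^ 2) (by positivity) (hginv.mul_const _)).congr' ?_
    filter_upwards [hpos] with n hn
    rw [real_inner_smul_left, hz, inner_add_left, real_inner_smul_left, hwe, zero_add,
      real_inner_self_eq_norm_sq]
    nth_rewrite 2 [← Real.mul_self_sqrt hn.1.le]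
    have := Real.sqrt_pos.2 hn.1
    field_simp

section Plane

variable {E : Type*} [NormedAddCommGroup E] [InnerProductSpace ℝ E]
  [Fact (Module.finrank ℝ E = 2)] {Q : Set ℝ} {t : ℕ → ℝ} {w e v : E} {p : E → ℝ} {x : ℕ → E}

lemma IsSideGradient.inner_mem_limitLevels (hp : IsSideGradient p w e v) (hw : w ≠ 0) (he : e ≠ 0)
    (hwe : ⟪w, e⟫ = 0) {l : Filter ℕ} (ht : Tendsto t l atTop) (hpx : ∀ᶠ n in l, p (x n) = t n)
    (hxw : Tendsto (fun n => (t n)⁻¹ • x n) l (𝓝 w)) (hxe : Tendsto (fun n => ⟪x n, e⟫) l atTop)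
    {y : ℕ → E} {y₀ : E} (hy : Tendsto y l (𝓝 y₀)) (hyQ : ∀ᶠ n in l, p (x n + y n) ∈ Q) :
    ⟪v, y₀⟫ ∈ limitLevels l Q t := by
  have hxye : Tendsto (fun n => ⟪x n + y n, e⟫) l atTop := by
    simp only [inner_add_left]
    exact hxe.atTop_add (hy.inner tendsto_const_nhds)
  have hxyw : Tendsto (fun n => (t n)⁻¹ • (x n + y n)) l (𝓝 w) := by
    simpa [smul_add] using! hxw.add ((tendsto_inv_atTop_zero.comp ht).smul hy)
  refine ⟨fun n => p (x n + y n), hyQ, (hp.tendsto_sub (x := x) hy fun τ hτ => ?_).congr' ?_⟩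
  · exact (eventually_mem_sideCone hw he hwe ht hxw (hxe.eventually_ge_atTop 0) hτ).and
      (eventually_mem_sideCone hw he hwe ht hxyw (hxye.eventually_ge_atTop 0) hτ)
  · filter_upwards [hpx] with n hn
    rw [hn]

lemma IsSideGradient.exists_forall_norm_le (hp : IsSideGradient p w e v) (hw : w ≠ 0) (he : e ≠ 0)
    (hwe : ⟪w, e⟫ = 0) (ht : Tendsto t atTop atTop) (hpx : ∀ᶠ n in atTop, p (x n) = t n)
    (hxw : Tendsto (fun n => (t n)⁻¹ • x n) atTop (𝓝 w))
    (hxe : Tendsto (fun n => ⟪x n, e⟫) atTop atTop) {F : Type*} [NormedAddCommGroup F]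
    {f : E → F} (hf : Continuous f) (hflim : Tendsto f (cocompact E) (𝓝 0)) {a b : ℝ}
    (hb : 0 < b) (hab : a < b) (hfa : ∀ (l : Filter ℕ) [l.NeBot], l ≤ atTop →
      ∀ y, ⟪v, y⟫ ∈ limitLevels l Q t → ‖f y‖ ≤ a) :
    ∃ n, ∀ y, p (x n + y) ∈ Q → ‖f y‖ ≤ b := by
  have : FiniteDimensional ℝ E := .of_fact_finrank_eq_succ 1
  have := FiniteDimensional.proper_real E
  by_contra! hcon
  choose y hyQ hyb using hcon
  obtain ⟨R, hR⟩ := exists_forall_norm_ge_norm_le hflim hb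
  have hyR (n) : y n ∈ closedBall 0 R :=
    mem_closedBall_zero_iff.2 (le_of_not_ge fun h => (hR _ h).not_gt (hyb n))
  obtain ⟨y₀, -, hy₀⟩ := exists_tendsto_of_eventually_mem (isCompact_closedBall (0 : E) R)
    (𝒰 := hyperfilter ℕ) (.of_forall hyR)
  have hle : ((hyperfilter ℕ : Ultrafilter ℕ) : Filter ℕ) ≤ atTop := Nat.hyperfilter_le_atTop
  have hlevel := hp.inner_mem_limitLevels hw he hwe (ht.mono_left hle) (hle hpx)
    (hxw.mono_left hle) (hxe.mono_left hle) hy₀ (.of_forall hyQ)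
  have hby₀ : b ≤ ‖f y₀‖ :=
    ge_of_tendsto ((hf.norm.tendsto y₀).comp hy₀) (.of_forall fun n => (hyb n).le)
  exact (hfa _ hle y₀ hlevel).not_gt (hab.trans_le hby₀)

end Plane

lemma not_isSamplingSet_of_mem_sub [Fact (Module.finrank ℝ V = 2)] {Ω D : Set V} {Q : Set ℝ}
    {v : V} (hΩ : IsCompact Ω) (hΩconvex : Convex ℝ Ω) (hΩint : (interior Ω).Nonempty)
    (hDclosed : IsClosed D) (hDconvex : Convex ℝ D) (hDbdd : Bornology.IsBounded D)
    (hD0 : 0 ∈ interior D) (hQpos : Q ⊆ Set.Ioi 0) (hQ : UniformlyDiscrete Q)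
    (hv : v ∈ Set.extremePoints ℝ (polarSet D))
    (hvΩ : lowerUniformDensity (Q ∪ -Q) • v ∈ Ω - Ω) :
    ¬ IsSamplingSet Ω {x | gauge D x ∈ Q} := by
  rintro ⟨C, hC, hsamp⟩
  obtain ⟨w, e, hw, he, hwe, -, hgrad⟩ :=
    exists_isSideGradient_of_mem_extremePoints hDclosed hDconvex hDbdd hD0 hv
  have hw0 : w ≠ 0 := by
    rintro rfl
    simp at hw
  obtain ⟨g, t, hg, ht, hg1, hg0, hgz⟩ :=
    exists_memBernstein_eq_zero_on_limitLevels hΩ hΩconvex hQpos hQ hvΩ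
  obtain ⟨f, hf, hflim, hf0, hfz⟩ := hg.exists_tendsto_zero hΩ hΩconvex hΩint hg1
    (δ := 1 / (3 * C)) (by positivity)
  obtain ⟨x, hxt, hxw, hxe⟩ := exists_gauge_eq_tendsto hDconvex hD0 hw he hwe ht
  obtain ⟨n, hn⟩ := hgrad.exists_forall_norm_le (Q := Q) hw0 he hwe ht hxt hxw hxe hf.1 hflim
    (a := 1 / (3 * C)) (b := 1 / (2 * C)) (by positivity) (by gcongr; norm_num)
    fun l _ hl y hy => hfz y (hgz l hl y hy)
  have hsup : sSup ((fun z => ‖f (z + -x n)‖) '' {z | gauge D z ∈ Q}) ≤ 1 / (2 * C) := by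
    refine Real.sSup_le ?_ (by positivity)
    rintro _ ⟨z, hz, rfl⟩
    exact hn _ (by simpa using hz)
  have hone : 1 ≤ C * (1 / (2 * C)) := by
    calc (1 : ℝ) = ‖f (x n + -x n)‖ := by rw [add_neg_cancel, hf0, hg0]
      _ ≤ _ := hsamp _ (hf.comp_add_right (-x n)) (x n)
      _ ≤ C * (1 / (2 * C)) := by gcongr
  field_simp at hone
  norm_num at hone

end Translation

end Necessity

lemma nonempty_interior_of_convex_of_measure_pos {E : Type*} [NormedAddCommGroup E]
    [NormedSpace ℝ E] [FiniteDimensional ℝ E] [MeasurableSpace E] [BorelSpace E] (μ : Measure E)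
    [μ.IsAddHaarMeasure] {Ω : Set E} (hΩconvex : Convex ℝ Ω) (hΩpos : 0 < μ Ω) :
    (interior Ω).Nonempty := by
  by_contra hempty
  have hfrontier := hΩconvex.addHaar_frontier μ
  rw [frontier, Set.not_nonempty_iff_eq_empty.1 hempty, Set.sdiff_empty] at hfrontier
  exact hΩpos.ne' (measure_mono_null subset_closure hfrontier)

/-- Theorem 3 (dilations of a convex curve): `P = Q·∂D` is a sampling set for `B_Ω`
iff `d⁻(Q)·v ∉ Ω − Ω` for every extreme point `v` of the polar set `D°`. -/
theorem dilated_convex_curve_sampling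
    (Ω : Set (EuclideanSpace ℝ (Fin 2))) (hΩcompact : IsCompact Ω) (hΩconvex : Convex ℝ Ω)
    (hΩpos : 0 < volume Ω)
    (D : Set (EuclideanSpace ℝ (Fin 2))) (hDclosed : IsClosed D) (hDconvex : Convex ℝ D)
    (hDpos : 0 < volume D) (hDfin : volume D < ⊤) (hD0 : 0 ∈ interior D)
    (Q : Set ℝ) (hQpos : Q ⊆ Set.Ioi 0) (hQud : UniformlyDiscrete Q)
    (P : Set (EuclideanSpace ℝ (Fin 2))) (hP : P = {x | ∃ q ∈ Q, ∃ w ∈ frontier D, x = q • w}) :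
    IsSamplingSet Ω P ↔
      ∀ v ∈ Set.extremePoints ℝ {x : EuclideanSpace ℝ (Fin 2) | ∀ y ∈ D, ⟪x, y⟫ ≤ 1},
        lowerUniformDensity (Q ∪ -Q) • v ∉ Ω - Ω := by
  have : Fact (Module.finrank ℝ (EuclideanSpace ℝ (Fin 2)) = 2) := ⟨finrank_euclideanSpace_fin⟩
  have hP' : P = {x | gauge D x ∈ Q} :=
    hP.trans (Set.ext fun _ => exists_eq_smul_mem_frontier_iff hDconvex hD0 hQpos)
  have hDbdd := isBounded_of_convex_of_measure_lt_top volume hDconvex hDfin hD0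
  have hΩint := nonempty_interior_of_convex_of_measure_pos volume hΩconvex hΩpos
  rw [hP']
  constructor
  · exact fun hsamp v hv hvΩ => not_isSamplingSet_of_mem_sub hΩcompact hΩconvex hΩint hDclosed
      hDconvex hDbdd hD0 hQpos hQud hv hvΩ hsamp
  · exact isSamplingSet_of_forall_notMem hΩcompact hΩconvex (hΩint.mono interior_subset) hDconvex
      hDbdd hD0 hQpos hQud
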